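/- Let Ω ⊆ ℝ² be a C² domain and let u ∈ C²(cl Ω) be non-constant with M[u] + H₀ = 0 in Ω for some constant H₀ ∈ ℝ, such that u and ⟨∇u, η⟩ are constant on each connected component of ∂Ω, and inf_Ω u > −∞. If ∂Ω is connected and there is a unit vector v ∈ ℝ² such that ⟨η, v⟩ does not change sign on ∂Ω (i.e. ⟨η, v⟩ ≥ 0 everywhere on ∂Ω or ⟨η, v⟩ ≤ 0 everywhere on ∂Ω), then H₀ = 0 and there exist a unit vector e ∈ ℝ², c ∈ ℝ, and α, β ∈ ℝ with α ≠ 0 such that Ω = {x ∈ ℝ² : ⟨x, e⟩ > c} and u(x) = α·⟨x, e⟩ + β for all x ∈ Ω; that is, Ω is a half-plane and the graph of u is a half-plane. -/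

import Mathlib

open MeasureTheory Set Metric Filter
open scoped RealInnerProductSpace Topology ENNReal

noncomputable section

variable {n : ℕ}

/-- The quasilinear operator matrix `A(p)` applied to a vector `v`:
`A(p)v = a(|p|) v + (a'(|p|)/|p|) ⟨p,v⟩ p` (with the second term vanishing at `p = 0`). -/
def Aop (a : ℝ → ℝ) (p v : EuclideanSpace ℝ (Fin n)) : EuclideanSpace ℝ (Fin n) :=
  a ‖p‖ • v + ((deriv a ‖p‖ / ‖p‖) * ⟪p, v⟫) • p

/-- `λ₁(t) = a(t) + t·a'(t) = (t a(t))'`. -/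
def lam1 (a : ℝ → ℝ) (t : ℝ) : ℝ := a t + t * deriv a t

/-- `λ₂(t) = a(t)`. -/
def lam2 (a : ℝ → ℝ) (t : ℝ) : ℝ := a t

/-- `λmax(t) = max{λ₁(t), λ₂(t)}`. -/
def lamMax (a : ℝ → ℝ) (t : ℝ) : ℝ := max (lam1 a t) (lam2 a t)

/-- A Lipschitz test function with compact support contained in `Ω`. -/
def IsTestOn (Ω : Set (EuclideanSpace ℝ (Fin n))) (φ : EuclideanSpace ℝ (Fin n) → ℝ) : Prop :=
  (∃ K, LipschitzWith K φ) ∧ HasCompactSupport φ ∧ tsupport φ ⊆ Ω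

/-- `u` is a weak solution of `div(a(|∇u|)∇u) + f(u) = 0` in `Ω`. -/
def IsWeakSolution (a f : ℝ → ℝ) (Ω : Set (EuclideanSpace ℝ (Fin n)))
    (u : EuclideanSpace ℝ (Fin n) → ℝ) : Prop :=
  ∀ φ : EuclideanSpace ℝ (Fin n) → ℝ, IsTestOn Ω φ →
    ∫ x in Ω, a ‖gradient u x‖ * ⟪gradient u x, gradient φ x⟫
      = ∫ x in Ω, f (u x) * φ x

/-- The stability inequality for a solution `u`. -/
def IsStable (a f : ℝ → ℝ) (Ω : Set (EuclideanSpace ℝ (Fin n)))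
    (u : EuclideanSpace ℝ (Fin n) → ℝ) : Prop :=
  ∀ φ : EuclideanSpace ℝ (Fin n) → ℝ, IsTestOn Ω φ →
    ∫ x in Ω, deriv f (u x) * φ x ^ 2
      ≤ ∫ x in Ω, ⟪Aop a (gradient u x) (gradient φ x), gradient φ x⟫

/-- `u` has moderate energy growth in `Ω₀`. -/
def ModerateEnergyGrowth (a : ℝ → ℝ) (u : EuclideanSpace ℝ (Fin n) → ℝ)
    (Ω₀ : Set (EuclideanSpace ℝ (Fin n))) : Prop :=
  ∃ φ : ℕ → EuclideanSpace ℝ (Fin n) → ℝ,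
    (∀ j, ∃ K, LipschitzWith K (φ j)) ∧
    (∀ j, HasCompactSupport (φ j)) ∧
    (∀ j x, 0 ≤ φ j x) ∧
    (∀ K : Set (EuclideanSpace ℝ (Fin n)), IsCompact K → K ⊆ closure Ω₀ →
      TendstoUniformlyOn (fun j => φ j) (fun _ => (1 : ℝ)) atTop K) ∧
    Tendsto (fun j => ∫ x in Ω₀, ‖gradient u x‖ ^ 2 *
        ⟪Aop a (gradient u x) (gradient (φ j) x), gradient (φ j) x⟫)
      atTop (nhds 0)

/-- A `C^k` domain: nonempty, open, connected, with boundary locally given by a regular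
`C^k` defining function. -/
def IsCkDomain (k : ℕ∞) (Ω : Set (EuclideanSpace ℝ (Fin n))) : Prop :=
  Ω.Nonempty ∧ IsOpen Ω ∧ IsConnected Ω ∧
    ∀ p ∈ frontier Ω, ∃ V : Set (EuclideanSpace ℝ (Fin n)),
      ∃ g : EuclideanSpace ℝ (Fin n) → ℝ,
        IsOpen V ∧ p ∈ V ∧ ContDiffOn ℝ k g V ∧ (∀ x ∈ V, gradient g x ≠ 0) ∧
        Ω ∩ V = {x ∈ V | g x < 0}

/-- A `C^k` domain together with its interior unit normal field `η`. -/
def IsCkDomainWithNormal (k : ℕ∞) (Ω : Set (EuclideanSpace ℝ (Fin n)))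
    (η : EuclideanSpace ℝ (Fin n) → EuclideanSpace ℝ (Fin n)) : Prop :=
  Ω.Nonempty ∧ IsOpen Ω ∧ IsConnected Ω ∧
    ∀ p ∈ frontier Ω, ∃ V : Set (EuclideanSpace ℝ (Fin n)),
      ∃ g : EuclideanSpace ℝ (Fin n) → ℝ,
        IsOpen V ∧ p ∈ V ∧ ContDiffOn ℝ k g V ∧ (∀ x ∈ V, gradient g x ≠ 0) ∧
        Ω ∩ V = {x ∈ V | g x < 0} ∧
        η p = -(‖gradient g p‖⁻¹ • gradient g p)

/-- `a ∈ C^{1,1}_loc([0,∞))`: `C¹` on `[0,∞)` with locally Lipschitz derivative. -/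
def C11Loc (a : ℝ → ℝ) : Prop :=
  ContDiffOn ℝ 1 a (Ici 0) ∧
    ∀ t ∈ Ici (0 : ℝ), ∃ V ∈ 𝓝[Ici (0 : ℝ)] t, ∃ K, LipschitzOnWith K (deriv a) V

/-- The mean curvature operator `M[u] = div(∇u/√(1+|∇u|²))`, written as the trace of the
derivative of the vector field `x ↦ (1+|∇u|²)^{-1/2} ∇u`. -/
def meanCurv (u : EuclideanSpace ℝ (Fin n) → ℝ) (x : EuclideanSpace ℝ (Fin n)) : ℝ :=
  ∑ i : Fin n,
    ⟪(fderiv ℝ (fun y => (Real.sqrt (1 + ‖gradient u y‖ ^ 2))⁻¹ • gradient u y) x)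
        (EuclideanSpace.single i (1 : ℝ)),
      EuclideanSpace.single i (1 : ℝ)⟫

/-!
Choose Cartesian coordinates in which `v` is vertical. The sign of `⟨η, v⟩` makes `Ω` invariant
under upward translations, and since `∇u = κ η` on `∂Ω` the vertical derivative `q = ∂₂u` has a
sign there, say `q ≥ 0`. In `Ω` it solves the linearised equation `∫ D²W(∇u)(∇q, ∇ψ) = 0`,
`W = √(1 + |·|²)`.

If `H ≠ 0`, the divergence theorem on squares bounds the inradius of `Ω` by `2 / |H|`, so `Ω` lies
in a vertical strip. In any case the graph of `u` has quadratic area growth, so logarithmic cutoffs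
make the right-hand side of every Caccioppoli inequality arbitrarily small. Testing the linearised
equation with the negative part of `q` gives `q ≥ 0` in `Ω`. The P-function
`P = H u - 1 / √(1 + |∇u|²)` is constant on `∂Ω`; testing a truncation of it against the gradient of
the angle `arctan (p / q)` of `∇u = (p, q)` shows that `P` and the direction of `∇u` are constant.

If `H ≠ 0`, then `q / √(1 + |∇u|²)` would be affine with nonzero slope along upward rays unless
`q = 0`, and `q = 0` would put `∂Ω` in one vertical line, against the strip. So `H = 0`, `∇u` is
constant, and as `u` is constant on `∂Ω` the boundary lies in a line: `Ω` is a half-plane.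
-/

/-! ### Integration by parts for compactly supported functions -/

section Topology

variable {X : Type*} [TopologicalSpace X] {D K : Set X} {f : X → ℝ}

lemma eventually_indicator_eq_zero [T2Space X] (hK : IsCompact K) (h0 : ∀ x ∈ D, x ∉ K → f x = 0)
    {x : X} (hx : x ∉ K) : D.indicator f =ᶠ[𝓝 x] fun _ => 0 := by
  filter_upwards [hK.isClosed.isOpen_compl.mem_nhds hx] with y hy
  exact indicator_apply_eq_zero.2 fun hyD => h0 y hyD hy

lemma eventually_indicator_eq_self (hD : IsOpen D) {x : X} (hx : x ∈ D) :
    D.indicator f =ᶠ[𝓝 x] f :=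
  eventually_of_mem (hD.mem_nhds hx) fun _ hy => indicator_of_mem hy f

lemma eventuallyEq_zero_of_off_compact [T2Space X] (hD : IsOpen D) (hK : IsCompact K)
    (h0 : ∀ x ∈ D, x ∉ K → f x = 0) : ∀ x ∈ D, x ∉ K → f =ᶠ[𝓝 x] fun _ => 0 := by
  intro x hx hxK
  filter_upwards [hD.mem_nhds hx, hK.isClosed.isOpen_compl.mem_nhds hxK] with y hy hyK
  exact h0 y hy hyK

lemma integrableOn_of_eq_zero_off_compact [T2Space X] [MeasurableSpace X]
    [OpensMeasurableSpace X] {μ : Measure X} [IsFiniteMeasureOnCompacts μ] (hD : IsOpen D)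
    (hK : IsCompact K) (hKD : K ⊆ D) (hf : ContinuousOn f D) (h0 : ∀ x ∈ D, x ∉ K → f x = 0) :
    IntegrableOn f D μ := by
  have hoff : IntegrableOn f (D \ K) μ :=
    integrableOn_zero.congr_fun (fun x hx => (h0 x hx.1 hx.2).symm)
      (hD.measurableSet.diff hK.measurableSet)
  exact (((hf.mono hKD).integrableOn_compact hK).union hoff).mono_set
    (union_sdiff_cancel hKD).superset

end Topology

section CompactSupport

variable {E : Type*} [NormedAddCommGroup E] [NormedSpace ℝ E] {D K : Set E} {f g ψ : E → ℝ}

/-- `f` is an admissible test function on the open set `D`: it is `C¹` there and vanishes off a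
compact subset of `D`. Its values outside `D` are irrelevant. -/
def IsC1TestOn (D : Set E) (f : E → ℝ) : Prop :=
  ContDiffOn ℝ 1 f D ∧ ∃ K ⊆ D, IsCompact K ∧ ∀ x ∈ D, x ∉ K → f x = 0

namespace IsC1TestOn

lemma contDiff_indicator (hD : IsOpen D) (hf : IsC1TestOn D f) :
    ContDiff ℝ 1 (D.indicator f) := by
  obtain ⟨hf, K, hKD, hK, h0⟩ := hf
  refine contDiff_iff_contDiffAt.2 fun x => ?_
  by_cases hx : x ∈ D
  · exact (hf.contDiffAt (hD.mem_nhds hx)).congr_of_eventuallyEq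
      (eventually_indicator_eq_self hD hx)
  · exact contDiffAt_const.congr_of_eventuallyEq
      (eventually_indicator_eq_zero hK h0 fun h => hx (hKD h))

lemma hasCompactSupport_indicator (hf : IsC1TestOn D f) : HasCompactSupport (D.indicator f) := by
  obtain ⟨-, K, -, hK, h0⟩ := hf
  exact HasCompactSupport.intro hK fun x hx => indicator_apply_eq_zero.2 fun hxD => h0 x hxD hx

lemma fderiv_indicator (hD : IsOpen D) (hf : IsC1TestOn D f) (x : E) :
    fderiv ℝ (D.indicator f) x = D.indicator (fderiv ℝ f) x := by
  obtain ⟨-, K, hKD, hK, h0⟩ := hf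
  by_cases hx : x ∈ D
  · rw [(eventually_indicator_eq_self hD hx).fderiv_eq, indicator_of_mem hx]
  · rw [(eventually_indicator_eq_zero hK h0 fun h => hx (hKD h)).fderiv_eq,
      indicator_of_notMem hx, fderiv_fun_const, Pi.zero_apply]

end IsC1TestOn

variable [FiniteDimensional ℝ E]

lemma exists_contDiff_cutoff (hD : IsOpen D) (hK : IsCompact K) (hKD : K ⊆ D) :
    ∃ χ : E → ℝ, ContDiff ℝ 1 χ ∧ (∀ x ∈ K, ∀ᶠ y in 𝓝 x, χ y = 1) ∧
      ∃ K' ⊆ D, IsCompact K' ∧ ∀ x ∉ K', χ x = 0 := by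
  obtain ⟨K', hK', hKK', hK'D⟩ := exists_compact_between hK hD hKD
  obtain ⟨χ, hone, hzero, -⟩ := exists_contMDiffMap_one_nhds_of_subset_interior
    (modelWithCornersSelf ℝ E) (n := 1) hK.isClosed hKK'
  exact ⟨χ, χ.contMDiff.contDiff, eventually_nhdsSet_iff_forall.1 hone, K', hK'D, hK', hzero⟩

variable [MeasurableSpace E] [BorelSpace E] {μ : Measure E} [μ.IsAddHaarMeasure]

lemma integral_mul_fderiv_eq_neg_of_hasCompactSupport (hf : ContDiff ℝ 1 f) (hg : ContDiff ℝ 1 g)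
    (hgc : HasCompactSupport g) (v : E) :
    ∫ x, f x * fderiv ℝ g x v ∂μ = -∫ x, fderiv ℝ f x v * g x ∂μ := by
  have hf' : Continuous fun x => fderiv ℝ f x v :=
    (hf.continuous_fderiv one_ne_zero).clm_apply continuous_const
  have hg' : Continuous fun x => fderiv ℝ g x v :=
    (hg.continuous_fderiv one_ne_zero).clm_apply continuous_const
  exact integral_mul_fderiv_eq_neg_fderiv_mul_of_integrable
    ((hf'.mul hg.continuous).integrable_of_hasCompactSupport hgc.mul_left)
    ((hf.continuous.mul hg').integrable_of_hasCompactSupport (hgc.fderiv_apply ℝ v).mul_left)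
    ((hf.continuous.mul hg.continuous).integrable_of_hasCompactSupport hgc.mul_left)
    (fun x _ => hf.differentiable one_ne_zero x) fun x _ => hg.differentiable one_ne_zero x

lemma integral_translate_sub_mul_fderiv (hf : ContDiff ℝ 1 f) (hfc : HasCompactSupport f)
    (hg : ContDiff ℝ 1 g) (v a : E) :
    ∫ x, (g (x + a) - g x) * fderiv ℝ f x v ∂μ = -∫ x, (f (x + -a) - f x) * fderiv ℝ g x v ∂μ := by
  have hg' : Continuous fun x => fderiv ℝ g x v :=
    (hg.continuous_fderiv one_ne_zero).clm_apply continuous_const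
  have hga : ContDiff ℝ 1 fun x => g (x + a) := by fun_prop
  have hfderiv (x : E) : fderiv ℝ (fun x => g (x + a) - g x) x v
      = fderiv ℝ g (x + a) v - fderiv ℝ g x v := by
    rw [fderiv_fun_sub (hga.differentiable one_ne_zero x) (hg.differentiable one_ne_zero x),
      fderiv_comp_add_right, sub_apply]
  have hfa : HasCompactSupport fun x => f (x + -a) :=
    hfc.comp_homeomorph (Homeomorph.addRight (-a))
  have htranslate : ∫ x, fderiv ℝ g (x + a) v * f x ∂μ
      = ∫ x, f (x + -a) * fderiv ℝ g x v ∂μ := by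
    rw [← integral_add_right_eq_self (fun x => f (x + -a) * fderiv ℝ g x v) a]
    simp only [add_neg_cancel_right, mul_comm]
  have hInt₁ : Integrable (fun x => fderiv ℝ g (x + a) v * f x) μ :=
    ((hg'.comp (continuous_add_const a)).mul hf.continuous).integrable_of_hasCompactSupport
      hfc.mul_left
  have hInt₂ : Integrable (fun x => f x * fderiv ℝ g x v) μ :=
    (hf.continuous.mul hg').integrable_of_hasCompactSupport hfc.mul_right
  have hInt₃ : Integrable (fun x => f (x + -a) * fderiv ℝ g x v) μ :=
    ((hf.continuous.comp (continuous_add_const (-a))).mul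
      hg').integrable_of_hasCompactSupport hfa.mul_right
  rw [integral_mul_fderiv_eq_neg_of_hasCompactSupport (by fun_prop) hf hfc]
  simp only [hfderiv, sub_mul]
  rw [integral_sub hInt₁ (by simpa only [mul_comm] using hInt₂), integral_sub hInt₃ hInt₂,
    htranslate]
  simp only [mul_comm]

/- For `C²` functions this is two integrations by parts; for `C¹` functions one of the derivatives
is replaced by a difference quotient. -/
lemma integral_fderiv_mul_fderiv_swap (hf : ContDiff ℝ 1 f) (hfc : HasCompactSupport f)
    (hg : ContDiff ℝ 1 g) (hgc : HasCompactSupport g) (v w : E) :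
    ∫ x, fderiv ℝ g x w * fderiv ℝ f x v ∂μ = ∫ x, fderiv ℝ f x w * fderiv ℝ g x v ∂μ := by
  obtain ⟨Cf, hCf⟩ := hf.lipschitzWith_of_hasCompactSupport hfc one_ne_zero
  obtain ⟨Cg, hCg⟩ := hg.lipschitzWith_of_hasCompactSupport hgc one_ne_zero
  have hlimit {h k : E → ℝ} {C : NNReal} (hC : LipschitzWith C h) (hh : ContDiff ℝ 1 h)
      (hk : ContDiff ℝ 1 k) (hkc : HasCompactSupport k) (w : E) :
      Tendsto (fun t : ℝ => t⁻¹ * ∫ x, (h (x + t • w) - h x) * fderiv ℝ k x v ∂μ) (𝓝[>] 0)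
        (𝓝 (∫ x, fderiv ℝ h x w * fderiv ℝ k x v ∂μ)) := by
    have hk' : Integrable (fun x => fderiv ℝ k x v) μ :=
      ((hk.continuous_fderiv one_ne_zero).clm_apply
        continuous_const).integrable_of_hasCompactSupport (hkc.fderiv_apply ℝ v)
    have := hC.integral_inv_smul_sub_mul_tendsto_integral_lineDeriv_mul hk' w
    simpa only [(hh.differentiable one_ne_zero _).lineDeriv_eq_fderiv, smul_eq_mul, mul_assoc,
      integral_const_mul] using this
  have hg_lim := hlimit hCg hg hf hfc w
  have hf_lim := (hlimit hCf hf hg hgc (-w)).neg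
  simp only [integral_translate_sub_mul_fderiv hf hfc hg, mul_neg] at hg_lim
  simp only [smul_neg, map_neg, neg_mul, integral_neg, neg_neg] at hf_lim
  exact tendsto_nhds_unique hg_lim hf_lim

lemma IsC1TestOn.setIntegral_fderiv_eq_zero (hD : IsOpen D) (hf : IsC1TestOn D f) (v : E) :
    ∫ x in D, fderiv ℝ f x v ∂μ = 0 := by
  have h := integral_mul_fderiv_eq_neg_of_hasCompactSupport (μ := μ) (f := fun _ => (1 : ℝ))
    contDiff_const (hf.contDiff_indicator hD) hf.hasCompactSupport_indicator v
  simp only [one_mul, fderiv_fun_const, Pi.zero_apply, zero_apply, zero_mul,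
    integral_zero, neg_zero, hf.fderiv_indicator hD] at h
  rw [← h, ← integral_indicator hD.measurableSet]
  congr with x
  by_cases hx : x ∈ D <;> simp [hx]

lemma IsC1TestOn.setIntegral_jacobian_eq_zero (hD : IsOpen D) (hf : IsC1TestOn D f)
    (hg : IsC1TestOn D g) (v w : E) :
    ∫ x in D, (fderiv ℝ f x v * fderiv ℝ g x w - fderiv ℝ f x w * fderiv ℝ g x v) ∂μ = 0 := by
  have hf₁ := hf.contDiff_indicator hD
  have hg₁ := hg.contDiff_indicator hD
  have hInt (a b : E) : Integrable
      (fun x => fderiv ℝ (D.indicator f) x a * fderiv ℝ (D.indicator g) x b) μ :=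
    (((hf₁.continuous_fderiv one_ne_zero).clm_apply continuous_const).mul
      ((hg₁.continuous_fderiv one_ne_zero).clm_apply
        continuous_const)).integrable_of_hasCompactSupport
      (hg.hasCompactSupport_indicator.fderiv_apply ℝ b).mul_left
  have hswap := integral_fderiv_mul_fderiv_swap (μ := μ) hf₁ hf.hasCompactSupport_indicator hg₁
    hg.hasCompactSupport_indicator v w
  have hglobal : ∫ x, (fderiv ℝ (D.indicator f) x v * fderiv ℝ (D.indicator g) x w
      - fderiv ℝ (D.indicator f) x w * fderiv ℝ (D.indicator g) x v) ∂μ = 0 := by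
    rw [integral_sub (hInt v w) (hInt w v), ← hswap]
    simp only [mul_comm, sub_self]
  rw [← hglobal, ← integral_indicator hD.measurableSet]
  congr with x
  by_cases hx : x ∈ D <;> simp [hx, hf.fderiv_indicator hD, hg.fderiv_indicator hD]

lemma IsC1TestOn.setIntegral_jacobian_eq_zero_of_contDiffOn (hD : IsOpen D)
    (hf : ContDiffOn ℝ 1 f D) (hg : IsC1TestOn D g) (v w : E) :
    ∫ x in D, (fderiv ℝ f x v * fderiv ℝ g x w - fderiv ℝ f x w * fderiv ℝ g x v) ∂μ = 0 := by
  obtain ⟨K, hKD, hK, h0⟩ := hg.2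
  obtain ⟨χ, hχ, hone, K', hK'D, hK', hzero⟩ := exists_contDiff_cutoff hD hK hKD
  have hχf : IsC1TestOn D fun x => χ x * f x :=
    ⟨hχ.contDiffOn.mul hf, K', hK'D, hK', fun x _ hx => mul_eq_zero_of_left (hzero x hx) _⟩
  rw [← hχf.setIntegral_jacobian_eq_zero (μ := μ) hD hg v w]
  refine setIntegral_congr_fun hD.measurableSet fun x hx => ?_
  by_cases hxK : x ∈ K
  · have heq : (fun x => χ x * f x) =ᶠ[𝓝 x] f := by
      filter_upwards [hone x hxK] with y hy
      rw [hy, one_mul]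
    simp only [heq.fderiv_eq]
  · simp [(eventuallyEq_zero_of_off_compact hD hK h0 x hx hxK).fderiv_eq]

end CompactSupport

/-! ### Truncations and logarithmic cutoffs -/

section Thresholds

open Real (smoothTransition)

/-- A `C¹` regularization of `max (y - ε) 0`, vanishing for `y ≤ ε`. -/
def softPos (ε y : ℝ) : ℝ := ∫ t in (0 : ℝ)..y, smoothTransition (t / ε - 1)

/-- A `C¹` odd regularization of the identity, vanishing for `|y| ≤ ε`. -/
def softThreshold (ε y : ℝ) : ℝ := ∫ t in (0 : ℝ)..y, smoothTransition (|t| / ε - 1)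

variable {ε y : ℝ}

lemma continuous_smoothTransition_div (ε : ℝ) :
    Continuous fun t : ℝ => smoothTransition (t / ε - 1) :=
  Real.smoothTransition.continuous.comp (by fun_prop)

lemma hasDerivAt_softPos (ε y : ℝ) : HasDerivAt (softPos ε) (smoothTransition (y / ε - 1)) y :=
  ((continuous_smoothTransition_div ε).integral_hasStrictDerivAt 0 y).hasDerivAt

lemma hasDerivAt_softThreshold (ε y : ℝ) :
    HasDerivAt (softThreshold ε) (smoothTransition (|y| / ε - 1)) y :=
  (((continuous_smoothTransition_div ε).comp continuous_abs).integral_hasStrictDerivAt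
    0 y).hasDerivAt

lemma contDiff_softPos (ε : ℝ) : ContDiff ℝ 1 (softPos ε) :=
  contDiff_one_iff_deriv.2 ⟨fun y => (hasDerivAt_softPos ε y).differentiableAt,
    (funext fun y => (hasDerivAt_softPos ε y).deriv) ▸ continuous_smoothTransition_div ε⟩

lemma contDiff_softThreshold (ε : ℝ) : ContDiff ℝ 1 (softThreshold ε) :=
  contDiff_one_iff_deriv.2 ⟨fun y => (hasDerivAt_softThreshold ε y).differentiableAt,
    (funext fun y => (hasDerivAt_softThreshold ε y).deriv) ▸
      (continuous_smoothTransition_div ε).comp continuous_abs⟩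

lemma smoothTransition_div_eq_zero (hε : 0 < ε) (hy : y ≤ ε) :
    smoothTransition (y / ε - 1) = 0 :=
  Real.smoothTransition.zero_of_nonpos (sub_nonpos.2 ((div_le_one hε).2 hy))

lemma tendsto_smoothTransition_div (hy : 0 < y) :
    Tendsto (fun ε => smoothTransition (y / ε - 1)) (𝓝[>] 0) (𝓝 1) := by
  refine tendsto_const_nhds.congr' ?_
  filter_upwards [Ioc_mem_nhdsGT (half_pos hy)] with ε ⟨hε, hεy⟩
  refine (Real.smoothTransition.one_of_one_le ?_).symm
  rw [le_sub_iff_add_le, le_div_iff₀ hε]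
  linarith

lemma softPos_eq_zero (hε : 0 < ε) (hy : y ≤ ε) : softPos ε y = 0 := by
  refine intervalIntegral.integral_zero_ae (Eventually.of_forall fun t ht => ?_)
  exact smoothTransition_div_eq_zero hε (ht.2.trans (max_le hε.le hy))

lemma softThreshold_eq_zero (hε : 0 < ε) (hy : |y| ≤ ε) : softThreshold ε y = 0 := by
  refine intervalIntegral.integral_zero_ae (Eventually.of_forall fun t ht => ?_)
  refine smoothTransition_div_eq_zero hε (le_trans ?_ hy)
  simpa using abs_sub_left_of_mem_uIcc (uIoc_subset_uIcc ht)

lemma abs_softThreshold_le (ε y : ℝ) : |softThreshold ε y| ≤ |y| := by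
  have h := intervalIntegral.norm_integral_le_of_norm_le_const (a := 0) (b := y) (C := 1)
    (f := fun t => smoothTransition (|t| / ε - 1)) fun t _ => by
      rw [Real.norm_of_nonneg (Real.smoothTransition.nonneg _)]
      exact Real.smoothTransition.le_one _
  rwa [one_mul, sub_zero, Real.norm_eq_abs] at h

lemma softPos_sq_le (hε : 0 < ε) (y : ℝ) :
    softPos ε y ^ 2 ≤ y ^ 2 * smoothTransition (y / ε - 1) := by
  have hσ := Real.smoothTransition.nonneg (y / ε - 1)
  rcases le_or_gt y 0 with hy | hy
  · rw [softPos_eq_zero hε (hy.trans hε.le), zero_pow two_ne_zero]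
    exact mul_nonneg (sq_nonneg y) hσ
  have h := intervalIntegral.norm_integral_le_of_norm_le_const (a := 0) (b := y)
    (f := fun t => smoothTransition (t / ε - 1)) (C := smoothTransition (y / ε - 1))
    fun t ht => by
      rw [Real.norm_of_nonneg (Real.smoothTransition.nonneg _)]
      rw [uIoc_of_le hy.le] at ht
      exact Real.smoothTransition.monotone (by gcongr; exact ht.2)
  rw [sub_zero, abs_of_pos hy, Real.norm_eq_abs] at h
  calc softPos ε y ^ 2 ≤ (smoothTransition (y / ε - 1) * y) ^ 2 := by
        rw [← sq_abs]
        exact pow_le_pow_left₀ (abs_nonneg _) h 2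
    _ = y ^ 2 * smoothTransition (y / ε - 1) * smoothTransition (y / ε - 1) := by ring
    _ ≤ y ^ 2 * smoothTransition (y / ε - 1) :=
        mul_le_of_le_one_right (by positivity) (Real.smoothTransition.le_one _)

end Thresholds

section LogarithmicCutoff

open Real (smoothTransition)

/-- `Φ` is the profile of a `C¹` cutoff: it vanishes on a neighbourhood of `+∞`. -/
def IsCutoff (Φ : ℝ → ℝ) : Prop := ContDiff ℝ 1 Φ ∧ ∃ R, ∀ y, R ≤ y → Φ y = 0

/-- A smooth step from `1` to `0` on the scale `[4 ^ i, 2 * 4 ^ i]`. -/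
def dyadicStep (i : ℕ) (y : ℝ) : ℝ := smoothTransition (2 - y / 4 ^ i)

variable {y : ℝ} {i : ℕ}

lemma IsCutoff.exists_deriv_eq_zero {Φ : ℝ → ℝ} (hΦ : IsCutoff Φ) :
    ∃ R, ∀ y, R < y → deriv Φ y = 0 := by
  obtain ⟨-, R, hR⟩ := hΦ
  refine ⟨R, fun y hy => ?_⟩
  have h : Φ =ᶠ[𝓝 y] fun _ => 0 :=
    eventually_of_mem (Ioi_mem_nhds hy) fun z hz => hR z (le_of_lt hz)
  rw [h.deriv_eq, deriv_const]

lemma deriv_smoothTransition_eq_zero (hy : y ∉ Icc (0 : ℝ) 1) : deriv smoothTransition y = 0 := by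
  rw [mem_Icc, not_and_or, not_le, not_le] at hy
  rcases hy with hy | hy
  · have h : smoothTransition =ᶠ[𝓝 y] fun _ => 0 := eventually_of_mem (Iio_mem_nhds hy)
      fun z hz => Real.smoothTransition.zero_of_nonpos (le_of_lt hz)
    rw [h.deriv_eq, deriv_const]
  · have h : smoothTransition =ᶠ[𝓝 y] fun _ => 1 := eventually_of_mem (Ioi_mem_nhds hy)
      fun z hz => Real.smoothTransition.one_of_one_le (le_of_lt hz)
    rw [h.deriv_eq, deriv_const]

lemma exists_abs_deriv_smoothTransition_le : ∃ M, ∀ y, |deriv smoothTransition y| ≤ M :=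
  (Real.smoothTransition.contDiff.continuous_deriv le_rfl).bounded_above_of_compact_support
    (HasCompactSupport.intro isCompact_Icc fun _ => deriv_smoothTransition_eq_zero)

lemma contDiff_dyadicStep (i : ℕ) : ContDiff ℝ 1 (dyadicStep i) :=
  Real.smoothTransition.contDiff.comp (by fun_prop)

lemma deriv_dyadicStep (i : ℕ) (y : ℝ) :
    deriv (dyadicStep i) y = deriv smoothTransition (2 - y / 4 ^ i) * -(1 / 4 ^ i) :=
  ((Real.smoothTransition.contDiff.differentiable one_ne_zero _).hasDerivAt.comp y
    (((hasDerivAt_id y).div_const _).const_sub 2)).deriv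

lemma dyadicStep_eq_one (hy : y ≤ 4 ^ i) : dyadicStep i y = 1 := by
  refine Real.smoothTransition.one_of_one_le ?_
  have : y / 4 ^ i ≤ 1 := (div_le_one (by positivity)).2 hy
  linarith

lemma dyadicStep_eq_zero (hy : 2 * 4 ^ i ≤ y) : dyadicStep i y = 0 :=
  Real.smoothTransition.zero_of_nonpos (sub_nonpos.2 ((le_div_iff₀ (by positivity)).2 hy))

lemma mem_Icc_of_deriv_dyadicStep_ne_zero (h : deriv (dyadicStep i) y ≠ 0) :
    y ∈ Icc (4 ^ i) (2 * 4 ^ i) := by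
  rw [deriv_dyadicStep] at h
  obtain ⟨h₁, h₂⟩ := not_not.1 (mt deriv_smoothTransition_eq_zero (left_ne_zero_of_mul h))
  have h4 : (0 : ℝ) < 4 ^ i := by positivity
  exact ⟨(one_le_div h4).1 (by linarith), (div_le_iff₀ h4).1 (by linarith)⟩

lemma eq_of_deriv_dyadicStep_ne_zero {j : ℕ} (hi : deriv (dyadicStep i) y ≠ 0)
    (hj : deriv (dyadicStep j) y ≠ 0) : i = j := by
  wlog hij : i < j generalizing i j
  · exact (lt_trichotomy i j).elim (absurd · hij) fun h => h.elim id fun h => (this hj hi h).symm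
  have hpow : (4 : ℝ) ^ (i + 1) ≤ 4 ^ j := pow_le_pow_right₀ (by norm_num) hij
  have hle := (mem_Icc_of_deriv_dyadicStep_ne_zero hj).1.trans
    (mem_Icc_of_deriv_dyadicStep_ne_zero hi).2
  have h4 : (0 : ℝ) < 4 ^ i := by positivity
  rw [pow_succ] at hpow
  linarith

lemma sq_deriv_dyadicStep_mul_le {M : ℝ} (hM : ∀ y, |deriv smoothTransition y| ≤ M) (i : ℕ)
    (y : ℝ) :
    deriv (dyadicStep i) y ^ 2 * y
      ≤ (Iic (2 * 4 ^ i)).indicator (fun _ => 2 * M ^ 2 / 4 ^ i) y := by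
  by_cases h : deriv (dyadicStep i) y = 0
  · rw [h, zero_pow two_ne_zero, zero_mul]
    exact indicator_nonneg (fun _ _ => by positivity) y
  obtain ⟨hy₀, hy⟩ := mem_Icc_of_deriv_dyadicStep_ne_zero h
  have hy_nonneg : 0 ≤ y := le_trans (by positivity) hy₀
  rw [indicator_of_mem (mem_Iic.2 hy)]
  have hderiv : |deriv (dyadicStep i) y| ≤ M * (1 / 4 ^ i) := by
    rw [deriv_dyadicStep, abs_mul, abs_neg, abs_of_pos (by positivity : (0 : ℝ) < 1 / 4 ^ i)]
    exact mul_le_mul_of_nonneg_right (hM _) (by positivity)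
  calc deriv (dyadicStep i) y ^ 2 * y ≤ (M * (1 / 4 ^ i)) ^ 2 * (2 * 4 ^ i) := by
        rw [← sq_abs]
        gcongr
    _ = 2 * M ^ 2 / 4 ^ i := by field_simp

/- At most one summand is nonzero, so the square of the sum costs no more than the sum of the
squares: this is the gain of the logarithmic cutoff. -/
lemma sq_sum_deriv_dyadicStep_mul_le {M : ℝ} (hM : ∀ y, |deriv smoothTransition y| ≤ M)
    (s : Finset ℕ) (y : ℝ) :
    (∑ i ∈ s, deriv (dyadicStep i) y) ^ 2 * y
      ≤ ∑ i ∈ s, (Iic (2 * 4 ^ i)).indicator (fun _ => 2 * M ^ 2 / 4 ^ i) y := by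
  have hnonneg : ∀ i ∈ s, 0 ≤ (Iic (2 * 4 ^ i)).indicator (fun _ => 2 * M ^ 2 / 4 ^ i) y :=
    fun i _ => indicator_nonneg (fun _ _ => by positivity) y
  by_cases h : ∃ i ∈ s, deriv (dyadicStep i) y ≠ 0
  · obtain ⟨i, hi, hne⟩ := h
    rw [Finset.sum_eq_single_of_mem i hi fun j _ hj => not_not.1 fun hj' =>
      hj (eq_of_deriv_dyadicStep_ne_zero hj' hne)]
    exact (sq_deriv_dyadicStep_mul_le hM i y).trans (Finset.single_le_sum hnonneg hi)
  · push Not at h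
    rw [Finset.sum_eq_zero h, zero_pow two_ne_zero, zero_mul]
    exact Finset.sum_nonneg hnonneg

/-- The average of the steps on `k` consecutive dyadic scales, starting at `4 ^ m`. -/
def logCutoff (m k : ℕ) (y : ℝ) : ℝ := (∑ i ∈ Finset.Ico m (m + k), dyadicStep i y) / k

lemma isCutoff_logCutoff (m k : ℕ) : IsCutoff (logCutoff m k) := by
  refine ⟨(ContDiff.sum fun i _ => contDiff_dyadicStep i).div_const _, 2 * 4 ^ (m + k),
    fun y hy => ?_⟩
  rw [logCutoff, Finset.sum_eq_zero, zero_div]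
  intro i hi
  refine dyadicStep_eq_zero (le_trans ?_ hy)
  gcongr
  · norm_num
  · exact (Finset.mem_Ico.1 hi).2.le

lemma logCutoff_eq_one {m k : ℕ} (hk : k ≠ 0) (hy : y ≤ 4 ^ m) : logCutoff m k y = 1 := by
  rw [logCutoff, Finset.sum_congr rfl fun i hi => dyadicStep_eq_one (hy.trans ?_)]
  · simp [hk]
  · exact pow_le_pow_right₀ (by norm_num) (Finset.mem_Ico.1 hi).1

lemma deriv_logCutoff (m k : ℕ) (y : ℝ) :
    deriv (logCutoff m k) y = (∑ i ∈ Finset.Ico m (m + k), deriv (dyadicStep i) y) / k :=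
  ((HasDerivAt.fun_sum fun i _ =>
    ((contDiff_dyadicStep i).differentiable one_ne_zero y).hasDerivAt).div_const _).deriv

lemma sq_deriv_logCutoff_mul_le {M : ℝ} (hM : ∀ y, |deriv smoothTransition y| ≤ M) (m k : ℕ)
    (y : ℝ) :
    deriv (logCutoff m k) y ^ 2 * y ≤ 1 / (k : ℝ) ^ 2 *
      ∑ i ∈ Finset.Ico m (m + k), (Iic (2 * 4 ^ i)).indicator (fun _ => 2 * M ^ 2 / 4 ^ i) y :=
  calc deriv (logCutoff m k) y ^ 2 * y
      = 1 / (k : ℝ) ^ 2 * ((∑ i ∈ Finset.Ico m (m + k), deriv (dyadicStep i) y) ^ 2 * y) := by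
        rw [deriv_logCutoff]
        ring
    _ ≤ _ := mul_le_mul_of_nonneg_left
        (sq_sum_deriv_dyadicStep_mul_le hM (Finset.Ico m (m + k)) y) (by positivity)

variable {X : Type*} [MeasurableSpace X] {μ : Measure X} {w ρ : X → ℝ} {A : ℝ}

lemma integral_mul_sq_deriv_logCutoff_le {M : ℝ} (hM : ∀ y, |deriv smoothTransition y| ≤ M)
    (hw : ∀ x, 0 ≤ w x) (hρ : ∀ x, 0 ≤ ρ x) (hρm : AEMeasurable ρ μ)
    (hInt : ∀ T, IntegrableOn w {x | ρ x ≤ T} μ)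
    (hgrowth : ∀ T, 1 ≤ T → ∫ x in {x | ρ x ≤ T}, w x ∂μ ≤ A * T) (m k : ℕ) :
    ∫ x, w x * deriv (logCutoff m k) (ρ x) ^ 2 * ρ x ∂μ ≤ 4 * M ^ 2 * A / k := by
  have hmeas (T : ℝ) : NullMeasurableSet {x | ρ x ≤ T} μ :=
    nullMeasurableSet_le hρm aemeasurable_const
  have hInt' (i : ℕ) : Integrable
      ({x | ρ x ≤ 2 * 4 ^ i}.indicator fun x => 2 * M ^ 2 / 4 ^ i * w x) μ :=
    IntegrableOn.integrable_indicator₀ ((hInt _).const_mul _) (hmeas _)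
  have hpoint (x : X) : w x * deriv (logCutoff m k) (ρ x) ^ 2 * ρ x ≤ (1 / (k : ℝ) ^ 2) *
      ∑ i ∈ Finset.Ico m (m + k),
        {x | ρ x ≤ 2 * 4 ^ i}.indicator (fun x => 2 * M ^ 2 / 4 ^ i * w x) x := by
    rw [mul_assoc]
    refine (mul_le_mul_of_nonneg_left (sq_deriv_logCutoff_mul_le hM m k (ρ x)) (hw x)).trans_eq ?_
    rw [mul_left_comm, Finset.mul_sum]
    congr! 2 with i
    simp only [indicator_apply, mem_Iic, mem_ofPred_eq, ite_mul, zero_mul, mul_comm (w x)]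
  calc ∫ x, w x * deriv (logCutoff m k) (ρ x) ^ 2 * ρ x ∂μ
      ≤ ∫ x, (1 / (k : ℝ) ^ 2) * ∑ i ∈ Finset.Ico m (m + k),
          {x | ρ x ≤ 2 * 4 ^ i}.indicator (fun x => 2 * M ^ 2 / 4 ^ i * w x) x ∂μ :=
        integral_mono_of_nonneg
          (Eventually.of_forall fun x => mul_nonneg (mul_nonneg (hw x) (sq_nonneg _)) (hρ x))
          ((integrable_finsetSum _ fun i _ => hInt' i).const_mul _) (Eventually.of_forall hpoint)
    _ = (1 / (k : ℝ) ^ 2) * ∑ i ∈ Finset.Ico m (m + k),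
          2 * M ^ 2 / 4 ^ i * ∫ x in {x | ρ x ≤ 2 * 4 ^ i}, w x ∂μ := by
        rw [integral_const_mul, integral_finsetSum _ fun i _ => hInt' i]
        simp only [integral_indicator₀ (hmeas _), integral_const_mul]
    _ ≤ (1 / (k : ℝ) ^ 2) * ∑ i ∈ Finset.Ico m (m + k),
          2 * M ^ 2 / 4 ^ i * (A * (2 * 4 ^ i)) := by
        gcongr with i
        exact hgrowth _ (by linarith [one_le_pow₀ (M₀ := ℝ) (a := 4) (n := i) (by norm_num)])
    _ = 4 * M ^ 2 * A / k := by
        have hterm (i : ℕ) : 2 * M ^ 2 / 4 ^ i * (A * (2 * 4 ^ i)) = 4 * M ^ 2 * A := by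
          field_simp
          ring
        simp only [hterm, Finset.sum_const, Nat.card_Ico, add_tsub_cancel_left, nsmul_eq_mul]
        field_simp

lemma exists_isCutoff_integral_le (hw : ∀ x, 0 ≤ w x) (hρ : ∀ x, 0 ≤ ρ x) (hρm : AEMeasurable ρ μ)
    (hInt : ∀ T, IntegrableOn w {x | ρ x ≤ T} μ)
    (hgrowth : ∀ T, 1 ≤ T → ∫ x in {x | ρ x ≤ T}, w x ∂μ ≤ A * T) (N : ℝ) {ε : ℝ} (hε : 0 < ε) :
    ∃ Φ : ℝ → ℝ, IsCutoff Φ ∧ (∀ y, y ≤ N → Φ y = 1) ∧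
      ∫ x, w x * deriv Φ (ρ x) ^ 2 * ρ x ∂μ ≤ ε := by
  obtain ⟨M, hM⟩ := exists_abs_deriv_smoothTransition_le
  obtain ⟨m, hm⟩ := pow_unbounded_of_one_lt N (by norm_num : (1 : ℝ) < 4)
  have hsmall : ∀ᶠ k : ℕ in atTop, 4 * M ^ 2 * A / k ≤ ε :=
    (tendsto_const_div_atTop_nhds_zero_nat _).eventually (Iic_mem_nhds hε)
  obtain ⟨k, hkε, hk⟩ := (hsmall.and (eventually_ne_atTop 0)).exists
  exact ⟨logCutoff m k, isCutoff_logCutoff m k, fun y hy => logCutoff_eq_one hk (hy.trans hm.le),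
    (integral_mul_sq_deriv_logCutoff_le hM hw hρ hρm hInt hgrowth m k).trans hkε⟩

lemma setLIntegral_indicator_le_of_cutoff {D : Set X} {h : X → ℝ} {Φ : ℝ → ℝ} {N : ℝ}
    (hD : MeasurableSet D) (hnonneg : ∀ x ∈ D, 0 ≤ h x) (hone : ∀ y, y ≤ N → Φ y = 1)
    (hInt : IntegrableOn (fun x => Φ (ρ x) ^ 2 * h x) D μ) :
    ∫⁻ x in D, {x | ρ x ≤ N}.indicator (fun x => ENNReal.ofReal (h x)) x ∂μ
      ≤ ENNReal.ofReal (∫ x in D, Φ (ρ x) ^ 2 * h x ∂μ) := by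
  rw [ofReal_integral_eq_lintegral_ofReal hInt]
  · refine setLIntegral_mono_ae' hD (Eventually.of_forall fun x _ => ?_)
    refine indicator_apply_le' (fun hx => ?_) fun _ => bot_le
    rw [hone _ hx, one_pow, one_mul]
  · filter_upwards [ae_restrict_mem hD] with x hx
    exact mul_nonneg (sq_nonneg _) (hnonneg x hx)

/- Testing with logarithmic cutoffs, whose energy is arbitrarily small by quadratic area growth
(linear in the squared distance `ρ`). -/
lemma eqOn_zero_of_caccioppoli [TopologicalSpace X] [OpensMeasurableSpace X]
    [μ.IsOpenPosMeasure] {D : Set X} {h : X → ℝ} {B : ℝ} (hD : IsOpen D) (hw : ∀ x, 0 ≤ w x)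
    (hρ : ∀ x, 0 ≤ ρ x) (hρm : AEMeasurable ρ (μ.restrict D))
    (hInt : ∀ T, IntegrableOn w {x | ρ x ≤ T} (μ.restrict D))
    (hgrowth : ∀ T, 1 ≤ T → ∫ x in {x | ρ x ≤ T}, w x ∂(μ.restrict D) ≤ A * T)
    (hh : ContinuousOn h D) (hnonneg : ∀ x ∈ D, 0 ≤ h x)
    (hcut : ∀ Φ, IsCutoff Φ → IntegrableOn (fun x => Φ (ρ x) ^ 2 * h x) D μ ∧
      ∫ x in D, Φ (ρ x) ^ 2 * h x ∂μ
        ≤ B * ∫ x in D, w x * deriv Φ (ρ x) ^ 2 * ρ x ∂μ) :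
    EqOn h 0 D := by
  have hzero (N : ℕ) : ∀ᵐ x ∂(μ.restrict D), ρ x ≤ N → h x = 0 := by
    have hmeas : AEMeasurable ({x | ρ x ≤ N}.indicator fun x => ENNReal.ofReal (h x))
        (μ.restrict D) :=
      (hh.aemeasurable hD.measurableSet).ennreal_ofReal.indicator₀
        (nullMeasurableSet_le hρm aemeasurable_const)
    have hlint : ∫⁻ x in D, {x | ρ x ≤ N}.indicator (fun x => ENNReal.ofReal (h x)) x ∂μ = 0 := by
      refine le_antisymm (ENNReal.le_of_forall_pos_le_add fun ε hε _ => ?_) bot_le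
      obtain ⟨Φ, hΦ, hone, hsmall⟩ := exists_isCutoff_integral_le hw hρ hρm hInt hgrowth N
        (show 0 < (ε : ℝ) / (|B| + 1) by positivity)
      obtain ⟨hΦint, hΦle⟩ := hcut Φ hΦ
      have henergy : B * ∫ x in D, w x * deriv Φ (ρ x) ^ 2 * ρ x ∂μ ≤ ε := by
        have hE : 0 ≤ ∫ x in D, w x * deriv Φ (ρ x) ^ 2 * ρ x ∂μ := integral_nonneg fun x =>
          mul_nonneg (mul_nonneg (hw x) (sq_nonneg _)) (hρ x)
        rw [le_div_iff₀ (by positivity)] at hsmall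
        nlinarith [mul_le_mul_of_nonneg_right (le_abs_self B) hE]
      rw [zero_add, ← ENNReal.ofReal_coe_nnreal]
      exact (setLIntegral_indicator_le_of_cutoff hD.measurableSet hnonneg hone hΦint).trans
        (ENNReal.ofReal_le_ofReal (hΦle.trans henergy))
    filter_upwards [(lintegral_eq_zero_iff' hmeas).1 hlint, ae_restrict_mem hD.measurableSet]
      with x hx hxD hN
    rw [indicator_of_mem (by exact hN), Pi.zero_apply, ENNReal.ofReal_eq_zero] at hx
    exact le_antisymm hx (hnonneg x hxD)
  refine Measure.eqOn_open_of_ae_eq (μ := μ) ?_ hD hh continuousOn_const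
  filter_upwards [ae_all_iff.2 hzero] with x hx
  exact (exists_nat_ge (ρ x)).elim fun N hN => hx N hN

end LogarithmicCutoff

/-! ### Plane vectors and the area integrand -/

section Plane

/-- The Euclidean inner product of `ℝ × ℝ` (which carries the sup norm). -/
def dot (a b : ℝ × ℝ) : ℝ := a.1 * b.1 + a.2 * b.2

/-- The determinant of a pair of plane vectors. -/
def wedge (a b : ℝ × ℝ) : ℝ := a.1 * b.2 - a.2 * b.1

/-- The area density `√(1 + |ξ|²)` of a graph with gradient `ξ`. -/
def areaDensity (ξ : ℝ × ℝ) : ℝ := √(1 + dot ξ ξ)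

/-- The Hessian of `areaDensity` at `ξ`, as a bilinear form; the numerator is rewritten by the
Lagrange identity `|ξ|² ⟨a, b⟩ - ⟨ξ, a⟩ ⟨ξ, b⟩ = wedge ξ a * wedge ξ b`. -/
def areaHess (ξ a b : ℝ × ℝ) : ℝ := (dot a b + wedge ξ a * wedge ξ b) / areaDensity ξ ^ 3

variable {ξ a b : ℝ × ℝ}

lemma dot_self_nonneg (a : ℝ × ℝ) : 0 ≤ dot a a :=
  add_nonneg (mul_self_nonneg _) (mul_self_nonneg _)

lemma dot_self_eq_zero : dot a a = 0 ↔ a = 0 :=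
  mul_self_add_mul_self_eq_zero.trans (Prod.ext_iff (x := a) (y := 0)).symm

lemma areaDensity_sq (ξ : ℝ × ℝ) : areaDensity ξ ^ 2 = 1 + dot ξ ξ :=
  Real.sq_sqrt (add_nonneg zero_le_one (dot_self_nonneg ξ))

lemma one_le_areaDensity (ξ : ℝ × ℝ) : 1 ≤ areaDensity ξ :=
  Real.one_le_sqrt.2 (le_add_of_nonneg_right (dot_self_nonneg ξ))

lemma areaDensity_pos (ξ : ℝ × ℝ) : 0 < areaDensity ξ :=
  one_pos.trans_le (one_le_areaDensity ξ)

lemma abs_fst_le_areaDensity (ξ : ℝ × ℝ) : |ξ.1| ≤ areaDensity ξ := by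
  refine abs_le_of_sq_le_sq ?_ (areaDensity_pos ξ).le
  rw [areaDensity_sq, dot]
  nlinarith [sq_nonneg ξ.2]

lemma abs_snd_le_areaDensity (ξ : ℝ × ℝ) : |ξ.2| ≤ areaDensity ξ := by
  refine abs_le_of_sq_le_sq ?_ (areaDensity_pos ξ).le
  rw [areaDensity_sq, dot]
  nlinarith [sq_nonneg ξ.1]

lemma areaHess_add_right (ξ a b c : ℝ × ℝ) :
    areaHess ξ a (b + c) = areaHess ξ a b + areaHess ξ a c := by
  simp only [areaHess, dot, wedge, Prod.fst_add, Prod.snd_add]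
  ring

lemma areaHess_smul_right (ξ a b : ℝ × ℝ) (c : ℝ) :
    areaHess ξ a (c • b) = c * areaHess ξ a b := by
  simp only [areaHess, dot, wedge, Prod.smul_fst, Prod.smul_snd, smul_eq_mul]
  ring

lemma areaHess_smul_smul (c d : ℝ) : areaHess ξ (c • a) (d • b) = c * d * areaHess ξ a b := by
  simp only [areaHess, dot, wedge, Prod.smul_fst, Prod.smul_snd, smul_eq_mul]
  ring

lemma areaHess_self_nonneg (ξ a : ℝ × ℝ) : 0 ≤ areaHess ξ a a :=
  div_nonneg (add_nonneg (dot_self_nonneg a) (mul_self_nonneg _))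
    (pow_nonneg (areaDensity_pos ξ).le 3)

lemma areaHess_self_eq_zero : areaHess ξ a a = 0 ↔ a = 0 := by
  have hW : areaDensity ξ ^ 3 ≠ 0 := pow_ne_zero 3 (areaDensity_pos ξ).ne'
  rw [areaHess, div_eq_zero_iff, or_iff_left hW,
    add_eq_zero_iff_of_nonneg (dot_self_nonneg a) (mul_self_nonneg _), dot_self_eq_zero]
  exact and_iff_left_of_imp fun h => by simp only [h, wedge,
    Prod.fst_zero, Prod.snd_zero, mul_zero, sub_zero]

/- The defect is `(1 + |ξ|²) (a ∧ b)²`, up to the common denominator. -/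
lemma areaHess_sq_le (ξ a b : ℝ × ℝ) :
    areaHess ξ a b ^ 2 ≤ areaHess ξ a a * areaHess ξ b b := by
  have hdefect : 0 ≤ (1 + dot ξ ξ) * wedge a b ^ 2 :=
    mul_nonneg (add_nonneg zero_le_one (dot_self_nonneg ξ)) (sq_nonneg _)
  have hW := areaDensity_pos ξ
  rw [areaHess, areaHess, areaHess, div_pow, div_mul_div_comm, ← sq (areaDensity ξ ^ 3),
    div_le_div_iff_of_pos_right (by positivity)]
  simp only [dot, wedge] at hdefect ⊢
  linarith

/- The distance function of the graph is `1`-Lipschitz: the left side below is the defect in the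
estimate for its gradient. -/
lemma areaHess_grad_sq_dist_le (ξ x : ℝ × ℝ) (u : ℝ) :
    areaHess ξ ((2 : ℝ) • (x + u • ξ)) ((2 : ℝ) • (x + u • ξ)) * areaDensity ξ
      ≤ 4 * (dot x x + u ^ 2) := by
  have hW := areaDensity_pos ξ
  have hdefect : 0 ≤ (u - dot x ξ) ^ 2 := sq_nonneg _
  have hcancel (N : ℝ) : N / areaDensity ξ ^ 3 * areaDensity ξ = N / areaDensity ξ ^ 2 := by
    field_simp
  rw [areaHess_smul_smul, areaHess, mul_assoc, hcancel, areaDensity_sq, mul_div_assoc',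
    div_le_iff₀ (by linarith [dot_self_nonneg ξ])]
  simp only [dot, wedge, Prod.fst_add, Prod.snd_add, Prod.smul_fst, Prod.smul_snd,
    smul_eq_mul] at hdefect ⊢
  linarith

end Plane

section PlaneGradient

/-- The Euclidean gradient of a function on `ℝ × ℝ`. -/
def planeGrad (f : ℝ × ℝ → ℝ) (x : ℝ × ℝ) : ℝ × ℝ := (fderiv ℝ f x (1, 0), fderiv ℝ f x (0, 1))

/-- `f` is differentiable at `x` with Euclidean gradient `a`. -/
def HasPlaneGradAt (f : ℝ × ℝ → ℝ) (a x : ℝ × ℝ) : Prop :=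
  HasFDerivAt f (a.1 • ContinuousLinearMap.fst ℝ ℝ ℝ + a.2 • ContinuousLinearMap.snd ℝ ℝ ℝ) x

variable {f g : ℝ × ℝ → ℝ} {a b x : ℝ × ℝ}

lemma hasPlaneGradAt_of_hasFDerivAt {L : ℝ × ℝ →L[ℝ] ℝ} (h : HasFDerivAt f L x) :
    HasPlaneGradAt f (L (1, 0), L (0, 1)) x := by
  refine h.congr_fderiv ?_
  ext <;> simp

lemma hasPlaneGradAt_of_differentiableAt (h : DifferentiableAt ℝ f x) :
    HasPlaneGradAt f (planeGrad f x) x :=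
  hasPlaneGradAt_of_hasFDerivAt h.hasFDerivAt

lemma hasPlaneGradAt_of_contDiffOn {D : Set (ℝ × ℝ)} (hD : IsOpen D) (hf : ContDiffOn ℝ 1 f D)
    (hx : x ∈ D) : HasPlaneGradAt f (planeGrad f x) x :=
  hasPlaneGradAt_of_differentiableAt
    ((hf.differentiableOn one_ne_zero).differentiableAt (hD.mem_nhds hx))

lemma hasPlaneGradAt_zero_iff : HasPlaneGradAt f 0 x ↔ HasFDerivAt f (0 : ℝ × ℝ →L[ℝ] ℝ) x := by
  simp [HasPlaneGradAt]

lemma hasPlaneGradAt_const (c : ℝ) : HasPlaneGradAt (fun _ => c) 0 x :=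
  hasPlaneGradAt_of_hasFDerivAt (hasFDerivAt_const c x)

lemma hasPlaneGradAt_fst : HasPlaneGradAt Prod.fst (1, 0) x :=
  hasPlaneGradAt_of_hasFDerivAt hasFDerivAt_fst

lemma hasPlaneGradAt_snd : HasPlaneGradAt Prod.snd (0, 1) x :=
  hasPlaneGradAt_of_hasFDerivAt hasFDerivAt_snd

namespace HasPlaneGradAt

lemma fderiv_apply (h : HasPlaneGradAt f a x) (v : ℝ × ℝ) : fderiv ℝ f x v = dot a v := by
  rw [HasFDerivAt.fderiv h]
  rfl

lemma planeGrad (h : HasPlaneGradAt f a x) : planeGrad f x = a := by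
  rw [_root_.planeGrad, h.fderiv_apply, h.fderiv_apply]
  simp [dot]

lemma congr_grad (h : HasPlaneGradAt f a x) (hab : a = b) : HasPlaneGradAt f b x := hab ▸ h

lemma add (hf : HasPlaneGradAt f a x) (hg : HasPlaneGradAt g b x) :
    HasPlaneGradAt (fun y => f y + g y) (a + b) x :=
  (hasPlaneGradAt_of_hasFDerivAt (HasFDerivAt.fun_add hf hg)).congr_grad (by ext <;> simp)

lemma sub (hf : HasPlaneGradAt f a x) (hg : HasPlaneGradAt g b x) :
    HasPlaneGradAt (fun y => f y - g y) (a - b) x :=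
  (hasPlaneGradAt_of_hasFDerivAt (HasFDerivAt.fun_sub hf hg)).congr_grad (by ext <;> simp)

lemma mul (hf : HasPlaneGradAt f a x) (hg : HasPlaneGradAt g b x) :
    HasPlaneGradAt (fun y => f y * g y) (f x • b + g x • a) x :=
  (hasPlaneGradAt_of_hasFDerivAt (HasFDerivAt.fun_mul hf hg)).congr_grad (by ext <;> simp)

lemma comp {φ : ℝ → ℝ} {φ' : ℝ} (hφ : HasDerivAt φ φ' (f x)) (hf : HasPlaneGradAt f a x) :
    HasPlaneGradAt (fun y => φ (f y)) (φ' • a) x :=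
  (hasPlaneGradAt_of_hasFDerivAt (hφ.comp_hasFDerivAt x hf)).congr_grad (by ext <;> simp)

lemma const_mul (c : ℝ) (hf : HasPlaneGradAt f a x) : HasPlaneGradAt (fun y => c * f y) (c • a) x :=
  comp (hasDerivAt_const_mul c) hf

end HasPlaneGradAt

end PlaneGradient

section Flux

variable {p q : ℝ × ℝ → ℝ} {a b x : ℝ × ℝ}

lemma hasPlaneGradAt_areaDensity (hp : HasPlaneGradAt p a x) (hq : HasPlaneGradAt q b x) :
    HasPlaneGradAt (fun y => areaDensity (p y, q y))
      ((areaDensity (p x, q x))⁻¹ • (p x • a + q x • b)) x := by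
  have hpos : 1 + (p x * p x + q x * q x) ≠ 0 := by nlinarith [sq_nonneg (p x), sq_nonneg (q x)]
  refine (HasPlaneGradAt.comp (Real.hasDerivAt_sqrt hpos)
    ((hasPlaneGradAt_const 1).add ((hp.mul hp).add (hq.mul hq)))).congr_grad ?_
  change (1 / (2 * areaDensity (p x, q x))) • _ = _
  rw [← two_smul ℝ, ← two_smul ℝ (q x • b), ← smul_add, zero_add, smul_smul]
  congr 1
  field_simp

lemma hasPlaneGradAt_inv_areaDensity (hp : HasPlaneGradAt p a x) (hq : HasPlaneGradAt q b x) :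
    HasPlaneGradAt (fun y => (areaDensity (p y, q y))⁻¹)
      (-((areaDensity (p x, q x) ^ 3)⁻¹ • (p x • a + q x • b))) x := by
  have hW := (areaDensity_pos (p x, q x)).ne'
  refine (HasPlaneGradAt.comp (f := fun y => areaDensity (p y, q y)) (hasDerivAt_inv hW)
    (hasPlaneGradAt_areaDensity hp hq)).congr_grad ?_
  rw [smul_smul, neg_mul, neg_smul]
  congr 2
  field_simp

lemma hasPlaneGradAt_flux_fst (hp : HasPlaneGradAt p a x) (hq : HasPlaneGradAt q b x) :
    HasPlaneGradAt (fun y => p y / areaDensity (p y, q y))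
      ((areaDensity (p x, q x) ^ 3)⁻¹ • ((1 + q x ^ 2) • a - (p x * q x) • b)) x := by
  have hW := (areaDensity_pos (p x, q x)).ne'
  have hW2 := areaDensity_sq (p x, q x)
  simp only [div_eq_mul_inv]
  refine (hp.mul (hasPlaneGradAt_inv_areaDensity hp hq)).congr_grad ?_
  rw [show (areaDensity (p x, q x))⁻¹
    = (areaDensity (p x, q x) ^ 3)⁻¹ * areaDensity (p x, q x) ^ 2 by field_simp, hW2]
  ext <;> simp [dot] <;> ring

lemma hasPlaneGradAt_flux_snd (hp : HasPlaneGradAt p a x) (hq : HasPlaneGradAt q b x) :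
    HasPlaneGradAt (fun y => q y / areaDensity (p y, q y))
      ((areaDensity (p x, q x) ^ 3)⁻¹ • ((1 + p x ^ 2) • b - (p x * q x) • a)) x := by
  have hswap (y : ℝ × ℝ) : areaDensity (q y, p y) = areaDensity (p y, q y) := by
    simp only [areaDensity, dot, add_comm]
  simpa only [hswap, mul_comm (q x)] using hasPlaneGradAt_flux_fst hq hp

variable {D : Set (ℝ × ℝ)}

lemma continuousOn_areaDensity (hp : ContinuousOn p D) (hq : ContinuousOn q D) :
    ContinuousOn (fun y => areaDensity (p y, q y)) D := by
  simp only [areaDensity, dot]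
  fun_prop

lemma contDiffOn_areaDensity (hp : ContDiffOn ℝ 1 p D) (hq : ContDiffOn ℝ 1 q D) :
    ContDiffOn ℝ 1 (fun y => areaDensity (p y, q y)) D :=
  (contDiffOn_const.add ((hp.mul hp).add (hq.mul hq))).sqrt fun y _ =>
    (Real.sqrt_pos.1 (areaDensity_pos (p y, q y))).ne'

end Flux

section TestFunctions

variable {E : Type*} [NormedAddCommGroup E] [NormedSpace ℝ E] {D K : Set E} {f g ψ : E → ℝ}

lemma continuousOn_fderiv_apply (hD : IsOpen D) (hf : ContDiffOn ℝ 1 f D) (v : E) :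
    ContinuousOn (fun x => fderiv ℝ f x v) D :=
  (hf.continuousOn_fderiv_of_isOpen hD le_rfl).clm_apply continuousOn_const

namespace IsC1TestOn

lemma mul_left (hψ : IsC1TestOn D ψ) (hf : ContDiffOn ℝ 1 f D) :
    IsC1TestOn D fun x => f x * ψ x := by
  obtain ⟨hψ, K, hKD, hK, h0⟩ := hψ
  exact ⟨hf.mul hψ, K, hKD, hK, fun x hx hxK => mul_eq_zero_of_right _ (h0 x hx hxK)⟩

variable [MeasurableSpace E] [OpensMeasurableSpace E] {μ : Measure E}
  [IsFiniteMeasureOnCompacts μ]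

lemma integrableOn_mul (hD : IsOpen D) (hψ : IsC1TestOn D ψ) (hf : ContinuousOn f D) :
    IntegrableOn (fun x => f x * ψ x) D μ := by
  obtain ⟨hψ, K, hKD, hK, h0⟩ := hψ
  exact integrableOn_of_eq_zero_off_compact hD hK hKD (hf.mul hψ.continuousOn)
    fun x hx hxK => mul_eq_zero_of_right _ (h0 x hx hxK)

lemma integrableOn_mul_fderiv (hD : IsOpen D) (hψ : IsC1TestOn D ψ) (hf : ContinuousOn f D)
    (v : E) : IntegrableOn (fun x => f x * fderiv ℝ ψ x v) D μ := by
  obtain ⟨hψ, K, hKD, hK, h0⟩ := hψ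
  refine integrableOn_of_eq_zero_off_compact hD hK hKD
    (hf.mul (continuousOn_fderiv_apply hD hψ v)) fun x hx hxK => ?_
  rw [(eventuallyEq_zero_of_off_compact hD hK h0 x hx hxK).fderiv_eq, fderiv_fun_const,
    Pi.zero_apply, zero_apply, mul_zero]

end IsC1TestOn

lemma IsC1TestOn.setIntegral_mul_fderiv_eq_neg [FiniteDimensional ℝ E] [MeasurableSpace E]
    [BorelSpace E] {μ : Measure E} [μ.IsAddHaarMeasure] (hD : IsOpen D) (hψ : IsC1TestOn D ψ)
    (hf : ContDiffOn ℝ 1 f D) (v : E) :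
    ∫ x in D, f x * fderiv ℝ ψ x v ∂μ = -∫ x in D, fderiv ℝ f x v * ψ x ∂μ := by
  rw [← add_eq_zero_iff_eq_neg, ← integral_add (hψ.integrableOn_mul_fderiv hD hf.continuousOn v)
    (hψ.integrableOn_mul hD (continuousOn_fderiv_apply hD hf v)),
    ← (hψ.mul_left hf).setIntegral_fderiv_eq_zero (μ := μ) hD v]
  refine setIntegral_congr_fun hD.measurableSet fun x hx => ?_
  have hfx := (hf.differentiableOn one_ne_zero).differentiableAt (hD.mem_nhds hx)
  have hψx := (hψ.1.differentiableOn one_ne_zero).differentiableAt (hD.mem_nhds hx)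
  simp only [fderiv_fun_mul hfx hψx, add_apply, smul_apply, smul_eq_mul, mul_comm (ψ x)]

end TestFunctions

/-! ### CMC graphs and the linearised equation -/

/-- `u` is a classical solution of `M[u] + H = 0` on the open plane set `D`, with first
derivatives `p = ∂u/∂x₁` and `q = ∂u/∂x₂`. The derivatives are carried as separate functions so
that they keep a meaning on the boundary of `D`. -/
structure IsCMCGraph (D : Set (ℝ × ℝ)) (u p q : ℝ × ℝ → ℝ) (H : ℝ) : Prop where
  isOpen : IsOpen D
  hasPlaneGradAt : ∀ x ∈ D, HasPlaneGradAt u (p x, q x) x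
  contDiffOn_fst : ContDiffOn ℝ 1 p D
  contDiffOn_snd : ContDiffOn ℝ 1 q D
  div_flux : ∀ x ∈ D, fderiv ℝ (fun y => p y / areaDensity (p y, q y)) x (1, 0)
    + fderiv ℝ (fun y => q y / areaDensity (p y, q y)) x (0, 1) = -H

/-- A CMC graph over a connected domain that is invariant under upward vertical translations, with
zero boundary values and constant gradient norm along a connected boundary. -/
structure IsCapillaryGraph (D : Set (ℝ × ℝ)) (u p q : ℝ × ℝ → ℝ) (H : ℝ) : Prop
    extends IsCMCGraph D u p q H where
  isConnected : IsConnected D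
  continuousOn : ContinuousOn u (closure D)
  continuousOn_fst : ContinuousOn p (closure D)
  continuousOn_snd : ContinuousOn q (closure D)
  isConnected_frontier : IsConnected (frontier D)
  eq_zero_of_mem_frontier : ∀ x ∈ frontier D, u x = 0
  exists_grad_sq_eq : ∃ k, ∀ x ∈ frontier D, p x ^ 2 + q x ^ 2 = k
  add_vertical_mem : ∀ x ∈ D, ∀ t : ℝ, 0 ≤ t → x + (0, t) ∈ D

section CMCGraph

variable {D : Set (ℝ × ℝ)} {u p q ψ : ℝ × ℝ → ℝ} {H : ℝ} {x : ℝ × ℝ}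

namespace IsCMCGraph

lemma neg (C : IsCMCGraph D u p q H) :
    IsCMCGraph D (fun x => -u x) (fun x => -p x) (fun x => -q x) (-H) where
  isOpen := C.isOpen
  hasPlaneGradAt x hx := by
    simpa using (C.hasPlaneGradAt x hx).const_mul (-1)
  contDiffOn_fst := C.contDiffOn_fst.neg
  contDiffOn_snd := C.contDiffOn_snd.neg
  div_flux x hx := by
    have hW (y : ℝ × ℝ) : areaDensity (-p y, -q y) = areaDensity (p y, q y) := by
      simp only [areaDensity, dot, neg_mul_neg]
    simp only [hW, neg_div, fderiv_fun_neg, neg_apply, ← C.div_flux x hx]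
    ring

lemma hasPlaneGradAt_fst (C : IsCMCGraph D u p q H) (hx : x ∈ D) :
    HasPlaneGradAt p (planeGrad p x) x :=
  hasPlaneGradAt_of_contDiffOn C.isOpen C.contDiffOn_fst hx

lemma hasPlaneGradAt_snd (C : IsCMCGraph D u p q H) (hx : x ∈ D) :
    HasPlaneGradAt q (planeGrad q x) x :=
  hasPlaneGradAt_of_contDiffOn C.isOpen C.contDiffOn_snd hx

lemma contDiffOn (C : IsCMCGraph D u p q H) : ContDiffOn ℝ 1 u D := by
  refine (contDiffOn_succ_iff_fderiv_of_isOpen (n := 0) C.isOpen).2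
    ⟨fun x hx => (C.hasPlaneGradAt x hx).differentiableAt.differentiableWithinAt, by simp, ?_⟩
  refine contDiffOn_zero.2 (ContinuousOn.congr ?_ fun x hx => (C.hasPlaneGradAt x hx).fderiv)
  exact (C.contDiffOn_fst.continuousOn.smul continuousOn_const).add
    (C.contDiffOn_snd.continuousOn.smul continuousOn_const)

lemma continuousOn_areaDensity (C : IsCMCGraph D u p q H) :
    ContinuousOn (fun x => areaDensity (p x, q x)) D :=
  _root_.continuousOn_areaDensity C.contDiffOn_fst.continuousOn C.contDiffOn_snd.continuousOn

lemma contDiffOn_flux_fst (C : IsCMCGraph D u p q H) :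
    ContDiffOn ℝ 1 (fun x => p x / areaDensity (p x, q x)) D :=
  C.contDiffOn_fst.div (contDiffOn_areaDensity C.contDiffOn_fst C.contDiffOn_snd)
    fun x _ => (areaDensity_pos (p x, q x)).ne'

lemma contDiffOn_flux_snd (C : IsCMCGraph D u p q H) :
    ContDiffOn ℝ 1 (fun x => q x / areaDensity (p x, q x)) D :=
  C.contDiffOn_snd.div (contDiffOn_areaDensity C.contDiffOn_fst C.contDiffOn_snd)
    fun x _ => (areaDensity_pos (p x, q x)).ne'

lemma planeGrad_fst_snd (C : IsCMCGraph D u p q H) (hx : x ∈ D) :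
    (planeGrad p x).2 = (planeGrad q x).1 := by
  have hu' : ∀ᶠ y in 𝓝 x, HasFDerivAt u
      (p y • ContinuousLinearMap.fst ℝ ℝ ℝ + q y • ContinuousLinearMap.snd ℝ ℝ ℝ) y :=
    (C.isOpen.mem_nhds hx |> eventually_mem_set.2).mono C.hasPlaneGradAt
  have hu'' := ((C.hasPlaneGradAt_fst hx).smul_const (ContinuousLinearMap.fst ℝ ℝ ℝ)).fun_add
    ((C.hasPlaneGradAt_snd hx).smul_const (ContinuousLinearMap.snd ℝ ℝ ℝ))
  simpa using second_derivative_symmetric_of_eventually_of_real hu' hu'' (0, 1) (1, 0)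

lemma setIntegral_dot_flux_planeGrad (C : IsCMCGraph D u p q H) (hψ : IsC1TestOn D ψ) :
    ∫ x in D, dot (p x / areaDensity (p x, q x), q x / areaDensity (p x, q x)) (planeGrad ψ x)
      = H * ∫ x in D, ψ x := by
  have hF := C.contDiffOn_flux_fst
  have hG := C.contDiffOn_flux_snd
  simp only [dot, planeGrad]
  rw [integral_add (hψ.integrableOn_mul_fderiv C.isOpen hF.continuousOn _)
      (hψ.integrableOn_mul_fderiv C.isOpen hG.continuousOn _),
    hψ.setIntegral_mul_fderiv_eq_neg C.isOpen hF, hψ.setIntegral_mul_fderiv_eq_neg C.isOpen hG,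
    ← neg_add, ← integral_add
      (hψ.integrableOn_mul C.isOpen (continuousOn_fderiv_apply C.isOpen hF _))
      (hψ.integrableOn_mul C.isOpen (continuousOn_fderiv_apply C.isOpen hG _)),
    ← integral_neg, ← integral_const_mul]
  refine setIntegral_congr_fun C.isOpen.measurableSet fun x hx => ?_
  linear_combination (-ψ x) * C.div_flux x hx

/-- The flux `a` has `∂₁a₁ = -H - ∂₂a₂`, so the integrand is, up to the derivative `-H ∂₂ψ`, the
Jacobian of `ψ` and `a₁`. -/
lemma setIntegral_areaHess_planeGrad_eq_zero (C : IsCMCGraph D u p q H) (hψ : IsC1TestOn D ψ) :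
    ∫ x in D, areaHess (p x, q x) (planeGrad q x) (planeGrad ψ x) = 0 := by
  have hF := C.contDiffOn_flux_fst
  have hInt (v w : ℝ × ℝ) := hψ.integrableOn_mul_fderiv (μ := volume) C.isOpen
    (continuousOn_fderiv_apply C.isOpen hF v) w
  have hdiv := hψ.setIntegral_fderiv_eq_zero (μ := volume) C.isOpen (0, 1)
  have hjac := hψ.setIntegral_jacobian_eq_zero_of_contDiffOn (μ := volume) C.isOpen hF
    (1, 0) (0, 1)
  calc ∫ x in D, areaHess (p x, q x) (planeGrad q x) (planeGrad ψ x)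
      = ∫ x in D, (-H * fderiv ℝ ψ x (0, 1)
        - (fderiv ℝ (fun y => p y / areaDensity (p y, q y)) x (1, 0) * fderiv ℝ ψ x (0, 1)
          - fderiv ℝ (fun y => p y / areaDensity (p y, q y)) x (0, 1) * fderiv ℝ ψ x (1, 0))) := by
        refine setIntegral_congr_fun C.isOpen.measurableSet fun x hx => ?_
        have hp := C.hasPlaneGradAt_fst hx
        have hq := C.hasPlaneGradAt_snd hx
        simp only [← C.div_flux x hx, (hasPlaneGradAt_flux_fst hp hq).fderiv_apply,
          (hasPlaneGradAt_flux_snd hp hq).fderiv_apply, areaHess]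
        have hsymm := C.planeGrad_fst_snd hx
        simp only [dot, wedge, planeGrad, Prod.smul_fst, Prod.smul_snd, Prod.fst_sub,
          Prod.snd_sub, smul_eq_mul] at hsymm ⊢
        rw [hsymm]
        ring
    _ = 0 := by
        refine (integral_sub (hψ.integrableOn_mul_fderiv C.isOpen continuousOn_const _)
          ((hInt _ _).sub (hInt _ _))).trans ?_
        rw [integral_const_mul, hdiv, mul_zero, zero_sub, neg_eq_zero]
        exact hjac

end IsCMCGraph

end CMCGraph

/-! ### The strip -/

section Strip

variable {D : Set (ℝ × ℝ)} {u p q : ℝ × ℝ → ℝ} {H : ℝ}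

lemma closedBall_prod_eq_Icc (c : ℝ × ℝ) (r : ℝ) :
    closedBall c r = Icc (c - (r, r)) (c + (r, r)) := by
  rw [← Prod.mk.eta (p := c), ← closedBall_prod_same, Real.closedBall_eq_Icc,
    Real.closedBall_eq_Icc, Icc_prod_Icc]
  rfl

lemma abs_fst_div_areaDensity_le_one (ξ : ℝ × ℝ) : |ξ.1 / areaDensity ξ| ≤ 1 := by
  rw [abs_div, abs_of_pos (areaDensity_pos ξ), div_le_one (areaDensity_pos ξ)]
  exact abs_fst_le_areaDensity ξ

lemma abs_snd_div_areaDensity_le_one (ξ : ℝ × ℝ) : |ξ.2 / areaDensity ξ| ≤ 1 := by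
  rw [abs_div, abs_of_pos (areaDensity_pos ξ), div_le_one (areaDensity_pos ξ)]
  exact abs_snd_le_areaDensity ξ

lemma abs_setIntegral_div_closedBall_le {f g : ℝ × ℝ → ℝ} {M r : ℝ} {c : ℝ × ℝ}
    (hD : IsOpen D) (hf : ContDiffOn ℝ 1 f D) (hg : ContDiffOn ℝ 1 g D) (hfM : ∀ x, |f x| ≤ M)
    (hgM : ∀ x, |g x| ≤ M) (hr : 0 ≤ r) (hcr : closedBall c r ⊆ D) :
    |∫ x in closedBall c r, (fderiv ℝ f x (1, 0) + fderiv ℝ g x (0, 1))| ≤ 8 * M * r := by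
  rw [closedBall_prod_eq_Icc] at hcr ⊢
  have hderiv {h : ℝ × ℝ → ℝ} (hh : ContDiffOn ℝ 1 h D) :
      ∀ x ∈ Ioo (c.1 - r) (c.1 + r) ×ˢ Ioo (c.2 - r) (c.2 + r),
        HasFDerivAt h (fderiv ℝ h x) x := fun x hx =>
    ((hh.differentiableOn one_ne_zero).differentiableAt
      (hD.mem_nhds (hcr ⟨⟨hx.1.1.le, hx.2.1.le⟩, hx.1.2.le, hx.2.2.le⟩))).hasFDerivAt
  have hside {h : ℝ → ℝ} (t : ℝ) (hh : ∀ s, |h s| ≤ M) :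
      |∫ s in (t - r)..(t + r), h s| ≤ M * (2 * r) := by
    have := intervalIntegral.norm_integral_le_of_norm_le_const (a := t - r) (b := t + r) (f := h)
      fun s _ => hh s
    rwa [show t + r - (t - r) = 2 * r by ring, abs_of_nonneg (by positivity)] at this
  rw [integral_divergence_prod_Icc_of_hasFDerivAt_of_le f g (fderiv ℝ f) (fderiv ℝ g) _ _
    (by constructor <;> simp <;> linarith) (hf.continuousOn.mono hcr) (hg.continuousOn.mono hcr)
    (hderiv hf) (hderiv hg) ((((continuousOn_fderiv_apply hD hf _).add
      (continuousOn_fderiv_apply hD hg _)).mono hcr).integrableOn_compact isCompact_Icc)]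
  have htop := abs_le.1 (hside c.1 fun s => hgM (s, c.2 + r))
  have hbot := abs_le.1 (hside c.1 fun s => hgM (s, c.2 - r))
  have hright := abs_le.1 (hside c.2 fun s => hfM (c.1 + r, s))
  have hleft := abs_le.1 (hside c.2 fun s => hfM (c.1 - r, s))
  simp only [Prod.fst_sub, Prod.fst_add, Prod.snd_sub, Prod.snd_add]
  rw [abs_le]
  constructor <;> linarith

/-- The flux has norm at most one, so the divergence theorem bounds `|H|` times the area of a
square by its perimeter. -/
lemma IsCMCGraph.abs_mul_radius_le (C : IsCMCGraph D u p q H) {c : ℝ × ℝ} {r : ℝ} (hr : 0 < r)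
    (hcr : closedBall c r ⊆ D) : |H| * r ≤ 2 := by
  have hdiv := abs_setIntegral_div_closedBall_le C.isOpen C.contDiffOn_flux_fst
    C.contDiffOn_flux_snd (fun x => abs_fst_div_areaDensity_le_one (p x, q x))
    (fun x => abs_snd_div_areaDensity_le_one (p x, q x)) hr.le hcr
  rw [setIntegral_congr_fun measurableSet_closedBall fun x hx => C.div_flux x (hcr hx),
    setIntegral_const, smul_eq_mul, ← Prod.mk.eta (p := c), ← closedBall_prod_same,
    Measure.volume_eq_prod, measureReal_prod_prod, Real.volume_real_closedBall hr.le,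
    Real.volume_real_closedBall hr.le, abs_mul, abs_neg, abs_of_pos (by positivity)] at hdiv
  refine le_of_mul_le_mul_left ?_ (show (0 : ℝ) < 4 * r by positivity)
  linarith

namespace IsCapillaryGraph

lemma exists_closedBall_subset (C : IsCapillaryGraph D u p q H) {x y : ℝ × ℝ} (hx : x ∈ D)
    (hy : y ∈ D) : ∃ c, closedBall c ((y.1 - x.1) / 2) ⊆ D := by
  obtain ⟨γ, hγ⟩ :=
    (C.isOpen.isConnected_iff_isPathConnected.1 C.isConnected).joinedIn x hx y hy
  obtain ⟨T, hT⟩ := (isCompact_range γ.continuous).exists_bound_of_continuousOn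
    continuous_snd.continuousOn
  refine ⟨((x.1 + y.1) / 2, T + (y.1 - x.1) / 2), fun z hz => ?_⟩
  obtain ⟨⟨hxz, hTz⟩, hzy, -⟩ := closedBall_prod_eq_Icc _ _ ▸ hz
  simp only [Prod.fst_sub, Prod.snd_sub, Prod.fst_add] at hxz hTz hzy
  obtain ⟨t, ht⟩ : z.1 ∈ range fun t => (γ t).1 :=
    intermediate_value_univ 0 1 (continuous_fst.comp γ.continuous)
      (by constructor <;> simp only [γ.source, γ.target, Function.comp_apply] <;> linarith)
  have hle : (γ t).2 ≤ z.2 := by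
    have := (le_abs_self _).trans (hT (γ t) ⟨t, rfl⟩)
    linarith
  have hmem := C.add_vertical_mem (γ t) (hγ t) (z.2 - (γ t).2) (sub_nonneg.2 hle)
  rwa [show γ t + (0, z.2 - (γ t).2) = z from Prod.ext (by simpa using ht) (by simp)] at hmem

lemma abs_mul_fst_sub_le (C : IsCapillaryGraph D u p q H) {x y : ℝ × ℝ} (hx : x ∈ D)
    (hy : y ∈ D) : |H| * (y.1 - x.1) ≤ 4 := by
  rcases le_or_gt (y.1 - x.1) 0 with hle | hlt
  · exact (mul_nonpos_of_nonneg_of_nonpos (abs_nonneg H) hle).trans (by norm_num)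
  · obtain ⟨c, hc⟩ := C.exists_closedBall_subset hx hy
    linarith [C.abs_mul_radius_le (half_pos hlt) hc]

lemma abs_mul_volume_inter_closedBall_le (C : IsCapillaryGraph D u p q H) {R : ℝ} (hR : 0 ≤ R) :
    |H| * volume.real (D ∩ closedBall 0 R) ≤ 16 * R := by
  rcases eq_or_ne H 0 with rfl | hH
  · simpa using hR
  obtain ⟨x₀, hx₀⟩ := C.isConnected.nonempty
  have hHpos : 0 < |H| := abs_pos.2 hH
  have hsub : D ∩ closedBall 0 R ⊆
      Icc (x₀.1 - 4 / |H|) (x₀.1 + 4 / |H|) ×ˢ Icc (0 - R) (0 + R) := by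
    rintro x ⟨hx, hxR⟩
    have h₁ := (le_div_iff₀' hHpos).2 (C.abs_mul_fst_sub_le hx₀ hx)
    have h₂ := (le_div_iff₀' hHpos).2 (C.abs_mul_fst_sub_le hx hx₀)
    obtain ⟨⟨-, hlow⟩, -, hupp⟩ := closedBall_prod_eq_Icc _ _ ▸ hxR
    exact ⟨⟨by linarith, by linarith⟩, hlow, hupp⟩
  calc |H| * volume.real (D ∩ closedBall 0 R)
      ≤ |H| * ((8 / |H|) * (2 * R)) := by
        refine mul_le_mul_of_nonneg_left ((measureReal_mono hsub
          (isCompact_Icc.prod isCompact_Icc).measure_lt_top.ne).trans_eq ?_)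
          hHpos.le
        have : 0 < 4 / |H| := by positivity
        rw [Measure.volume_eq_prod, measureReal_prod_prod, Real.volume_real_Icc_of_le,
          Real.volume_real_Icc_of_le] <;> [ring; linarith; linarith]
    _ = 16 * R := by
        field_simp
        ring

end IsCapillaryGraph

end Strip

/-! ### Quadratic area growth -/

section Cutoffs

variable {E : Type*} [NormedAddCommGroup E] [NormedSpace ℝ E] [FiniteDimensional ℝ E]
  {D : Set E} {f ψ : E → ℝ} {R : ℝ}

lemma isC1TestOn_of_notMem_frontier {T : Set ℝ} (hD : IsOpen D) (hψ : ContDiffOn ℝ 1 ψ D)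
    (hf : ContinuousOn f (closure D)) (hT : IsClosed T) (hfr : ∀ x ∈ frontier D, f x ∉ T)
    (hsupp : ∀ x ∈ D, ψ x ≠ 0 → ‖x‖ ≤ R ∧ f x ∈ T) : IsC1TestOn D ψ := by
  refine ⟨hψ, closedBall 0 R ∩ (closure D ∩ f ⁻¹' T), fun x ⟨_, hx, hxT⟩ => ?_,
    (isCompact_closedBall 0 R).inter_right (hf.preimage_isClosed_of_isClosed isClosed_closure hT),
    fun x hx hxK => ?_⟩
  · by_contra hxD
    exact hfr x (hD.frontier_eq ▸ ⟨hx, hxD⟩) hxT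
  · by_contra hne
    obtain ⟨hxR, hxT⟩ := hsupp x hx hne
    exact hxK ⟨mem_closedBall_zero_iff.2 hxR, subset_closure hx, hxT⟩

lemma integrableOn_inter_closedBall [MeasurableSpace E] [BorelSpace E] {μ : Measure E}
    [IsFiniteMeasureOnCompacts μ] (hf : ContinuousOn f (closure D)) (R : ℝ) :
    IntegrableOn f (D ∩ closedBall 0 R) μ :=
  ((hf.mono inter_subset_left).integrableOn_compact
    ((isCompact_closedBall 0 R).inter_left isClosed_closure)).mono_set
    (inter_subset_inter_left _ subset_closure)

lemma exists_contDiff_cutoff_norm_fderiv_le (E : Type*) [NormedAddCommGroup E] [NormedSpace ℝ E]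
    [FiniteDimensional ℝ E] : ∃ M, 0 ≤ M ∧ ∀ R, 0 < R → ∃ χ : E → ℝ, ContDiff ℝ 1 χ ∧
      (∀ x, 0 ≤ χ x ∧ χ x ≤ 1) ∧ (∀ x ∈ closedBall 0 R, χ x = 1) ∧
      (∀ x ∉ closedBall 0 (2 * R), χ x = 0) ∧ ∀ x, ‖fderiv ℝ χ x‖ ≤ M / R := by
  let φ : ContDiffBump (0 : E) := ⟨1, 2, one_pos, one_lt_two⟩
  obtain ⟨M, hM⟩ := (φ.contDiff.continuous_fderiv (n := 1)
    one_ne_zero).bounded_above_of_compact_support (φ.hasCompactSupport.fderiv ℝ)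
  refine ⟨M, (norm_nonneg _).trans (hM 0), fun R hR => ⟨fun x => φ (R⁻¹ • x),
    φ.contDiff.comp (contDiff_const_smul R⁻¹), fun x => ⟨φ.nonneg, φ.le_one⟩, fun x hx => ?_,
    fun x hx => ?_, fun x => ?_⟩⟩
  · refine φ.one_of_mem_closedBall (mem_closedBall_zero_iff.2 ?_)
    rw [norm_smul, norm_inv, Real.norm_of_nonneg hR.le, inv_mul_le_iff₀ hR, mul_one]
    exact mem_closedBall_zero_iff.1 hx
  · refine φ.zero_of_le_dist ?_
    rw [dist_zero_right, norm_smul, norm_inv, Real.norm_of_nonneg hR.le, le_inv_mul_iff₀' hR]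
    exact (not_le.1 fun h => hx (mem_closedBall_zero_iff.2 h)).le
  · rw [show fderiv ℝ (fun x => φ (R⁻¹ • x)) x = R⁻¹ • fderiv ℝ φ (R⁻¹ • x) from
        fderiv_comp_smul R⁻¹, norm_smul, norm_inv, Real.norm_of_nonneg hR.le, div_eq_inv_mul]
    exact mul_le_mul_of_nonneg_left (hM _) (inv_nonneg.2 hR.le)

/-- On the zero set of `f`, every map `f • v` is perfectly approximated by the zero linear map. -/
lemma ae_restrict_fderiv_eq_zero_of_eq_zero [MeasurableSpace E] [BorelSpace E] (μ : Measure E)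
    [μ.IsAddHaarMeasure] (hD : IsOpen D) (hf : DifferentiableOn ℝ f D) :
    ∀ᵐ x ∂μ.restrict D, f x = 0 → fderiv ℝ f x = 0 := by
  have hs : MeasurableSet (D ∩ f ⁻¹' {0}) := by
    have h : IsOpen (D ∩ f ⁻¹' {0}ᶜ) :=
      hf.continuousOn.isOpen_inter_preimage hD isOpen_compl_singleton
    convert hD.measurableSet.diff h.measurableSet using 1
    ext
    simp
  have hvanish (v : E) : ∀ᵐ x ∂μ.restrict (D ∩ f ⁻¹' {0}),
      ‖(fderiv ℝ f x).smulRight v - (0 : E →L[ℝ] E)‖₊ ≤ 0 := by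
    have happrox : ApproximatesLinearOn (fun x => f x • v) (0 : E →L[ℝ] E) (D ∩ f ⁻¹' {0}) 0 :=
      fun x hx y hy => by
        simp [show f x = 0 from hx.2, show f y = 0 from hy.2]
    exact happrox.norm_fderiv_sub_le μ hs _ fun x hx =>
      ((hf.differentiableAt (hD.mem_nhds hx.1)).hasFDerivAt.smul_const v).hasFDerivWithinAt
  rcases subsingleton_or_nontrivial E with hE | hE
  · exact Eventually.of_forall fun x _ => Subsingleton.elim _ _
  obtain ⟨v, hv⟩ := exists_ne (0 : E)
  rw [ae_restrict_iff' hD.measurableSet]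
  filter_upwards [(ae_restrict_iff' hs).1 (hvanish v)] with x hx hxD hfx
  have hzero := hx ⟨hxD, hfx⟩
  rw [sub_zero, nonpos_iff_eq_zero, nnnorm_eq_zero] at hzero
  ext w
  simpa [hv] using DFunLike.congr_fun hzero w

end Cutoffs

section ArctanClamp

/-- A bounded increasing reparametrization of the line whose slope is at least `1/2` on
`[-R, R]`. -/
def arctanClamp (R y : ℝ) : ℝ := R * Real.arctan (y / R)

variable {R : ℝ}

lemma hasDerivAt_arctanClamp (hR : 0 < R) (y : ℝ) :
    HasDerivAt (arctanClamp R) (1 + (y / R) ^ 2)⁻¹ y := by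
  refine (((hasDerivAt_id y).div_const R).arctan.const_mul R).congr_deriv ?_
  simp only [id]
  field_simp

lemma contDiff_arctanClamp (R : ℝ) : ContDiff ℝ 1 (arctanClamp R) :=
  contDiff_const.mul (Real.contDiff_arctan.comp (contDiff_id.div_const R))

lemma arctanClamp_eq_zero (hR : 0 < R) {y : ℝ} : arctanClamp R y = 0 ↔ y = 0 := by
  simp [arctanClamp, hR.ne']

lemma abs_arctanClamp_le (hR : 0 < R) (y : ℝ) : |arctanClamp R y| ≤ 2 * R := by
  rw [arctanClamp, abs_mul, abs_of_pos hR, mul_comm]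
  refine mul_le_mul_of_nonneg_right (abs_le.2 ⟨?_, ?_⟩) hR.le
  · linarith [Real.neg_pi_div_two_lt_arctan (y / R), Real.pi_le_four]
  · linarith [Real.arctan_lt_pi_div_two (y / R), Real.pi_le_four]

lemma abs_arctanClamp_le_abs (hR : 0 < R) (y : ℝ) : |arctanClamp R y| ≤ |y| := by
  have h := Convex.norm_image_sub_le_of_norm_hasDerivWithin_le (f := arctanClamp R) (C := 1)
    (fun t _ => (hasDerivAt_arctanClamp hR t).hasDerivWithinAt) (fun t _ => ?_) convex_univ
    (mem_univ 0) (mem_univ y)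
  · simpa [(arctanClamp_eq_zero hR).2 rfl] using h
  · rw [Real.norm_of_nonneg (by positivity)]
    exact inv_le_one_of_one_le₀ (by nlinarith [sq_nonneg (t / R)])

lemma tendsto_deriv_softThreshold_arctanClamp (hR : 0 < R) {y : ℝ} (hy : y ≠ 0) :
    Tendsto (fun ε => deriv (softThreshold ε ∘ arctanClamp R) y) (𝓝[>] 0)
      (𝓝 (1 + (y / R) ^ 2)⁻¹) := by
  have h := (tendsto_smoothTransition_div (abs_pos.2 (mt (arctanClamp_eq_zero hR).1 hy))).mul_const
    (1 + (y / R) ^ 2)⁻¹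
  simpa only [((hasDerivAt_softThreshold _ (arctanClamp R y)).comp y
    (hasDerivAt_arctanClamp hR y)).deriv, one_mul] using h

end ArctanClamp

section AreaGrowth

/-- The squared distance from the origin to the point of the graph of `u` above `x`. -/
def graphDistSq (u : ℝ × ℝ → ℝ) (x : ℝ × ℝ) : ℝ := dot x x + u x ^ 2

variable {D : Set (ℝ × ℝ)} {u p q : ℝ × ℝ → ℝ} {H : ℝ}

lemma volume_real_inter_closedBall_le (D : Set (ℝ × ℝ)) {R : ℝ} (hR : 0 ≤ R) :
    volume.real (D ∩ closedBall 0 R) ≤ 4 * R ^ 2 := by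
  refine (measureReal_mono inter_subset_right measure_closedBall_lt_top.ne).trans_eq ?_
  rw [show (0 : ℝ × ℝ) = (0, 0) from rfl, ← closedBall_prod_same, Measure.volume_eq_prod,
    measureReal_prod_prod, Real.volume_real_closedBall hR]
  ring

lemma graphDistSq_nonneg (u : ℝ × ℝ → ℝ) (x : ℝ × ℝ) : 0 ≤ graphDistSq u x :=
  add_nonneg (dot_self_nonneg x) (sq_nonneg _)

lemma norm_le_of_graphDistSq_le {x : ℝ × ℝ} {R : ℝ} (hR : 0 ≤ R) (hx : graphDistSq u x ≤ R ^ 2) :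
    ‖x‖ ≤ R := by
  simp only [graphDistSq, dot] at hx
  refine norm_prod_le_iff.2 ⟨abs_le_of_sq_le_sq ?_ hR, abs_le_of_sq_le_sq ?_ hR⟩
  · nlinarith [sq_nonneg x.2, sq_nonneg (u x)]
  · nlinarith [sq_nonneg x.1, sq_nonneg (u x)]

lemma areaDensity_eq_add (ξ : ℝ × ℝ) :
    areaDensity ξ = (areaDensity ξ)⁻¹ + dot ξ ξ / areaDensity ξ := by
  have hW := areaDensity_pos ξ
  field_simp
  rw [areaDensity_sq]

lemma abs_dot_flux_le {L : ℝ × ℝ →L[ℝ] ℝ} {m : ℝ} (hL : ‖L‖ ≤ m) (ξ : ℝ × ℝ) :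
    |dot (ξ.1 / areaDensity ξ, ξ.2 / areaDensity ξ) (L (1, 0), L (0, 1))| ≤ 2 * m := by
  have hbound (e : ℝ × ℝ) (he : ‖e‖ = 1) : |L e| ≤ m := by
    simpa [he] using (L.le_opNorm e).trans (mul_le_mul_of_nonneg_right hL (norm_nonneg e))
  have hfst := mul_le_mul (abs_fst_div_areaDensity_le_one ξ) (hbound (1, 0) (by simp))
    (abs_nonneg _) zero_le_one
  have hsnd := mul_le_mul (abs_snd_div_areaDensity_le_one ξ) (hbound (0, 1) (by simp))
    (abs_nonneg _) zero_le_one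
  rw [← abs_mul] at hfst hsnd
  exact (abs_add_le _ _).trans (by linarith)

namespace IsCapillaryGraph

lemma neg (C : IsCapillaryGraph D u p q H) :
    IsCapillaryGraph D (fun x => -u x) (fun x => -p x) (fun x => -q x) (-H) where
  toIsCMCGraph := C.toIsCMCGraph.neg
  isConnected := C.isConnected
  continuousOn := C.continuousOn.neg
  continuousOn_fst := C.continuousOn_fst.neg
  continuousOn_snd := C.continuousOn_snd.neg
  isConnected_frontier := C.isConnected_frontier
  eq_zero_of_mem_frontier x hx := neg_eq_zero.2 (C.eq_zero_of_mem_frontier x hx)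
  exists_grad_sq_eq := by simpa only [neg_sq] using C.exists_grad_sq_eq
  add_vertical_mem := C.add_vertical_mem

lemma continuousOn_areaDensity (C : IsCapillaryGraph D u p q H) :
    ContinuousOn (fun x => areaDensity (p x, q x)) (closure D) :=
  _root_.continuousOn_areaDensity C.continuousOn_fst C.continuousOn_snd

lemma continuousOn_graphDistSq (C : IsCapillaryGraph D u p q H) :
    ContinuousOn (graphDistSq u) (closure D) := by
  have := C.continuousOn
  unfold graphDistSq dot
  fun_prop

lemma continuousOn_flux_fst (C : IsCapillaryGraph D u p q H) :
    ContinuousOn (fun x => p x / areaDensity (p x, q x)) (closure D) :=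
  C.continuousOn_fst.div C.continuousOn_areaDensity fun _ _ => (areaDensity_pos _).ne'

lemma continuousOn_flux_snd (C : IsCapillaryGraph D u p q H) :
    ContinuousOn (fun x => q x / areaDensity (p x, q x)) (closure D) :=
  C.continuousOn_snd.div C.continuousOn_areaDensity fun _ _ => (areaDensity_pos _).ne'

lemma continuousOn_grad_sq_div (C : IsCapillaryGraph D u p q H) :
    ContinuousOn (fun x => dot (p x, q x) (p x, q x) / areaDensity (p x, q x)) (closure D) :=
  ((C.continuousOn_fst.mul C.continuousOn_fst).add
    (C.continuousOn_snd.mul C.continuousOn_snd)).div C.continuousOn_areaDensity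
    fun _ _ => (areaDensity_pos _).ne'

lemma isC1TestOn_cutoff_mul_comp (C : IsCapillaryGraph D u p q H) {g : ℝ → ℝ} {χ : ℝ × ℝ → ℝ}
    {ε R : ℝ} (hε : 0 < ε) (hg : ContDiff ℝ 1 g) (hg0 : ∀ y, |y| ≤ ε → g y = 0)
    (hχ : ContDiff ℝ 1 χ) (hχ0 : ∀ x ∉ closedBall 0 R, χ x = 0) :
    IsC1TestOn D fun x => χ x * g (u x) := by
  refine isC1TestOn_of_notMem_frontier (R := R) C.isOpen
    (hχ.contDiffOn.mul (hg.comp_contDiffOn C.contDiffOn)) C.continuousOn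
    (isClosed_le continuous_const continuous_abs : IsClosed {y : ℝ | ε ≤ |y|}) (fun x hx h => ?_)
    fun x _ hne => ⟨?_, ?_⟩
  · rw [C.eq_zero_of_mem_frontier x hx, mem_ofPred_eq, abs_zero] at h
    exact hε.not_ge h
  · by_contra hR
    exact hne (mul_eq_zero_of_left (hχ0 x (mt mem_closedBall_zero_iff.1 hR)) _)
  · by_contra hlt
    exact hne (mul_eq_zero_of_right _ (hg0 _ (not_le.1 hlt).le))

lemma setIntegral_dot_flux_planeGrad_sub_eq_zero (C : IsCapillaryGraph D u p q H)
    {ψ : ℝ × ℝ → ℝ} (hψ : IsC1TestOn D ψ) :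
    ∫ x in D, (dot (p x / areaDensity (p x, q x), q x / areaDensity (p x, q x)) (planeGrad ψ x)
      - H * ψ x) = 0 := by
  refine (integral_sub ((hψ.integrableOn_mul_fderiv C.isOpen
    C.contDiffOn_flux_fst.continuousOn _).add (hψ.integrableOn_mul_fderiv C.isOpen
    C.contDiffOn_flux_snd.continuousOn _)) (hψ.integrableOn_mul C.isOpen
    continuousOn_const)).trans ?_
  rw [integral_const_mul, sub_eq_zero]
  exact C.setIntegral_dot_flux_planeGrad hψ

lemma setIntegral_cutoff_mul_eq (C : IsCapillaryGraph D u p q H) {g : ℝ → ℝ} {χ : ℝ × ℝ → ℝ}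
    {ε R : ℝ} (hε : 0 < ε) (hg : ContDiff ℝ 1 g) (hg0 : ∀ y, |y| ≤ ε → g y = 0)
    (hχ : ContDiff ℝ 1 χ) (hχ0 : ∀ x ∉ closedBall 0 R, χ x = 0) :
    ∫ x in D ∩ closedBall 0 R,
        χ x * (deriv g (u x) * (dot (p x, q x) (p x, q x) / areaDensity (p x, q x)))
      = ∫ x in D ∩ closedBall 0 R, g (u x) * (H * χ x
        - dot (p x / areaDensity (p x, q x), q x / areaDensity (p x, q x)) (planeGrad χ x)) := by
  have hψ := C.isC1TestOn_cutoff_mul_comp hε hg hg0 hχ hχ0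
  have hS : MeasurableSet (D ∩ closedBall (0 : ℝ × ℝ) R) :=
    C.isOpen.measurableSet.inter measurableSet_closedBall
  have hchain (x : ℝ × ℝ) (hx : x ∈ D) : planeGrad (fun x => χ x * g (u x)) x
      = χ x • (deriv g (u x) • (p x, q x)) + g (u x) • planeGrad χ x :=
    ((hasPlaneGradAt_of_differentiableAt (hχ.differentiable one_ne_zero x)).mul
      (HasPlaneGradAt.comp (hg.differentiable one_ne_zero (u x)).hasDerivAt
        (C.hasPlaneGradAt x hx))).planeGrad
  have hweak := C.setIntegral_dot_flux_planeGrad_sub_eq_zero hψ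
  have hdχ (v : ℝ × ℝ) : ContinuousOn (fun x => fderiv ℝ χ x v) (closure D) :=
    ((hχ.continuous_fderiv one_ne_zero).clm_apply continuous_const).continuousOn
  have hlhs : IntegrableOn (fun x => χ x * (deriv g (u x) *
      (dot (p x, q x) (p x, q x) / areaDensity (p x, q x)))) (D ∩ closedBall 0 R) :=
    integrableOn_inter_closedBall (hχ.continuous.continuousOn.mul
      (((hg.continuous_deriv le_rfl).comp_continuousOn C.continuousOn).mul
        C.continuousOn_grad_sq_div)) R
  have hrhs : IntegrableOn (fun x => g (u x) * (H * χ x - dot (p x / areaDensity (p x, q x),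
      q x / areaDensity (p x, q x)) (planeGrad χ x))) (D ∩ closedBall 0 R) :=
    integrableOn_inter_closedBall ((hg.continuous.comp_continuousOn C.continuousOn).mul
      ((continuousOn_const.mul hχ.continuous.continuousOn).sub
        ((C.continuousOn_flux_fst.mul (hdχ (1, 0))).add
          (C.continuousOn_flux_snd.mul (hdχ (0, 1)))))) R
  refine sub_eq_zero.1 ((integral_sub hlhs hrhs).symm.trans (Eq.trans ?_ hweak))
  refine (setIntegral_congr_fun hS fun x hx => ?_).trans
    (setIntegral_eq_of_subset_of_forall_sdiff_eq_zero C.isOpen.measurableSet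
      inter_subset_left ?_).symm
  · simp only [hchain x hx.1, dot, Prod.fst_add, Prod.snd_add, Prod.smul_fst, Prod.smul_snd,
      smul_eq_mul]
    ring
  · rintro x ⟨hxD, hxS⟩
    have hxR : x ∉ closedBall (0 : ℝ × ℝ) R := fun h => hxS ⟨hxD, h⟩
    have hχx : χ =ᶠ[𝓝 x] fun _ => 0 :=
      eventually_of_mem (isClosed_closedBall.isOpen_compl.mem_nhds hxR) hχ0
    rw [hchain x hxD]
    simp [hχ0 x hxR, planeGrad, dot, hχx.fderiv_eq]

lemma setIntegral_deriv_comp_mul_le (C : IsCapillaryGraph D u p q H) {g : ℝ → ℝ} {χ : ℝ × ℝ → ℝ}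
    {ε r R N m : ℝ} (hε : 0 < ε) (hg : ContDiff ℝ 1 g) (hg' : ∀ y, 0 ≤ deriv g y)
    (hg0 : ∀ y, |y| ≤ ε → g y = 0) (hgN : ∀ y, |g y| ≤ N)
    (hχ : ContDiff ℝ 1 χ) (hχI : ∀ x, 0 ≤ χ x ∧ χ x ≤ 1) (hχ1 : ∀ x ∈ closedBall 0 r, χ x = 1)
    (hχ0 : ∀ x ∉ closedBall 0 R, χ x = 0) (hχm : ∀ x, ‖fderiv ℝ χ x‖ ≤ m) (hrR : r ≤ R) :
    ∫ x in D ∩ closedBall 0 r,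
        deriv g (u x) * (dot (p x, q x) (p x, q x) / areaDensity (p x, q x))
      ≤ N * (|H| + 2 * m) * volume.real (D ∩ closedBall 0 R) := by
  have hmeas (R : ℝ) : MeasurableSet (D ∩ closedBall (0 : ℝ × ℝ) R) :=
    C.isOpen.measurableSet.inter measurableSet_closedBall
  have hcont : ContinuousOn (fun x => χ x *
      (deriv g (u x) * (dot (p x, q x) (p x, q x) / areaDensity (p x, q x)))) (closure D) :=
    hχ.continuous.continuousOn.mul (((hg.continuous_deriv le_rfl).comp_continuousOn
      C.continuousOn).mul C.continuousOn_grad_sq_div)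
  have hN : 0 ≤ N := (abs_nonneg _).trans (hgN 0)
  calc _ = ∫ x in D ∩ closedBall 0 r, χ x *
          (deriv g (u x) * (dot (p x, q x) (p x, q x) / areaDensity (p x, q x))) :=
        setIntegral_congr_fun (hmeas r) fun x hx => by simp only [hχ1 x hx.2, one_mul]
    _ ≤ ∫ x in D ∩ closedBall 0 R, χ x *
          (deriv g (u x) * (dot (p x, q x) (p x, q x) / areaDensity (p x, q x))) :=
        setIntegral_mono_set (integrableOn_inter_closedBall hcont R)
          (Eventually.of_forall fun x => mul_nonneg (hχI x).1 (mul_nonneg (hg' _)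
            (div_nonneg (dot_self_nonneg _) (areaDensity_pos _).le)))
          (inter_subset_inter_right D (closedBall_subset_closedBall hrR)).eventuallyLE
    _ = ∫ x in D ∩ closedBall 0 R, g (u x) * (H * χ x
          - dot (p x / areaDensity (p x, q x), q x / areaDensity (p x, q x)) (planeGrad χ x)) :=
        C.setIntegral_cutoff_mul_eq hε hg hg0 hχ hχ0
    _ ≤ N * (|H| + 2 * m) * volume.real (D ∩ closedBall 0 R) := by
        refine (Real.le_norm_self _).trans (norm_setIntegral_le_of_norm_le_const
          ((measure_mono inter_subset_right).trans_lt measure_closedBall_lt_top) fun x _ => ?_)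
        rw [norm_mul, Real.norm_eq_abs, Real.norm_eq_abs]
        refine mul_le_mul (hgN _) ((abs_sub _ _).trans (add_le_add ?_
          (abs_dot_flux_le (hχm x) (p x, q x)))) (abs_nonneg _) hN
        rw [abs_mul, abs_of_nonneg (hχI x).1]
        exact mul_le_of_le_one_right (abs_nonneg H) (hχI x).2

lemma ae_eq_zero_imp_grad_eq_zero (C : IsCapillaryGraph D u p q H) :
    ∀ᵐ x ∂volume.restrict D, u x = 0 → (p x, q x) = 0 := by
  filter_upwards [ae_restrict_fderiv_eq_zero_of_eq_zero volume C.isOpen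
    (C.contDiffOn.differentiableOn one_ne_zero), ae_restrict_mem C.isOpen.measurableSet]
    with x hx hxD hux
  rw [← (C.hasPlaneGradAt x hxD).planeGrad, planeGrad, hx hux]
  rfl

lemma tendsto_setIntegral_deriv_softThreshold (C : IsCapillaryGraph D u p q H) {R : ℝ}
    (hR : 0 < R) :
    Tendsto (fun ε => ∫ x in D ∩ closedBall 0 R, deriv (softThreshold ε ∘ arctanClamp R) (u x)
        * (dot (p x, q x) (p x, q x) / areaDensity (p x, q x))) (𝓝[>] 0)
      (𝓝 (∫ x in D ∩ closedBall 0 R, (1 + (u x / R) ^ 2)⁻¹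
        * (dot (p x, q x) (p x, q x) / areaDensity (p x, q x)))) := by
  have hG (x : ℝ × ℝ) : 0 ≤ dot (p x, q x) (p x, q x) / areaDensity (p x, q x) :=
    div_nonneg (dot_self_nonneg _) (areaDensity_pos _).le
  refine tendsto_integral_filter_of_dominated_convergence _ (Eventually.of_forall fun ε => ?_)
    (Eventually.of_forall fun ε => Eventually.of_forall fun x => ?_)
    (integrableOn_inter_closedBall C.continuousOn_grad_sq_div R) ?_
  · exact (integrableOn_inter_closedBall (((((contDiff_softThreshold ε).comp
      (contDiff_arctanClamp R)).continuous_deriv le_rfl).comp_continuousOn C.continuousOn).mul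
      C.continuousOn_grad_sq_div) R).aestronglyMeasurable
  · rw [((hasDerivAt_softThreshold ε _).comp _ (hasDerivAt_arctanClamp hR (u x))).deriv, norm_mul,
      Real.norm_of_nonneg (hG x), Real.norm_of_nonneg
        (mul_nonneg (Real.smoothTransition.nonneg _) (by positivity))]
    exact mul_le_of_le_one_left (hG x) (mul_le_one₀ (Real.smoothTransition.le_one _)
      (by positivity) (inv_le_one_of_one_le₀ (le_add_of_nonneg_right (sq_nonneg _))))
  · filter_upwards [ae_restrict_of_ae_restrict_of_subset inter_subset_left
      C.ae_eq_zero_imp_grad_eq_zero] with x hx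
    rcases eq_or_ne (u x) 0 with hu | hu
    · simp [dot_self_eq_zero.2 (hx hu)]
    · exact (tendsto_deriv_softThreshold_arctanClamp hR hu).mul_const _

lemma exists_setIntegral_inter_closedBall_le (C : IsCapillaryGraph D u p q H) :
    ∃ A, ∀ R, 1 ≤ R → ∫ x in D ∩ closedBall 0 R, (1 + (u x / R) ^ 2)⁻¹
      * (dot (p x, q x) (p x, q x) / areaDensity (p x, q x)) ≤ A * R ^ 2 := by
  obtain ⟨M, hM, hcutoff⟩ := exists_contDiff_cutoff_norm_fderiv_le (ℝ × ℝ)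
  refine ⟨64 * (1 + M), fun R hR => ?_⟩
  have hR0 : 0 < R := one_pos.trans_le hR
  obtain ⟨χ, hχ, hχI, hχ1, hχ0, hχm⟩ := hcutoff R hR0
  have hvol := volume_real_inter_closedBall_le D (R := 2 * R) (by positivity)
  have hbound : 2 * R * (|H| + 2 * (M / R)) * volume.real (D ∩ closedBall 0 (2 * R))
      ≤ 64 * (1 + M) * R ^ 2 := by
    have hH := C.abs_mul_volume_inter_closedBall_le (R := 2 * R) (by positivity)
    calc _ = 2 * R * (|H| * volume.real (D ∩ closedBall 0 (2 * R)))
            + 4 * M * volume.real (D ∩ closedBall 0 (2 * R)) := by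
          field_simp
          ring
      _ ≤ 2 * R * (16 * (2 * R)) + 4 * M * (4 * (2 * R) ^ 2) := by gcongr
      _ = 64 * (1 + M) * R ^ 2 := by ring
  have hderiv (ε y : ℝ) := (hasDerivAt_softThreshold ε (arctanClamp R y)).comp y
    (hasDerivAt_arctanClamp hR0 y)
  have hslope (y : ℝ) : 0 ≤ (1 + (y / R) ^ 2)⁻¹ := by positivity
  refine le_of_tendsto (C.tendsto_setIntegral_deriv_softThreshold hR0) ?_
  filter_upwards [self_mem_nhdsWithin] with ε hε
  refine (C.setIntegral_deriv_comp_mul_le (mem_Ioi.1 hε)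
    ((contDiff_softThreshold ε).comp (contDiff_arctanClamp R)) (fun y => ?_) (fun y hy => ?_)
    (fun y => (abs_softThreshold_le ε _).trans (abs_arctanClamp_le hR0 y)) hχ hχI hχ1 hχ0 hχm
    (by linarith)).trans hbound
  · rw [(hderiv ε y).deriv]
    exact mul_nonneg (Real.smoothTransition.nonneg _) (hslope y)
  · exact softThreshold_eq_zero hε ((abs_arctanClamp_le_abs hR0 y).trans hy)

lemma integrableOn_graphBall (C : IsCapillaryGraph D u p q H) {f : ℝ × ℝ → ℝ}
    (hf : ContinuousOn f (closure D)) (T : ℝ) :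
    IntegrableOn f {x | graphDistSq u x ≤ T} (volume.restrict D) := by
  rw [IntegrableOn, Measure.restrict_restrict' C.isOpen.measurableSet]
  refine (integrableOn_inter_closedBall hf √T).mono_set fun x ⟨hx, hxD⟩ =>
    ⟨hxD, mem_closedBall_zero_iff.2 (norm_le_of_graphDistSq_le (u := u) (Real.sqrt_nonneg T) ?_)⟩
  rwa [Real.sq_sqrt ((graphDistSq_nonneg u x).trans hx)]

lemma aemeasurable_graphDistSq (C : IsCapillaryGraph D u p q H) :
    AEMeasurable (graphDistSq u) (volume.restrict D) :=
  (C.continuousOn_graphDistSq.mono subset_closure).aemeasurable C.isOpen.measurableSet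

lemma areaDensity_le_of_graphDistSq_le {x : ℝ × ℝ} {R : ℝ} (hR : 0 < R) (ξ : ℝ × ℝ)
    (hx : graphDistSq u x ≤ R ^ 2) :
    areaDensity ξ ≤ 1 + 2 * ((1 + (u x / R) ^ 2)⁻¹ * (dot ξ ξ / areaDensity ξ)) := by
  have hslope : 1 ≤ 2 * (1 + (u x / R) ^ 2)⁻¹ := by
    have : (u x / R) ^ 2 ≤ 1 := by
      rw [div_pow, div_le_one (by positivity)]
      exact (le_add_of_nonneg_left (dot_self_nonneg x)).trans hx
    rw [← div_eq_mul_inv, one_le_div (by positivity)]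
    linarith
  have hG : 0 ≤ dot ξ ξ / areaDensity ξ := div_nonneg (dot_self_nonneg _) (areaDensity_pos _).le
  have hmul := mul_le_mul_of_nonneg_right hslope hG
  have hinv := inv_le_one_of_one_le₀ (one_le_areaDensity ξ)
  have hsplit := areaDensity_eq_add ξ
  linarith

lemma measurableSet_graphBall_inter (C : IsCapillaryGraph D u p q H) (T : ℝ) :
    MeasurableSet ({x | graphDistSq u x ≤ T} ∩ D) := by
  have h : IsOpen (D ∩ graphDistSq u ⁻¹' Ioi T) :=
    (C.continuousOn_graphDistSq.mono subset_closure).isOpen_inter_preimage C.isOpen isOpen_Ioi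
  convert C.isOpen.measurableSet.diff h.measurableSet using 1
  ext
  simp [and_comm]

lemma exists_setIntegral_areaDensity_le (C : IsCapillaryGraph D u p q H) :
    ∃ A, ∀ T, 1 ≤ T → ∫ x in {x | graphDistSq u x ≤ T}, areaDensity (p x, q x) ∂(volume.restrict D)
      ≤ A * T := by
  obtain ⟨A, hA⟩ := C.exists_setIntegral_inter_closedBall_le
  refine ⟨4 + 2 * A, fun T hT => ?_⟩
  set R := √T
  have hR : 1 ≤ R := Real.one_le_sqrt.2 hT
  have hR0 : 0 < R := one_pos.trans_le hR
  have hTR : T = R ^ 2 := (Real.sq_sqrt (by linarith)).symm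
  have hG : ContinuousOn (fun x => (1 + (u x / R) ^ 2)⁻¹
      * (dot (p x, q x) (p x, q x) / areaDensity (p x, q x))) (closure D) :=
    ((continuousOn_const.add ((C.continuousOn.div_const R).pow 2)).inv₀
      fun x _ => (add_pos_of_pos_of_nonneg one_pos (sq_nonneg _)).ne').mul
        C.continuousOn_grad_sq_div
  have hone : IntegrableOn (fun _ => (1 : ℝ)) (D ∩ closedBall (0 : ℝ × ℝ) R) :=
    integrableOn_inter_closedBall continuousOn_const R
  have hGint := (integrableOn_inter_closedBall (μ := volume) hG R).const_mul 2
  have hvol := volume_real_inter_closedBall_le D hR0.le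
  have hsub : {x | graphDistSq u x ≤ T} ∩ D ⊆ D ∩ closedBall 0 R := fun x ⟨hx, hxD⟩ =>
    ⟨hxD, mem_closedBall_zero_iff.2 (norm_le_of_graphDistSq_le hR0.le (hTR ▸ hx))⟩
  rw [Measure.restrict_restrict' C.isOpen.measurableSet]
  calc ∫ x in {x | graphDistSq u x ≤ T} ∩ D, areaDensity (p x, q x)
      ≤ ∫ x in {x | graphDistSq u x ≤ T} ∩ D, (1 + 2 * ((1 + (u x / R) ^ 2)⁻¹
          * (dot (p x, q x) (p x, q x) / areaDensity (p x, q x)))) :=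
        setIntegral_mono_on
          ((integrableOn_inter_closedBall C.continuousOn_areaDensity R).mono_set hsub)
          ((hone.add hGint).mono_set hsub) (C.measurableSet_graphBall_inter T)
          fun x hx => areaDensity_le_of_graphDistSq_le hR0 _ (hTR ▸ hx.1)
    _ ≤ ∫ x in D ∩ closedBall 0 R, (1 + 2 * ((1 + (u x / R) ^ 2)⁻¹
          * (dot (p x, q x) (p x, q x) / areaDensity (p x, q x)))) :=
        setIntegral_mono_set (hone.add hGint) (Eventually.of_forall fun x =>
          add_nonneg zero_le_one (mul_nonneg zero_le_two (mul_nonneg (by positivity)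
            (div_nonneg (dot_self_nonneg _) (areaDensity_pos _).le)))) hsub.eventuallyLE
    _ ≤ (4 + 2 * A) * T := by
        rw [integral_add hone hGint, integral_const_mul, setIntegral_const, smul_eq_mul, mul_one,
          hTR]
        linarith [hA R hR]

end IsCapillaryGraph

end AreaGrowth

/-! ### Sign of the vertical derivative -/

section Constancy

variable {E : Type*} [NormedAddCommGroup E] [NormedSpace ℝ E] {D : Set E} {f : E → ℝ} {T : Set ℝ}

lemma eq_of_hasFDerivAt_zero_of_mem {x₀ : E} (hD : IsOpen D) (hDc : IsPreconnected D)
    (hf : ContinuousOn f D) (hT : IsOpen T)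
    (h0 : ∀ x ∈ D, f x ∈ T → HasFDerivAt f (0 : E →L[ℝ] ℝ) x) (hx₀ : x₀ ∈ D) (hfx₀ : f x₀ ∈ T)
    {x : E} (hx : x ∈ D) : f x = f x₀ := by
  have hU : IsOpen (D ∩ f ⁻¹' T ∩ f ⁻¹' {f x₀}) :=
    (hf.isOpen_inter_preimage hD hT).isOpen_inter_preimage_of_fderiv_eq_zero
      (fun y hy => (h0 y hy.1 hy.2).differentiableAt.differentiableWithinAt)
      (fun y hy => (h0 y hy.1 hy.2).fderiv) _
  have hV : IsOpen (D ∩ f ⁻¹' {f x₀}ᶜ) := hf.isOpen_inter_preimage hD isOpen_compl_singleton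
  have hcover : D ⊆ D ∩ f ⁻¹' T ∩ f ⁻¹' {f x₀} ∪ D ∩ f ⁻¹' {f x₀}ᶜ := fun y hy => by
    by_cases hy' : f y = f x₀
    · exact Or.inl ⟨⟨hy, by rwa [mem_preimage, hy']⟩, hy'⟩
    · exact Or.inr ⟨hy, hy'⟩
  by_contra hne
  obtain ⟨y, -, hyU, hyV⟩ := hDc _ _ hU hV hcover ⟨x₀, hx₀, ⟨hx₀, hfx₀⟩, rfl⟩ ⟨x, hx, hx, hne⟩
  exact hyV.2 hyU.2

lemma notMem_of_hasFDerivAt_zero_of_frontier (hD : IsOpen D) (hDc : IsPreconnected D)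
    (hfr : (frontier D).Nonempty) (hf : ContinuousOn f (closure D)) (hT : IsOpen T)
    (h0 : ∀ x ∈ D, f x ∈ T → HasFDerivAt f (0 : E →L[ℝ] ℝ) x)
    (hT' : ∀ z ∈ frontier D, f z ∉ T) {x : E} (hx : x ∈ D) : f x ∉ T := by
  intro hfx
  obtain ⟨z, hz⟩ := hfr
  have hconst : EqOn f (fun _ => f x) (closure D) := EqOn.of_subset_closure
    (fun y hy => eq_of_hasFDerivAt_zero_of_mem hD hDc (hf.mono subset_closure) hT h0 hx hfx hy)
    hf continuousOn_const subset_closure subset_rfl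
  exact hT' z hz (hconst (frontier_subset_closure hz) ▸ hfx)

end Constancy

section Caccioppoli

variable {D : Set (ℝ × ℝ)} {u p q : ℝ × ℝ → ℝ} {H : ℝ} {Φ : ℝ → ℝ}

lemma integrableOn_of_eq_zero_off_closedBall {E : Type*} [NormedAddCommGroup E] [ProperSpace E]
    [MeasurableSpace E] [BorelSpace E] {μ : Measure E} [IsFiniteMeasureOnCompacts μ] {D : Set E}
    {f : E → ℝ} {R : ℝ} (hD : MeasurableSet D) (hf : ContinuousOn f (closure D))
    (h0 : ∀ x, R < ‖x‖ → f x = 0) : IntegrableOn f D μ := by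
  have h : IntegrableOn f (closure D ∩ closedBall 0 R) μ :=
    (hf.mono inter_subset_left).integrableOn_compact
      ((isCompact_closedBall 0 R).inter_left isClosed_closure)
  refine IntegrableOn.of_forall_sdiff_eq_zero h hD fun x hx => h0 x (not_le.1 fun hR => ?_)
  exact hx.2 ⟨subset_closure hx.1, mem_closedBall_zero_iff.2 hR⟩

/-- Young's inequality, in the form that absorbs a mixed energy term. -/
lemma two_mul_mul_le_of_sq_le {φ s s' m a b c : ℝ} (hs' : 0 ≤ s') (hs : s ^ 2 ≤ m ^ 2 * s')
    (ha : 0 ≤ a) (hb : 0 ≤ b) (hc : c ^ 2 ≤ a * b) :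
    2 * (φ * s * c) ≤ φ ^ 2 * s' * a / 2 + 2 * (m ^ 2 * b) := by
  have hsq : (φ * s * c) ^ 2 ≤ φ ^ 2 * s' * a * (m ^ 2 * b) := by
    calc (φ * s * c) ^ 2 = φ ^ 2 * (s ^ 2 * c ^ 2) := by ring
      _ ≤ φ ^ 2 * (m ^ 2 * s' * (a * b)) := by gcongr
      _ = φ ^ 2 * s' * a * (m ^ 2 * b) := by ring
  have hle : φ * s * c ≤ φ ^ 2 * s' * a / 4 + m ^ 2 * b :=
    abs_le_of_sq_le_sq' (by nlinarith [sq_nonneg (φ ^ 2 * s' * a / 4 - m ^ 2 * b)])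
      (by positivity) |>.2
  linarith

lemma IsCutoff.exists_eq_zero_of_lt_norm (hΦ : IsCutoff Φ) (u : ℝ × ℝ → ℝ) :
    ∃ R, ∀ x, R < ‖x‖ → Φ (graphDistSq u x) = 0 ∧ deriv Φ (graphDistSq u x) = 0 := by
  obtain ⟨R₁, hR₁⟩ := hΦ.2
  obtain ⟨R₂, hR₂⟩ := hΦ.exists_deriv_eq_zero
  set R := √(max 0 (max R₁ R₂))
  have hfar (x : ℝ × ℝ) (hx : R < ‖x‖) : max R₁ R₂ < graphDistSq u x := by
    by_contra! h
    refine hx.not_ge (norm_le_of_graphDistSq_le (u := u) (Real.sqrt_nonneg _) ?_)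
    rw [Real.sq_sqrt (le_max_left _ _)]
    exact h.trans (le_max_right _ _)
  exact ⟨R, fun x hx => ⟨hR₁ _ ((le_max_left _ _).trans (hfar x hx).le),
    hR₂ _ ((le_max_right _ _).trans_lt (hfar x hx))⟩⟩

namespace IsCapillaryGraph

lemma hasPlaneGradAt_graphDistSq (C : IsCapillaryGraph D u p q H) {x : ℝ × ℝ} (hx : x ∈ D) :
    HasPlaneGradAt (graphDistSq u) ((2 : ℝ) • (x + u x • (p x, q x))) x := by
  have hu := C.hasPlaneGradAt x hx
  refine HasPlaneGradAt.congr_grad (((hasPlaneGradAt_fst.mul hasPlaneGradAt_fst).add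
    (hasPlaneGradAt_snd.mul hasPlaneGradAt_snd)).add
      (HasPlaneGradAt.comp (hasDerivAt_pow 2 (u x)) hu)) ?_
  ext <;> simp <;> ring

lemma hasPlaneGradAt_cutoff (C : IsCapillaryGraph D u p q H) (hΦ : IsCutoff Φ) {x : ℝ × ℝ}
    (hx : x ∈ D) : HasPlaneGradAt (fun y => Φ (graphDistSq u y))
      (deriv Φ (graphDistSq u x) • (2 : ℝ) • (x + u x • (p x, q x))) x :=
  HasPlaneGradAt.comp (hΦ.1.differentiable one_ne_zero _).hasDerivAt
    (C.hasPlaneGradAt_graphDistSq hx)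

lemma contDiffOn_cutoff (C : IsCapillaryGraph D u p q H) (hΦ : IsCutoff Φ) :
    ContDiffOn ℝ 1 (fun x => Φ (graphDistSq u x)) D := by
  have hu := C.contDiffOn
  refine hΦ.1.comp_contDiffOn ?_
  unfold graphDistSq dot
  fun_prop

lemma areaHess_planeGrad_cutoff_mul_le (C : IsCapillaryGraph D u p q H) (hΦ : IsCutoff Φ)
    {x : ℝ × ℝ} (hx : x ∈ D) :
    areaHess (p x, q x) (planeGrad (fun y => Φ (graphDistSq u y)) x)
        (planeGrad (fun y => Φ (graphDistSq u y)) x) * areaDensity (p x, q x) ^ 2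
      ≤ 4 * (areaDensity (p x, q x) * deriv Φ (graphDistSq u x) ^ 2 * graphDistSq u x) := by
  have hW := (areaDensity_pos (p x, q x)).le
  rw [(C.hasPlaneGradAt_cutoff hΦ hx).planeGrad, areaHess_smul_smul]
  calc _ = areaDensity (p x, q x) * deriv Φ (graphDistSq u x) ^ 2 *
        (areaHess (p x, q x) ((2 : ℝ) • (x + u x • (p x, q x))) ((2 : ℝ) • (x + u x • (p x, q x)))
          * areaDensity (p x, q x)) := by ring
    _ ≤ areaDensity (p x, q x) * deriv Φ (graphDistSq u x) ^ 2 * (4 * graphDistSq u x) :=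
        mul_le_mul_of_nonneg_left (areaHess_grad_sq_dist_le _ _ _) (by positivity)
    _ = _ := by ring

lemma isC1TestOn_cutoff_sq_mul (C : IsCapillaryGraph D u p q H) (hΦ : IsCutoff Φ)
    {f : ℝ × ℝ → ℝ} {g : ℝ → ℝ} {T : Set ℝ} (hf : ContDiffOn ℝ 1 f D)
    (hfc : ContinuousOn f (closure D)) (hg : ContDiff ℝ 1 g) (hT : IsClosed T)
    (hg0 : ∀ y ∉ T, g y = 0) (hfr : ∀ x ∈ frontier D, f x ∉ T) :
    IsC1TestOn D fun x => Φ (graphDistSq u x) ^ 2 * g (f x) := by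
  obtain ⟨R, hR⟩ := hΦ.exists_eq_zero_of_lt_norm u
  refine isC1TestOn_of_notMem_frontier (R := R) C.isOpen
    (((C.contDiffOn_cutoff hΦ).pow 2).mul (hg.comp_contDiffOn hf)) hfc hT hfr
    fun x _ hne => ⟨not_lt.1 fun hlt => ?_, not_not.1 fun hxT => ?_⟩
  · exact hne (by rw [(hR x hlt).1, zero_pow two_ne_zero, zero_mul])
  · exact hne (mul_eq_zero_of_right _ (hg0 _ hxT))

lemma integrableOn_cutoff_energy (C : IsCapillaryGraph D u p q H) (hΦ : IsCutoff Φ) :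
    IntegrableOn (fun x => areaDensity (p x, q x) * deriv Φ (graphDistSq u x) ^ 2
      * graphDistSq u x) D := by
  obtain ⟨R, hR⟩ := hΦ.exists_eq_zero_of_lt_norm u
  refine integrableOn_of_eq_zero_off_closedBall (R := R) C.isOpen.measurableSet
    ((C.continuousOn_areaDensity.mul (((hΦ.1.continuous_deriv le_rfl).comp_continuousOn
      C.continuousOn_graphDistSq).pow 2)).mul C.continuousOn_graphDistSq) fun x hx => ?_
  simp [(hR x hx).2]

lemma eqOn_zero_of_caccioppoli (C : IsCapillaryGraph D u p q H) {h : ℝ × ℝ → ℝ} {B : ℝ}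
    (hh : ContinuousOn h D) (hnonneg : ∀ x ∈ D, 0 ≤ h x)
    (hcut : ∀ Φ, IsCutoff Φ → IntegrableOn (fun x => Φ (graphDistSq u x) ^ 2 * h x) D ∧
      ∫ x in D, Φ (graphDistSq u x) ^ 2 * h x ≤ B * ∫ x in D, areaDensity (p x, q x)
        * deriv Φ (graphDistSq u x) ^ 2 * graphDistSq u x) : EqOn h 0 D := by
  obtain ⟨A, hA⟩ := C.exists_setIntegral_areaDensity_le
  exact _root_.eqOn_zero_of_caccioppoli C.isOpen (fun x => (areaDensity_pos (p x, q x)).le)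
    (graphDistSq_nonneg u) C.aemeasurable_graphDistSq
    (C.integrableOn_graphBall C.continuousOn_areaDensity) hA hh hnonneg hcut

end IsCapillaryGraph

end Caccioppoli

section VerticalDerivative

variable {D : Set (ℝ × ℝ)} {u p q : ℝ × ℝ → ℝ} {H : ℝ} {Φ : ℝ → ℝ}

namespace IsCMCGraph

lemma continuousOn_areaHess (C : IsCMCGraph D u p q H) {a b : ℝ × ℝ → ℝ × ℝ}
    (ha : ContinuousOn a D) (hb : ContinuousOn b D) :
    ContinuousOn (fun x => areaHess (p x, q x) (a x) (b x)) D := by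
  have hp := C.contDiffOn_fst.continuousOn
  have hq := C.contDiffOn_snd.continuousOn
  unfold areaHess dot wedge
  exact ContinuousOn.div (by fun_prop) (C.continuousOn_areaDensity.pow 3)
    fun x _ => (pow_pos (areaDensity_pos _) 3).ne'

lemma continuousOn_planeGrad (C : IsCMCGraph D u p q H) {f : ℝ × ℝ → ℝ}
    (hf : ContDiffOn ℝ 1 f D) : ContinuousOn (planeGrad f) D :=
  (continuousOn_fderiv_apply C.isOpen hf _).prodMk (continuousOn_fderiv_apply C.isOpen hf _)

lemma integrableOn_areaHess_planeGrad (C : IsCMCGraph D u p q H) {a : ℝ × ℝ → ℝ × ℝ}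
    {ψ : ℝ × ℝ → ℝ} (ha : ContinuousOn a D) (hψ : IsC1TestOn D ψ) :
    IntegrableOn (fun x => areaHess (p x, q x) (a x) (planeGrad ψ x)) D := by
  have hcoeff (e : ℝ × ℝ) := C.continuousOn_areaHess ha (continuousOn_const (c := e))
  refine ((hψ.integrableOn_mul_fderiv C.isOpen (hcoeff (1, 0)) (1, 0)).add
    (hψ.integrableOn_mul_fderiv C.isOpen (hcoeff (0, 1)) (0, 1))).congr_fun (fun x _ => ?_)
    C.isOpen.measurableSet
  simp only [Pi.add_apply, areaHess, dot, wedge, planeGrad]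
  ring

end IsCMCGraph

namespace IsCapillaryGraph

/- The equation for `q`, tested with `φ² softPos(-q)`, gives the Caccioppoli inequality. -/
lemma cutoff_sq_mul_areaHess_le (C : IsCapillaryGraph D u p q H) (hΦ : IsCutoff Φ) {ε : ℝ}
    (hε : 0 < ε) {x : ℝ × ℝ} (hx : x ∈ D) :
    Φ (graphDistSq u x) ^ 2 * (1 / 2 * (Real.smoothTransition (-q x / ε - 1)
        * areaHess (p x, q x) (planeGrad q x) (planeGrad q x)))
      ≤ -areaHess (p x, q x) (planeGrad q x)
          (planeGrad (fun y => Φ (graphDistSq u y) ^ 2 * softPos ε (-q y)) x)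
        + 8 * (areaDensity (p x, q x) * deriv Φ (graphDistSq u x) ^ 2 * graphDistSq u x) := by
  set φ := fun y => Φ (graphDistSq u y)
  have hφ : HasPlaneGradAt φ (planeGrad φ x) x :=
    hasPlaneGradAt_of_contDiffOn C.isOpen (C.contDiffOn_cutoff hΦ) hx
  have hψ := (HasPlaneGradAt.comp (hasDerivAt_pow 2 (φ x)) hφ).mul
    (HasPlaneGradAt.comp (f := q) (φ := fun y => softPos ε (-y))
      ((hasDerivAt_softPos ε (-q x)).comp (q x) (hasDerivAt_neg (q x))) (C.hasPlaneGradAt_snd hx))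
  have hbilin : areaHess (p x, q x) (planeGrad q x)
        (planeGrad (fun y => φ y ^ 2 * softPos ε (-q y)) x)
      = 2 * (φ x * softPos ε (-q x) * areaHess (p x, q x) (planeGrad q x) (planeGrad φ x))
        - φ x ^ 2 * Real.smoothTransition (-q x / ε - 1)
          * areaHess (p x, q x) (planeGrad q x) (planeGrad q x) := by
    rw [show planeGrad (fun y => φ y ^ 2 * softPos ε (-q y)) x = _ from hψ.planeGrad]
    simp [areaHess, dot, wedge]
    ring
  have hq : (-q x) ^ 2 ≤ areaDensity (p x, q x) ^ 2 := by
    rw [neg_sq, areaDensity_sq, dot]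
    nlinarith [sq_nonneg (p x)]
  have hb := areaHess_self_nonneg (p x, q x) (planeGrad φ x)
  have hyoung := two_mul_mul_le_of_sq_le (φ := φ x) (Real.smoothTransition.nonneg _)
    (softPos_sq_le hε (-q x)) (areaHess_self_nonneg (p x, q x) (planeGrad q x)) hb
    (areaHess_sq_le _ _ _)
  have henergy := C.areaHess_planeGrad_cutoff_mul_le hΦ hx
  have hmono := mul_le_mul_of_nonneg_right hq hb
  rw [hbilin]
  linarith

lemma areaHess_planeGrad_snd_eq_zero (C : IsCapillaryGraph D u p q H)
    (hq : ∀ x ∈ frontier D, 0 ≤ q x) {ε : ℝ} (hε : 0 < ε) :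
    EqOn (fun x => 1 / 2 * (Real.smoothTransition (-q x / ε - 1)
      * areaHess (p x, q x) (planeGrad q x) (planeGrad q x))) 0 D := by
  have hgrad := C.continuousOn_planeGrad C.contDiffOn_snd
  have hhess := C.continuousOn_areaHess hgrad hgrad
  have hσ : ContDiff ℝ 1 fun y : ℝ => Real.smoothTransition (-y / ε - 1) :=
    Real.smoothTransition.contDiff.comp (by fun_prop)
  have hclosed : IsClosed (Iic (-ε)) := isClosed_Iic
  have hfr : ∀ x ∈ frontier D, q x ∉ Iic (-ε) := fun x hx h => by
    linarith [hq x hx, mem_Iic.1 h]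
  refine C.eqOn_zero_of_caccioppoli (B := 8) (continuousOn_const.mul
    ((hσ.continuous.comp_continuousOn C.contDiffOn_snd.continuousOn).mul hhess))
    (fun x _ => mul_nonneg (by norm_num) (mul_nonneg (Real.smoothTransition.nonneg _)
      (areaHess_self_nonneg _ _))) fun Φ hΦ => ?_
  have hψ := C.isC1TestOn_cutoff_sq_mul (g := fun y => softPos ε (-y)) hΦ C.contDiffOn_snd
    C.continuousOn_snd ((contDiff_softPos ε).comp contDiff_neg) hclosed
    (fun y hy => softPos_eq_zero hε (by linarith [notMem_Iic.1 hy])) hfr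
  have hσψ := C.isC1TestOn_cutoff_sq_mul hΦ C.contDiffOn_snd C.continuousOn_snd hσ hclosed
    (fun y hy => smoothTransition_div_eq_zero hε (by linarith [notMem_Iic.1 hy])) hfr
  have hInt := (hσψ.integrableOn_mul (μ := volume) C.isOpen (hhess.const_mul (1 / 2))).congr_fun
    (g := fun x => Φ (graphDistSq u x) ^ 2 * (1 / 2 * (Real.smoothTransition (-q x / ε - 1)
      * areaHess (p x, q x) (planeGrad q x) (planeGrad q x)))) (fun x _ => by ring)
    C.isOpen.measurableSet
  have hneg := (C.integrableOn_areaHess_planeGrad hgrad hψ).neg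
  have henergy := (C.integrableOn_cutoff_energy hΦ).const_mul 8
  refine ⟨hInt, (setIntegral_mono_on hInt (hneg.add henergy) C.isOpen.measurableSet
    fun x hx => C.cutoff_sq_mul_areaHess_le hΦ hε hx).trans_eq ?_⟩
  refine (integral_add hneg henergy).trans ?_
  rw [integral_const_mul]
  simp only [Pi.neg_apply]
  rw [integral_neg, C.setIntegral_areaHess_planeGrad_eq_zero hψ, neg_zero, zero_add]

lemma snd_nonneg (C : IsCapillaryGraph D u p q H) (hq : ∀ x ∈ frontier D, 0 ≤ q x) {x : ℝ × ℝ}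
    (hx : x ∈ D) : 0 ≤ q x := by
  refine not_lt.1 (notMem_of_hasFDerivAt_zero_of_frontier (T := Iio 0) C.isOpen
    C.isConnected.isPreconnected C.isConnected_frontier.nonempty C.continuousOn_snd isOpen_Iio
    (fun y hy hqy => ?_) (fun z hz => not_lt.2 (hq z hz)) hx)
  have hε : 0 < -q y / 2 := by linarith [mem_Iio.1 hqy]
  have hzero := C.areaHess_planeGrad_snd_eq_zero hq hε hy
  have hσ : Real.smoothTransition (-q y / (-q y / 2) - 1) = 1 := by
    refine Real.smoothTransition.one_of_one_le ?_
    rw [div_div_cancel₀ (by linarith)]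
    norm_num
  simp only [hσ, Pi.zero_apply, one_mul, mul_eq_zero, areaHess_self_eq_zero] at hzero
  exact hasPlaneGradAt_zero_iff.1
    ((C.hasPlaneGradAt_snd hy).congr_grad (hzero.resolve_left (by norm_num)))

end IsCapillaryGraph

end VerticalDerivative

/-! ### The P-function and the angle of the gradient -/

section PFunction

variable {D : Set (ℝ × ℝ)} {u p q : ℝ × ℝ → ℝ} {H : ℝ} {Φ κ : ℝ → ℝ}

/-- The P-function `H u - 1 / √(1 + |∇u|²)` of a graph of mean curvature `-H`. -/
def pFunction (u p q : ℝ × ℝ → ℝ) (H : ℝ) (x : ℝ × ℝ) : ℝ :=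
  H * u x - (areaDensity (p x, q x))⁻¹

/-- `|ξ|²` times the gradient of the angle between `ξ = (p, q)` and the second axis. -/
def angleField (p q : ℝ × ℝ → ℝ) (x : ℝ × ℝ) : ℝ × ℝ := q x • planeGrad p x - p x • planeGrad q x

lemma hasPlaneGradAt_arctan_div {x a b : ℝ × ℝ} (hp : HasPlaneGradAt p a x)
    (hq : HasPlaneGradAt q b x) (hqx : q x ≠ 0) :
    HasPlaneGradAt (fun y => Real.arctan (p y / q y))
      ((q x ^ 2 + p x ^ 2)⁻¹ • (q x • a - p x • b)) x := by
  have hdiv : HasPlaneGradAt (fun y => p y / q y) _ x :=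
    hp.mul (HasPlaneGradAt.comp (hasDerivAt_inv hqx) hq)
  refine (HasPlaneGradAt.comp (f := fun y => p y / q y)
    (Real.hasDerivAt_arctan (p x / q x)) hdiv).congr_grad ?_
  ext <;> simp <;> field_simp <;> ring

namespace IsCMCGraph

lemma contDiffOn_pFunction (C : IsCMCGraph D u p q H) : ContDiffOn ℝ 1 (pFunction u p q H) D :=
  (contDiffOn_const.mul C.contDiffOn).sub
    ((contDiffOn_areaDensity C.contDiffOn_fst C.contDiffOn_snd).inv
      fun _ _ => (areaDensity_pos _).ne')

lemma hasPlaneGradAt_pFunction (C : IsCMCGraph D u p q H) {x : ℝ × ℝ} (hx : x ∈ D) :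
    HasPlaneGradAt (pFunction u p q H) (H • (p x, q x)
      + (areaDensity (p x, q x) ^ 3)⁻¹ • (p x • planeGrad p x + q x • planeGrad q x)) x := by
  refine (((C.hasPlaneGradAt x hx).const_mul H).sub (hasPlaneGradAt_inv_areaDensity
    (C.hasPlaneGradAt_fst hx) (C.hasPlaneGradAt_snd hx))).congr_grad ?_
  rw [sub_neg_eq_add]

lemma nondivergence_form (C : IsCMCGraph D u p q H) {x : ℝ × ℝ} (hx : x ∈ D) :
    (1 + q x ^ 2) * (planeGrad p x).1 - p x * q x * ((planeGrad p x).2 + (planeGrad q x).1)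
      + (1 + p x ^ 2) * (planeGrad q x).2 = -H * areaDensity (p x, q x) ^ 3 := by
  have hp := C.hasPlaneGradAt_fst hx
  have hq := C.hasPlaneGradAt_snd hx
  have hW := (areaDensity_pos (p x, q x)).ne'
  have hdiv := C.div_flux x hx
  rw [(hasPlaneGradAt_flux_fst hp hq).fderiv_apply,
    (hasPlaneGradAt_flux_snd hp hq).fderiv_apply] at hdiv
  rw [← hdiv]
  simp only [dot, Prod.smul_fst, Prod.smul_snd, Prod.fst_sub, Prod.snd_sub, smul_eq_mul]
  field_simp
  ring

lemma wedge_planeGrad_pFunction (C : IsCMCGraph D u p q H) {x : ℝ × ℝ} (hx : x ∈ D)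
    (a : ℝ × ℝ) : wedge (planeGrad (pFunction u p q H) x) a
      = areaHess (p x, q x) (angleField p q x) a := by
  have hW := (areaDensity_pos (p x, q x)).ne'
  have heq := C.nondivergence_form hx
  have hsymm := C.planeGrad_fst_snd hx
  rw [(C.hasPlaneGradAt_pFunction hx).planeGrad, areaHess, angleField,
    eq_div_iff (pow_ne_zero 3 hW)]
  simp only [wedge, dot, Prod.smul_fst, Prod.smul_snd, Prod.fst_sub, Prod.snd_sub, Prod.fst_add,
    Prod.snd_add, smul_eq_mul]
  field_simp
  rw [hsymm] at heq ⊢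
  linear_combination (p x * a.2 - q x * a.1) * heq

lemma setIntegral_areaHess_angleField_eq_zero (C : IsCMCGraph D u p q H) {ψ : ℝ × ℝ → ℝ}
    (hψ : IsC1TestOn D ψ) :
    ∫ x in D, areaHess (p x, q x) (angleField p q x) (planeGrad ψ x) = 0 := by
  rw [← hψ.setIntegral_jacobian_eq_zero_of_contDiffOn (μ := volume) C.isOpen
    C.contDiffOn_pFunction (1, 0) (0, 1)]
  exact setIntegral_congr_fun C.isOpen.measurableSet fun x hx =>
    (C.wedge_planeGrad_pFunction hx _).symm

lemma continuousOn_angleField (C : IsCMCGraph D u p q H) : ContinuousOn (angleField p q) D :=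
  (C.contDiffOn_snd.continuousOn.smul (C.continuousOn_planeGrad C.contDiffOn_fst)).sub
    (C.contDiffOn_fst.continuousOn.smul (C.continuousOn_planeGrad C.contDiffOn_snd))

end IsCMCGraph

lemma abs_mul_sub_mul_div_le {r s δ : ℝ} (hs : 0 ≤ s) (hδ : 0 ≤ δ) (a b : ℝ) :
    |δ * (s * a - r * b) / ((s + δ) ^ 2 + r ^ 2)| ≤ |a| + |b| := by
  have hr : |r| ^ 2 = r ^ 2 := sq_abs r
  have h₁ : δ * s ≤ (s + δ) ^ 2 + r ^ 2 := by nlinarith [sq_nonneg r]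
  have h₂ : δ * |r| ≤ (s + δ) ^ 2 + r ^ 2 := by nlinarith [sq_nonneg (δ - |r|), mul_nonneg hs hδ]
  rw [abs_div, abs_of_nonneg (a := (s + δ) ^ 2 + r ^ 2) (by positivity)]
  refine div_le_of_le_mul₀ (by positivity) (by positivity) ?_
  calc |δ * (s * a - r * b)| = δ * |s * a - r * b| := by rw [abs_mul, abs_of_nonneg hδ]
    _ ≤ δ * (s * |a| + |r| * |b|) := by
        rw [← abs_of_nonneg hs, ← abs_mul, ← abs_mul, abs_of_nonneg hs]
        exact mul_le_mul_of_nonneg_left (abs_sub _ _) hδ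
    _ = δ * s * |a| + δ * |r| * |b| := by ring
    _ ≤ ((s + δ) ^ 2 + r ^ 2) * |a| + ((s + δ) ^ 2 + r ^ 2) * |b| := by gcongr
    _ = (|a| + |b|) * ((s + δ) ^ 2 + r ^ 2) := by ring

lemma tendsto_mul_sub_mul_div (r s a b : ℝ) :
    Tendsto (fun δ => δ * (s * a - r * b) / ((s + δ) ^ 2 + r ^ 2)) (𝓝[>] 0) (𝓝 0) := by
  refine Tendsto.mono_left ?_ nhdsWithin_le_nhds
  by_cases h : s ^ 2 + r ^ 2 = 0
  · obtain ⟨hs, hr⟩ := (add_eq_zero_iff_of_nonneg (sq_nonneg s) (sq_nonneg r)).1 h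
    simp [pow_eq_zero_iff two_ne_zero |>.1 hs, pow_eq_zero_iff two_ne_zero |>.1 hr]
  · have hcont : ContinuousAt (fun δ => δ * (s * a - r * b) / ((s + δ) ^ 2 + r ^ 2)) 0 :=
      ContinuousAt.div (by fun_prop) (by fun_prop) (by simpa using h)
    simpa using hcont.tendsto

namespace IsCapillaryGraph

lemma continuousOn_pFunction (C : IsCapillaryGraph D u p q H) :
    ContinuousOn (pFunction u p q H) (closure D) :=
  (continuousOn_const.mul C.continuousOn).sub
    (C.continuousOn_areaDensity.inv₀ fun _ _ => (areaDensity_pos _).ne')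

lemma areaHess_angleField_planeGrad_arctan_mul (C : IsCapillaryGraph D u p q H)
    (hκ : ContDiff ℝ 1 κ) (hΦ : IsCutoff Φ) {δ : ℝ} {x : ℝ × ℝ} (hx : x ∈ D)
    (hqx : q x + δ ≠ 0) :
    areaHess (p x, q x) (angleField p q x) (planeGrad (fun y => Real.arctan (p y / (q y + δ))
        * (Φ (graphDistSq u y) ^ 2 * κ (pFunction u p q H y))) x)
      = κ (pFunction u p q H x) * (Φ (graphDistSq u x) ^ 2
          * (areaHess (p x, q x) (angleField p q x) (angleField p q x)
            + δ * areaHess (p x, q x) (angleField p q x) (planeGrad p x))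
              / ((q x + δ) ^ 2 + p x ^ 2)
        + 2 * (Φ (graphDistSq u x) * Real.arctan (p x / (q x + δ))
          * areaHess (p x, q x) (angleField p q x)
              (planeGrad (fun y => Φ (graphDistSq u y)) x))) := by
  have hP := hasPlaneGradAt_of_contDiffOn C.isOpen C.contDiffOn_pFunction hx
  have hφ := hasPlaneGradAt_of_contDiffOn C.isOpen (C.contDiffOn_cutoff hΦ) hx
  have hangle := hasPlaneGradAt_arctan_div (q := fun y => q y + δ) (C.hasPlaneGradAt_fst hx)
    ((C.hasPlaneGradAt_snd hx).add (hasPlaneGradAt_const δ)) hqx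
  have hψ := hangle.mul ((HasPlaneGradAt.comp (f := fun y => Φ (graphDistSq u y))
    (hasDerivAt_pow 2 _) hφ).mul
      (HasPlaneGradAt.comp (hκ.differentiable one_ne_zero _).hasDerivAt hP))
  have hP0 : areaHess (p x, q x) (angleField p q x) (planeGrad (pFunction u p q H) x) = 0 := by
    rw [← C.wedge_planeGrad_pFunction hx, wedge]
    ring
  have hshift : (q x + δ) • planeGrad p x - p x • (planeGrad q x + 0)
      = angleField p q x + δ • planeGrad p x := by
    rw [angleField, add_zero, add_smul]
    abel
  rw [hψ.planeGrad, hshift]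
  simp only [areaHess_add_right, areaHess_smul_right, hP0]
  ring

lemma neg_two_mul_areaHess_planeGrad_cutoff_le (C : IsCapillaryGraph D u p q H)
    (hΦ : IsCutoff Φ) {x : ℝ × ℝ} (hx : x ∈ D) {g N : ℝ} (hg : g ^ 2 ≤ 4) (hN : 0 < N)
    (hNW : N ≤ 2 * areaDensity (p x, q x) ^ 2) (a : ℝ × ℝ) :
    -(2 * (Φ (graphDistSq u x) * g
        * areaHess (p x, q x) a (planeGrad (fun y => Φ (graphDistSq u y)) x)))
      ≤ Φ (graphDistSq u x) ^ 2 * N⁻¹ * areaHess (p x, q x) a a / 2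
        + 64 * (areaDensity (p x, q x) * deriv Φ (graphDistSq u x) ^ 2 * graphDistSq u x) := by
  set φ := fun y => Φ (graphDistSq u y)
  have hB := areaHess_self_nonneg (p x, q x) (planeGrad φ x)
  have hyoung := two_mul_mul_le_of_sq_le (φ := φ x) (s := -g) (s' := N⁻¹) (m := g * √N)
    (by positivity)
    (by rw [mul_pow, Real.sq_sqrt hN.le, neg_sq, mul_assoc, mul_inv_cancel₀ hN.ne', mul_one])
    (areaHess_self_nonneg _ a) hB (areaHess_sq_le (p x, q x) a (planeGrad φ x))
  have hcutoff : (g * √N) ^ 2 * areaHess (p x, q x) (planeGrad φ x) (planeGrad φ x)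
      ≤ 32 * (areaDensity (p x, q x) * deriv Φ (graphDistSq u x) ^ 2 * graphDistSq u x) := by
    calc _ ≤ 4 * (2 * areaDensity (p x, q x) ^ 2)
          * areaHess (p x, q x) (planeGrad φ x) (planeGrad φ x) := by
          rw [mul_pow, Real.sq_sqrt hN.le]
          gcongr
      _ ≤ _ := by linarith [C.areaHess_planeGrad_cutoff_mul_le hΦ hx]
  linarith

lemma sq_mul_div_mul_le_of_young {f k A N W e t Y : ℝ} (hk0 : 0 ≤ k) (hk1 : k ≤ 1) (hA : 0 ≤ A)
    (hN : 0 < N) (hNW : N ≤ 2 * W ^ 2) (hY : 0 ≤ Y)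
    (ht : -(2 * t) ≤ f ^ 2 * N⁻¹ * A / 2 + 64 * Y) :
    f ^ 2 * (k / (4 * W ^ 2) * A)
      ≤ k * (f ^ 2 * (A + e) / N + 2 * t) + |e / N| * (f ^ 2 * k) + 64 * Y := by
  have hAN : A / (4 * W ^ 2) ≤ A / (2 * N) :=
    div_le_div_of_nonneg_left hA (by positivity) (by linarith)
  have herr := mul_nonneg (sq_nonneg f) (neg_le_iff_add_nonneg'.1 (neg_abs_le (e / N)))
  have hkY : k * (64 * Y) ≤ 64 * Y := mul_le_of_le_one_left (by positivity) hk1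
  calc f ^ 2 * (k / (4 * W ^ 2) * A)
      = k * (f ^ 2 * (A / (4 * W ^ 2))) := by ring
    _ ≤ k * (f ^ 2 * (A / (2 * N))) := by gcongr
    _ = k * (f ^ 2 * (A / N) - f ^ 2 * N⁻¹ * A / 2) := by
        field_simp
        ring
    _ ≤ k * (f ^ 2 * (A / N) + f ^ 2 * (e / N + |e / N|) + 2 * t + 64 * Y) :=
        mul_le_mul_of_nonneg_left (by linarith) hk0
    _ = k * (f ^ 2 * (A + e) / N + 2 * t) + |e / N| * (f ^ 2 * k) + k * (64 * Y) := by ring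
    _ ≤ _ := by gcongr

/-- The weak equation for the P-function is tested with `φ² κ(P)` times the regularized angle
`arctan (p / (q + δ))`, whose gradient is `angleField` up to an error that vanishes with `δ`. -/
lemma cutoff_sq_mul_areaHess_angleField_le (C : IsCapillaryGraph D u p q H)
    (hq : ∀ x ∈ D, 0 ≤ q x) (hκ : ContDiff ℝ 1 κ) (hκ0 : ∀ y, 0 ≤ κ y) (hκ1 : ∀ y, κ y ≤ 1)
    (hΦ : IsCutoff Φ) {δ : ℝ} (hδ0 : 0 < δ) (hδ1 : δ ≤ 1) {x : ℝ × ℝ} (hx : x ∈ D) :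
    Φ (graphDistSq u x) ^ 2 * (κ (pFunction u p q H x) / (4 * areaDensity (p x, q x) ^ 2)
        * areaHess (p x, q x) (angleField p q x) (angleField p q x))
      ≤ areaHess (p x, q x) (angleField p q x) (planeGrad (fun y => Real.arctan (p y / (q y + δ))
          * (Φ (graphDistSq u y) ^ 2 * κ (pFunction u p q H y))) x)
        + |δ * areaHess (p x, q x) (angleField p q x) (planeGrad p x)
            / ((q x + δ) ^ 2 + p x ^ 2)|
          * (Φ (graphDistSq u x) ^ 2 * κ (pFunction u p q H x))
        + 64 * (areaDensity (p x, q x) * deriv Φ (graphDistSq u x) ^ 2 * graphDistSq u x) := by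
  have hqx := hq x hx
  have hqδ : q x + δ ≠ 0 := by positivity
  have hN : 0 < (q x + δ) ^ 2 + p x ^ 2 := by positivity
  have hNW : (q x + δ) ^ 2 + p x ^ 2 ≤ 2 * areaDensity (p x, q x) ^ 2 := by
    rw [areaDensity_sq, dot]
    nlinarith [sq_nonneg (q x - δ), sq_nonneg (p x)]
  have harctan : Real.arctan (p x / (q x + δ)) ^ 2 ≤ 4 := by
    have h₁ := Real.arctan_lt_pi_div_two (p x / (q x + δ))
    have h₂ := Real.neg_pi_div_two_lt_arctan (p x / (q x + δ))
    nlinarith [Real.pi_lt_four]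
  rw [C.areaHess_angleField_planeGrad_arctan_mul hκ hΦ hx hqδ]
  exact sq_mul_div_mul_le_of_young (hκ0 _) (hκ1 _) (areaHess_self_nonneg _ _) hN hNW
    (mul_nonneg (mul_nonneg (areaDensity_pos _).le (sq_nonneg _)) (graphDistSq_nonneg u x))
    (C.neg_two_mul_areaHess_planeGrad_cutoff_le hΦ hx harctan hN hNW _)

lemma tendsto_setIntegral_angle_error (C : IsCapillaryGraph D u p q H) (hq : ∀ x ∈ D, 0 ≤ q x)
    {ψ : ℝ × ℝ → ℝ} (hψ : IsC1TestOn D ψ) :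
    Tendsto (fun δ => ∫ x in D, |δ * areaHess (p x, q x) (angleField p q x) (planeGrad p x)
      / ((q x + δ) ^ 2 + p x ^ 2)| * ψ x) (𝓝[>] 0) (𝓝 0) := by
  set a := fun x => areaHess (p x, q x) (planeGrad p x) (planeGrad p x)
  set b := fun x => areaHess (p x, q x) (planeGrad q x) (planeGrad p x)
  have ha : ContinuousOn a D := C.continuousOn_areaHess (C.continuousOn_planeGrad C.contDiffOn_fst)
    (C.continuousOn_planeGrad C.contDiffOn_fst)
  have hb : ContinuousOn b D := C.continuousOn_areaHess (C.continuousOn_planeGrad C.contDiffOn_snd)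
    (C.continuousOn_planeGrad C.contDiffOn_fst)
  have hsplit (x : ℝ × ℝ) : areaHess (p x, q x) (angleField p q x) (planeGrad p x)
      = q x * a x - p x * b x := by
    simp only [a, b, areaHess, angleField, dot, wedge, Prod.fst_sub, Prod.snd_sub, Prod.smul_fst,
      Prod.smul_snd, smul_eq_mul]
    ring
  simp only [hsplit]
  rw [show (𝓝 (0 : ℝ)) = 𝓝 (∫ _ in D, 0) by rw [integral_zero]]
  refine tendsto_integral_filter_of_dominated_convergence (fun x => (|a x| + |b x|) * |ψ x|) ?_ ?_
    ?_ ?_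
  · filter_upwards [self_mem_nhdsWithin] with δ (hδ : 0 < δ)
    have hp := C.contDiffOn_fst.continuousOn
    have hq' := C.contDiffOn_snd.continuousOn
    refine ContinuousOn.aestronglyMeasurable (ContinuousOn.mul (ContinuousOn.abs
      (ContinuousOn.div (by fun_prop) (by fun_prop) fun x hx => ?_)) hψ.1.continuousOn)
      C.isOpen.measurableSet
    have := hq x hx
    positivity
  · filter_upwards [self_mem_nhdsWithin] with δ (hδ : 0 < δ)
    filter_upwards [ae_restrict_mem C.isOpen.measurableSet] with x hx
    rw [norm_mul, Real.norm_eq_abs, abs_abs, Real.norm_eq_abs]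
    exact mul_le_mul_of_nonneg_right (abs_mul_sub_mul_div_le (hq x hx) hδ.le _ _) (abs_nonneg _)
  · refine (hψ.integrableOn_mul (μ := volume) C.isOpen (ha.abs.add hb.abs)).abs.congr
      (Eventually.of_forall fun x => ?_)
    simp only [Pi.add_apply, abs_mul]
    rw [abs_of_nonneg (by positivity)]
  · refine Eventually.of_forall fun x => ?_
    simpa using (tendsto_mul_sub_mul_div (p x) (q x) (a x) (b x)).abs.mul_const (ψ x)

lemma continuousOn_inv_mul_areaHess_angleField (C : IsCapillaryGraph D u p q H) :
    ContinuousOn (fun x => (4 * areaDensity (p x, q x) ^ 2)⁻¹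
      * areaHess (p x, q x) (angleField p q x) (angleField p q x)) D :=
  ((continuousOn_const.mul (C.toIsCMCGraph.continuousOn_areaDensity.pow 2)).inv₀ fun _ _ =>
    mul_ne_zero four_ne_zero (pow_ne_zero 2 (areaDensity_pos _).ne')).mul
      (C.continuousOn_areaHess C.continuousOn_angleField C.continuousOn_angleField)

lemma setIntegral_cutoff_sq_mul_areaHess_angleField_le (C : IsCapillaryGraph D u p q H)
    (hq : ∀ x ∈ D, 0 ≤ q x) (hκ : ContDiff ℝ 1 κ) (hκ0 : ∀ y, 0 ≤ κ y) (hκ1 : ∀ y, κ y ≤ 1)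
    (hΦ : IsCutoff Φ)
    (hψ : IsC1TestOn D fun x => Φ (graphDistSq u x) ^ 2 * κ (pFunction u p q H x))
    (hInt : IntegrableOn (fun x => Φ (graphDistSq u x) ^ 2 * (κ (pFunction u p q H x)
      / (4 * areaDensity (p x, q x) ^ 2)
        * areaHess (p x, q x) (angleField p q x) (angleField p q x))) D) :
    ∫ x in D, Φ (graphDistSq u x) ^ 2 * (κ (pFunction u p q H x)
        / (4 * areaDensity (p x, q x) ^ 2)
          * areaHess (p x, q x) (angleField p q x) (angleField p q x))
      ≤ 64 * ∫ x in D, areaDensity (p x, q x) * deriv Φ (graphDistSq u x) ^ 2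
          * graphDistSq u x := by
  have henergy := (C.integrableOn_cutoff_energy hΦ).const_mul 64
  have hlim := (C.tendsto_setIntegral_angle_error hq hψ).add_const
    (∫ x in D, 64 * (areaDensity (p x, q x) * deriv Φ (graphDistSq u x) ^ 2 * graphDistSq u x))
  rw [zero_add] at hlim
  rw [← integral_const_mul]
  refine ge_of_tendsto hlim ?_
  filter_upwards [Ioc_mem_nhdsGT one_pos] with δ ⟨hδ0, hδ1⟩
  have hqδ (x : ℝ × ℝ) (hx : x ∈ D) : q x + δ ≠ 0 := by linarith [hq x hx]
  have hN (x : ℝ × ℝ) (hx : x ∈ D) : (q x + δ) ^ 2 + p x ^ 2 ≠ 0 := by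
    have := hq x hx
    positivity
  have hangle : ContDiffOn ℝ 1 (fun x => Real.arctan (p x / (q x + δ))) D :=
    Real.contDiff_arctan.comp_contDiffOn
      (C.contDiffOn_fst.div (C.contDiffOn_snd.add contDiffOn_const) hqδ)
  have hp := C.contDiffOn_fst.continuousOn
  have hqc := C.contDiffOn_snd.continuousOn
  have herr := hψ.integrableOn_mul (μ := volume) C.isOpen (ContinuousOn.abs
    (((C.continuousOn_areaHess C.continuousOn_angleField
      (C.continuousOn_planeGrad C.contDiffOn_fst)).const_mul δ).div (by fun_prop) hN))
  have hweak := C.integrableOn_areaHess_planeGrad C.continuousOn_angleField (hψ.mul_left hangle)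
  refine (setIntegral_mono_on hInt ((hweak.add herr).add henergy) C.isOpen.measurableSet
    fun x hx => C.cutoff_sq_mul_areaHess_angleField_le hq hκ hκ0 hκ1 hΦ hδ0 hδ1 hx).trans_eq ?_
  refine (integral_add (hweak.add herr) henergy).trans (congrArg (· + _) ?_)
  refine (integral_add hweak herr).trans ?_
  rw [C.setIntegral_areaHess_angleField_eq_zero (hψ.mul_left hangle), zero_add]
  rfl

lemma weight_mul_areaHess_angleField_eq_zero (C : IsCapillaryGraph D u p q H)
    (hq : ∀ x ∈ D, 0 ≤ q x) (hκ : ContDiff ℝ 1 κ) (hκ0 : ∀ y, 0 ≤ κ y) (hκ1 : ∀ y, κ y ≤ 1)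
    {T : Set ℝ} (hT : IsClosed T) (hκT : ∀ y ∉ T, κ y = 0)
    (hfr : ∀ x ∈ frontier D, pFunction u p q H x ∉ T) :
    EqOn (fun x => κ (pFunction u p q H x) / (4 * areaDensity (p x, q x) ^ 2)
      * areaHess (p x, q x) (angleField p q x) (angleField p q x)) 0 D := by
  have hhess := C.continuousOn_inv_mul_areaHess_angleField
  refine C.eqOn_zero_of_caccioppoli (B := 64) ?_ (fun x _ => mul_nonneg
    (div_nonneg (hκ0 _) (by positivity)) (areaHess_self_nonneg _ _)) fun Φ hΦ => ?_
  · refine ((hκ.continuous.comp_continuousOn C.contDiffOn_pFunction.continuousOn).mul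
      hhess).congr fun x _ => ?_
    simp only [div_eq_mul_inv, mul_assoc]
    rfl
  have hψ := C.isC1TestOn_cutoff_sq_mul hΦ C.contDiffOn_pFunction C.continuousOn_pFunction hκ hT
    hκT hfr
  have hInt := (hψ.integrableOn_mul (μ := volume) C.isOpen hhess).congr_fun
    (g := fun x => Φ (graphDistSq u x) ^ 2 * (κ (pFunction u p q H x)
      / (4 * areaDensity (p x, q x) ^ 2)
        * areaHess (p x, q x) (angleField p q x) (angleField p q x))) (fun x _ => by ring)
    C.isOpen.measurableSet
  exact ⟨hInt,
    C.setIntegral_cutoff_sq_mul_areaHess_angleField_le hq hκ hκ0 hκ1 hΦ hψ hInt⟩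

lemma exists_pFunction_eq_on_frontier (C : IsCapillaryGraph D u p q H) :
    ∃ c, ∀ x ∈ frontier D, pFunction u p q H x = c := by
  obtain ⟨k, hk⟩ := C.exists_grad_sq_eq
  refine ⟨-(√(1 + k))⁻¹, fun x hx => ?_⟩
  rw [pFunction, C.eq_zero_of_mem_frontier x hx, areaDensity, dot, ← sq, ← sq, hk x hx]
  ring

lemma hasPlaneGradAt_pFunction_zero (C : IsCapillaryGraph D u p q H) (hq : ∀ x ∈ D, 0 ≤ q x) {c : ℝ}
    (hc : ∀ x ∈ frontier D, pFunction u p q H x = c) {x : ℝ × ℝ} (hx : x ∈ D)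
    (hxc : pFunction u p q H x ≠ c) : HasPlaneGradAt (pFunction u p q H) 0 x := by
  set ε := |pFunction u p q H x - c| / 2
  have hε : 0 < ε := half_pos (abs_pos.2 (sub_ne_zero.2 hxc))
  set κ : ℝ → ℝ := fun y => Real.smoothTransition (((y - c) / ε) ^ 2 - 1)
  have hκT (y : ℝ) (hy : y ∉ {y | ε ≤ |y - c|}) : κ y = 0 := by
    refine Real.smoothTransition.zero_of_nonpos (sub_nonpos.2 ((sq_le_one_iff_abs_le_one _).2 ?_))
    rw [abs_div, abs_of_pos hε, div_le_one hε]
    exact (not_le.1 hy).le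
  have hκx : κ (pFunction u p q H x) = 1 := by
    refine Real.smoothTransition.one_of_one_le ?_
    rw [← sq_abs, abs_div, abs_of_pos hε,
      show |pFunction u p q H x - c| = 2 * ε from (mul_div_cancel₀ _ two_ne_zero).symm,
      mul_div_cancel_right₀ _ hε.ne']
    norm_num
  have hκ : ContDiff ℝ 1 κ := Real.smoothTransition.contDiff.comp (by fun_prop)
  have hzero := C.weight_mul_areaHess_angleField_eq_zero hq hκ
    (fun _ => Real.smoothTransition.nonneg _) (fun _ => Real.smoothTransition.le_one _)
    (isClosed_le continuous_const (by fun_prop)) hκT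
    (fun z hz => by simpa [hc z hz] using hε) hx
  have hangle : angleField p q x = 0 := by
    refine areaHess_self_eq_zero.1 ((mul_eq_zero.1 hzero).resolve_left ?_)
    rw [hκx]
    have := areaDensity_pos (p x, q x)
    positivity
  have hwedge (a : ℝ × ℝ) : wedge (planeGrad (pFunction u p q H) x) a = 0 := by
    rw [C.wedge_planeGrad_pFunction hx, hangle]
    simp [areaHess, dot, wedge]
  refine (hasPlaneGradAt_of_contDiffOn C.isOpen C.contDiffOn_pFunction hx).congr_grad ?_
  ext
  · simpa [wedge] using hwedge (0, 1)
  · simpa [wedge] using hwedge (1, 0)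

theorem exists_pFunction_eq (C : IsCapillaryGraph D u p q H) (hq : ∀ x ∈ D, 0 ≤ q x) :
    ∃ c, ∀ x ∈ D, pFunction u p q H x = c := by
  obtain ⟨c, hc⟩ := C.exists_pFunction_eq_on_frontier
  exact ⟨c, fun x hx => not_not.1 (notMem_of_hasFDerivAt_zero_of_frontier (T := {c}ᶜ) C.isOpen
    C.isConnected.isPreconnected C.isConnected_frontier.nonempty C.continuousOn_pFunction
    isOpen_compl_singleton
    (fun _ hy hyc => hasPlaneGradAt_zero_iff.1 (C.hasPlaneGradAt_pFunction_zero hq hc hy hyc))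
    (fun z hz => not_not.2 (hc z hz)) hx)⟩

theorem planeGrad_pFunction_eq_zero (C : IsCapillaryGraph D u p q H) (hq : ∀ x ∈ D, 0 ≤ q x)
    {x : ℝ × ℝ} (hx : x ∈ D) : planeGrad (pFunction u p q H) x = 0 := by
  obtain ⟨c, hc⟩ := C.exists_pFunction_eq hq
  have heq : pFunction u p q H =ᶠ[𝓝 x] fun _ => c := by
    filter_upwards [C.isOpen.mem_nhds hx] with y hy using hc y hy
  rw [planeGrad, heq.fderiv_eq, fderiv_fun_const]
  rfl

theorem angleField_eq_zero (C : IsCapillaryGraph D u p q H) (hq : ∀ x ∈ D, 0 ≤ q x)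
    {x : ℝ × ℝ} (hx : x ∈ D) : angleField p q x = 0 := by
  rw [← areaHess_self_eq_zero (ξ := (p x, q x)), ← C.wedge_planeGrad_pFunction hx,
    C.planeGrad_pFunction_eq_zero hq hx]
  simp [wedge]

end IsCapillaryGraph

end PFunction

/-! ### Rigidity -/

section Rigidity

variable {D : Set (ℝ × ℝ)} {u p q : ℝ × ℝ → ℝ} {H : ℝ} {x : ℝ × ℝ}

lemma exists_eq_of_hasFDerivAt_zero_of_ne_zero {E : Type*} [NormedAddCommGroup E]
    [NormedSpace ℝ E] {D : Set E} {f : E → ℝ} (hD : IsOpen D) (hDc : IsPreconnected D)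
    (hf : ContinuousOn f D) (h0 : ∀ x ∈ D, f x ≠ 0 → HasFDerivAt f (0 : E →L[ℝ] ℝ) x) :
    ∃ c, ∀ x ∈ D, f x = c := by
  by_cases h : ∃ x₀ ∈ D, f x₀ ≠ 0
  · obtain ⟨x₀, hx₀, hne⟩ := h
    exact ⟨f x₀, fun x hx => eq_of_hasFDerivAt_zero_of_mem hD hDc hf isOpen_compl_singleton h0
      hx₀ hne hx⟩
  · push Not at h
    exact ⟨0, h⟩

lemma eq_zero_of_hasDerivAt_of_abs_le {f : ℝ → ℝ} {c M : ℝ} (hf : ∀ t, 0 ≤ t → HasDerivAt f c t)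
    (hM : ∀ t, 0 ≤ t → |f t| ≤ M) : c = 0 := by
  by_contra hc
  have hM0 : 0 ≤ M := (abs_nonneg _).trans (hM 0 le_rfl)
  have hT : 0 < (2 * M + 1) / |c| := by positivity
  obtain ⟨-, -, hslope⟩ := exists_hasDerivAt_eq_slope f (fun _ => c) hT
    (fun t ht => (hf t ht.1).continuousAt.continuousWithinAt) (fun t ht => hf t ht.1.le)
  have hcT : |c * ((2 * M + 1) / |c|)| = 2 * M + 1 := by
    rw [abs_mul, abs_of_pos hT, mul_div_cancel₀ _ (abs_ne_zero.2 hc)]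
  rw [eq_div_iff (sub_pos.2 hT).ne', sub_zero] at hslope
  rw [hslope] at hcT
  linarith [abs_sub (f ((2 * M + 1) / |c|)) (f 0), hM _ hT.le, hM 0 le_rfl]

lemma subsingleton_of_isPreconnected_of_sq_eq {S : Set ℝ} (hS : IsPreconnected S) {H c m : ℝ}
    (hH : H ≠ 0) (h : ∀ s ∈ S, (c - H * s) ^ 2 = m) : S.Subsingleton := by
  have hsub : S ⊆ {(c - √m) / H, (c + √m) / H} := fun s hs => by
    have hm : √m ^ 2 = m := Real.sq_sqrt (h s hs ▸ sq_nonneg _)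
    rcases sq_eq_sq_iff_eq_or_eq_neg.1 ((h s hs).trans hm.symm) with hs' | hs'
    · exact Or.inl ((eq_div_iff hH).2 (by linarith))
    · exact Or.inr ((eq_div_iff hH).2 (by linarith))
  exact (Set.toFinite _).countable.isTotallyDisconnected _ hsub hS

lemma inter_frontier_nonempty_of_isPreconnected {X : Type*} [TopologicalSpace X] {S U : Set X}
    (hS : IsPreconnected S) (hU : IsOpen U) (hSU : (S ∩ U).Nonempty) (hSU' : (S \ U).Nonempty) :
    (S ∩ frontier U).Nonempty := by
  by_contra hempty
  obtain ⟨x, hxS, hxU⟩ := hSU'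
  refine hxU (hS.subset_of_closure_inter_subset hU hSU ?_ hxS)
  rintro y ⟨hy, hyS⟩
  by_contra hyU
  exact hempty ⟨y, hyS, hU.frontier_eq ▸ ⟨hy, hyU⟩⟩

namespace IsCapillaryGraph

lemma smul_planeGrad_fst_eq (C : IsCapillaryGraph D u p q H) (hq : ∀ x ∈ D, 0 ≤ q x)
    (hx : x ∈ D) : q x • planeGrad p x = p x • planeGrad q x :=
  sub_eq_zero.1 (C.angleField_eq_zero hq hx)

lemma smul_planeGrad_add_smul_planeGrad (C : IsCapillaryGraph D u p q H)
    (hq : ∀ x ∈ D, 0 ≤ q x) (hx : x ∈ D) :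
    p x • planeGrad p x + q x • planeGrad q x
      = -(H * areaDensity (p x, q x) ^ 3) • (p x, q x) := by
  have hW := (areaDensity_pos (p x, q x)).ne'
  have hP := (C.hasPlaneGradAt_pFunction hx).planeGrad.symm.trans
    (C.planeGrad_pFunction_eq_zero hq hx)
  rw [add_eq_zero_iff_eq_neg', inv_smul_eq_iff₀ (pow_ne_zero 3 hW)] at hP
  rw [hP, smul_neg, smul_smul, neg_smul, mul_comm]

lemma dot_mul_planeGrad_snd (C : IsCapillaryGraph D u p q H) (hq : ∀ x ∈ D, 0 ≤ q x)
    (hx : x ∈ D) : (p x ^ 2 + q x ^ 2) * (planeGrad q x).2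
      = -H * areaDensity (p x, q x) ^ 3 * q x ^ 2 := by
  have hcross := congrArg Prod.snd (C.smul_planeGrad_fst_eq hq hx)
  have hP := congrArg Prod.snd (C.smul_planeGrad_add_smul_planeGrad hq hx)
  simp only [Prod.snd_add, Prod.smul_snd, smul_eq_mul] at hcross hP
  linear_combination q x * hP - p x * hcross

lemma planeGrad_snd_eq_zero (C : IsCapillaryGraph D u p q H) (hq : ∀ x ∈ D, 0 ≤ q x)
    (hx : x ∈ D) (hqx : q x = 0) : planeGrad q x = 0 := by
  have hmin : IsLocalMin q x := by
    filter_upwards [C.isOpen.mem_nhds hx] with y hy using hqx ▸ hq y hy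
  rw [planeGrad, hmin.fderiv_eq_zero]
  rfl

lemma fderiv_flux_snd_vertical (C : IsCapillaryGraph D u p q H) (hq : ∀ x ∈ D, 0 ≤ q x)
    (hx : x ∈ D) : fderiv ℝ (fun y => q y / areaDensity (p y, q y)) x (0, 1)
      = (areaDensity (p x, q x) ^ 3)⁻¹ * (planeGrad q x).2 := by
  have hcross := congrArg Prod.snd (C.smul_planeGrad_fst_eq hq hx)
  rw [(hasPlaneGradAt_flux_snd (C.hasPlaneGradAt_fst hx) (C.hasPlaneGradAt_snd hx)).fderiv_apply]
  simp only [dot, Prod.smul_snd, Prod.snd_sub, smul_eq_mul] at hcross ⊢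
  linear_combination -(areaDensity (p x, q x) ^ 3)⁻¹ * p x * hcross

lemma fderiv_flux_snd_vertical_eq_div (C : IsCapillaryGraph D u p q H)
    (hq : ∀ x ∈ D, 0 ≤ q x) (hx : x ∈ D) (hqx : q x ≠ 0) :
    fderiv ℝ (fun y => q y / areaDensity (p y, q y)) x (0, 1) = -H / ((p x / q x) ^ 2 + 1) := by
  have hW := areaDensity_pos (p x, q x)
  have hpq : p x ^ 2 + q x ^ 2 ≠ 0 := by positivity
  rw [C.fderiv_flux_snd_vertical hq hx, eq_div_of_mul_eq hpq
    ((mul_comm _ _).trans (C.dot_mul_planeGrad_snd hq hx))]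
  field_simp

/-- Where `q ≠ 0` the direction of the gradient is locally constant, and so is this derivative. -/
lemma exists_fderiv_flux_snd_eq (C : IsCapillaryGraph D u p q H) (hq : ∀ x ∈ D, 0 ≤ q x) :
    ∃ c, ∀ x ∈ D, fderiv ℝ (fun y => q y / areaDensity (p y, q y)) x (0, 1) = c := by
  refine exists_eq_of_hasFDerivAt_zero_of_ne_zero C.isOpen C.isConnected.isPreconnected
    (continuousOn_fderiv_apply C.isOpen C.contDiffOn_flux_snd _) fun x hx hne => ?_
  have hqx : q x ≠ 0 := fun hqx => hne (by
    rw [C.fderiv_flux_snd_vertical hq hx, C.planeGrad_snd_eq_zero hq hx hqx, Prod.snd_zero,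
      mul_zero])
  have hratio : HasPlaneGradAt (fun y => p y / q y) 0 x := by
    refine ((C.hasPlaneGradAt_fst hx).mul (HasPlaneGradAt.comp (hasDerivAt_inv hqx)
      (C.hasPlaneGradAt_snd hx))).congr_grad ?_
    have hcross : planeGrad p x = (p x / q x) • planeGrad q x := by
      rw [div_eq_inv_mul, mul_smul, ← C.smul_planeGrad_fst_eq hq hx, inv_smul_smul₀ hqx]
    rw [hcross, smul_smul, smul_smul, ← add_smul]
    convert zero_smul ℝ _ using 2
    field_simp
    ring
  have hcont : ∀ᶠ y in 𝓝 x, q y ≠ 0 :=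
    (C.hasPlaneGradAt_snd hx).continuousAt.eventually_ne hqx
  have hder : HasDerivAt (fun m : ℝ => -H / (m ^ 2 + 1)) _ (p x / q x) :=
    DifferentiableAt.hasDerivAt (by fun_prop (disch := positivity))
  refine (hasPlaneGradAt_zero_iff.1 ((HasPlaneGradAt.comp (f := fun y => p y / q y) hder
    hratio).congr_grad (smul_zero _))).congr_of_eventuallyEq ?_
  filter_upwards [C.isOpen.mem_nhds hx, hcont] with y hy hqy
  exact C.fderiv_flux_snd_vertical_eq_div hq hy hqy

/-- Otherwise `q / √(1 + |∇u|²)` would be affine with nonzero slope along an upward ray, while it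
is bounded by one. -/
lemma snd_eq_zero_of_ne_zero (C : IsCapillaryGraph D u p q H) (hH : H ≠ 0)
    (hq : ∀ x ∈ D, 0 ≤ q x) (hx : x ∈ D) : q x = 0 := by
  by_contra hqx
  obtain ⟨c, hc⟩ := C.exists_fderiv_flux_snd_eq hq
  have hc0 : c ≠ 0 := by
    rw [← hc x hx, C.fderiv_flux_snd_vertical_eq_div hq hx hqx]
    exact div_ne_zero (neg_ne_zero.2 hH) (by positivity)
  refine hc0 (eq_zero_of_hasDerivAt_of_abs_le
    (f := fun t => q (x + (0, t)) / areaDensity (p (x + (0, t)), q (x + (0, t)))) (fun t ht => ?_)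
    fun t _ => abs_snd_div_areaDensity_le_one (p (x + (0, t)), q (x + (0, t))))
  have hxt := C.add_vertical_mem x hx t ht
  have hflux := ((C.contDiffOn_flux_snd.differentiableOn one_ne_zero).differentiableAt
    (C.isOpen.mem_nhds hxt)).hasFDerivAt
  rw [← hc _ hxt]
  exact hflux.comp_hasDerivAt t
    (((hasDerivAt_const t (0 : ℝ)).prodMk (hasDerivAt_id t)).const_add x)

lemma exists_flux_fst_eq (C : IsCapillaryGraph D u p q H) (hH : H ≠ 0) (hq : ∀ x ∈ D, 0 ≤ q x) :
    ∃ c, ∀ x ∈ D, p x / areaDensity (p x, q x) + H * x.1 = c := by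
  refine exists_eq_of_hasFDerivAt_zero_of_ne_zero C.isOpen C.isConnected.isPreconnected
    (C.contDiffOn_flux_fst.continuousOn.add (by fun_prop)) fun x hx _ =>
      hasPlaneGradAt_zero_iff.1 ?_
  have hqx := C.snd_eq_zero_of_ne_zero hH hq hx
  have hgradq := C.planeGrad_snd_eq_zero hq hx hqx
  have hsymm := C.planeGrad_fst_snd hx
  have hflux := (hasPlaneGradAt_flux_fst (C.hasPlaneGradAt_fst hx) (C.hasPlaneGradAt_snd hx))
  have hdiv := C.div_flux x hx
  rw [C.fderiv_flux_snd_vertical hq hx, hflux.fderiv_apply] at hdiv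
  refine (hflux.add (hasPlaneGradAt_fst.const_mul H)).congr_grad ?_
  simp only [hgradq, hqx] at hdiv hsymm ⊢
  ext
  · simp [dot] at hdiv ⊢
    linarith
  · simp [hsymm]

lemma fst_eq_of_mem_frontier (C : IsCapillaryGraph D u p q H) (hH : H ≠ 0)
    (hq : ∀ x ∈ D, 0 ≤ q x) {y : ℝ × ℝ} (hx : x ∈ frontier D) (hy : y ∈ frontier D) :
    x.1 = y.1 := by
  obtain ⟨c, hc⟩ := C.exists_flux_fst_eq hH hq
  obtain ⟨k, hk⟩ := C.exists_grad_sq_eq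
  have hq0 : EqOn q (fun _ => 0) (closure D) := EqOn.of_subset_closure
    (fun z hz => C.snd_eq_zero_of_ne_zero hH hq hz) C.continuousOn_snd continuousOn_const
    subset_closure subset_rfl
  have hflux : EqOn (fun z => p z / areaDensity (p z, q z) + H * z.1) (fun _ => c) (closure D) :=
    EqOn.of_subset_closure hc (C.continuousOn_flux_fst.add (by fun_prop)) continuousOn_const
      subset_closure subset_rfl
  have hsq ⦃z : ℝ × ℝ⦄ (hz : z ∈ frontier D) : (c - H * z.1) ^ 2 = k / (1 + k) := by
    have hqz : q z = 0 := hq0 (frontier_subset_closure hz)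
    have hfluxz : p z / areaDensity (p z, q z) + H * z.1 = c := hflux (frontier_subset_closure hz)
    rw [← hfluxz, add_sub_cancel_right, div_pow, areaDensity_sq, dot,
      ← hk z hz, hqz]
    ring
  exact subsingleton_of_isPreconnected_of_sq_eq (C.isConnected_frontier.isPreconnected.image _
    continuous_fst.continuousOn) hH (forall_mem_image.2 hsq) (mem_image_of_mem _ hx)
      (mem_image_of_mem _ hy)

lemma exists_mem_frontier_fst_lt (C : IsCapillaryGraph D u p q H) (hH : H ≠ 0) (hx : x ∈ D) :
    (∃ y ∈ frontier D, y.1 < x.1) ∧ ∃ y ∈ frontier D, x.1 < y.1 := by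
  have hside {I : Set ℝ} (hI : IsPreconnected I) (hxI : x.1 ∈ I) {s : ℝ} (hs : s ∈ I)
      (hsD : (s, x.2) ∉ D) : ∃ y ∈ frontier D, y.1 ∈ I ∧ y.1 ≠ x.1 := by
    obtain ⟨-, ⟨r, hr, rfl⟩, hrD⟩ := inter_frontier_nonempty_of_isPreconnected
      (hI.image (fun r => (r, x.2)) (by fun_prop)) C.isOpen ⟨x, ⟨x.1, hxI, rfl⟩, hx⟩
      ⟨(s, x.2), ⟨s, hs, rfl⟩, hsD⟩
    refine ⟨(r, x.2), hrD, hr, fun hrx => ?_⟩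
    rw [C.isOpen.frontier_eq] at hrD
    exact hrD.2 (Prod.ext hrx rfl ▸ hx : (r, x.2) ∈ D)
  have hwidth : |H| * (5 / |H|) = 5 := mul_div_cancel₀ _ (abs_ne_zero.2 hH)
  have hpos : 0 ≤ 5 / |H| := by positivity
  obtain ⟨y, hy, hyx, hne⟩ := hside isPreconnected_Iic self_mem_Iic
    (mem_Iic.2 (sub_le_self x.1 hpos)) fun hD => by
      linarith [C.abs_mul_fst_sub_le hD hx, mul_comm |H| (x.1 - (x.1 - 5 / |H|))]
  obtain ⟨z, hz, hxz, hne'⟩ := hside isPreconnected_Ici self_mem_Ici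
    (mem_Ici.2 (le_add_of_nonneg_right hpos)) fun hD => by
      linarith [C.abs_mul_fst_sub_le hx hD]
  exact ⟨⟨y, hy, hyx.lt_of_ne hne⟩, z, hz, hxz.lt_of_ne' hne'⟩

theorem meanCurvature_eq_zero (C : IsCapillaryGraph D u p q H) (hq : ∀ x ∈ D, 0 ≤ q x) :
    H = 0 := by
  by_contra hH
  obtain ⟨x, hx⟩ := C.isConnected.nonempty
  obtain ⟨⟨y, hy, hyx⟩, z, hz, hxz⟩ := C.exists_mem_frontier_fst_lt hH hx
  exact (hyx.trans hxz).ne (C.fst_eq_of_mem_frontier hH hq hy hz)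

lemma exists_grad_eq (C : IsCapillaryGraph D u p q 0) (hq : ∀ x ∈ D, 0 ≤ q x) :
    ∃ a, ∀ x ∈ D, (p x, q x) = a := by
  have hgrad {x : ℝ × ℝ} (hx : x ∈ D) :
      (p x ^ 2 + q x ^ 2) • planeGrad p x = 0 ∧ (p x ^ 2 + q x ^ 2) • planeGrad q x = 0 := by
    have hcross := C.smul_planeGrad_fst_eq hq hx
    have hP := C.smul_planeGrad_add_smul_planeGrad hq hx
    rw [zero_mul, neg_zero, zero_smul] at hP
    constructor
    · linear_combination (norm := module) p x • hP + q x • hcross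
    · linear_combination (norm := module) q x • hP - p x • hcross
  obtain ⟨a, ha⟩ := exists_eq_of_hasFDerivAt_zero_of_ne_zero C.isOpen
    C.isConnected.isPreconnected C.contDiffOn_fst.continuousOn fun x hx hpx =>
      hasPlaneGradAt_zero_iff.1 ((C.hasPlaneGradAt_fst hx).congr_grad
        ((smul_eq_zero.1 (hgrad hx).1).resolve_left (by positivity)))
  obtain ⟨b, hb⟩ := exists_eq_of_hasFDerivAt_zero_of_ne_zero C.isOpen
    C.isConnected.isPreconnected C.contDiffOn_snd.continuousOn fun x hx hqx =>
      hasPlaneGradAt_zero_iff.1 ((C.hasPlaneGradAt_snd hx).congr_grad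
        ((smul_eq_zero.1 (hgrad hx).2).resolve_left (by positivity)))
  exact ⟨(a, b), fun x hx => Prod.ext (ha x hx) (hb x hx)⟩

theorem eq_zero_and_exists_grad_eq (C : IsCapillaryGraph D u p q H)
    (hq : (∀ x ∈ frontier D, 0 ≤ q x) ∨ ∀ x ∈ frontier D, q x ≤ 0) :
    H = 0 ∧ ∃ a, ∀ x ∈ D, (p x, q x) = a := by
  wlog hpos : ∀ x ∈ frontier D, 0 ≤ q x generalizing u p q H
  · have hneg := hq.resolve_left hpos
    obtain ⟨hH, a, ha⟩ := this C.neg (Or.inl fun x hx => neg_nonneg.2 (hneg x hx))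
      fun x hx => neg_nonneg.2 (hneg x hx)
    exact ⟨neg_eq_zero.1 hH, -a, fun x hx => neg_eq_iff_eq_neg.1 (ha x hx)⟩
  have hq' (x : ℝ × ℝ) (hx : x ∈ D) : 0 ≤ q x := C.snd_nonneg hpos hx
  obtain rfl := C.meanCurvature_eq_zero hq'
  exact ⟨rfl, C.exists_grad_eq hq'⟩

end IsCapillaryGraph

end Rigidity

/-! ### Inner normals and half-spaces -/

section DefiningFunction

variable {E : Type*} [NormedAddCommGroup E] [InnerProductSpace ℝ E]

lemma tendsto_add_smul_nhdsGT (x d : E) : Tendsto (fun s : ℝ => x + s • d) (𝓝[>] 0) (𝓝 x) :=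
  ((continuous_const.add (continuous_id.smul continuous_const)).tendsto' 0 x
    (by simp)).mono_left nhdsWithin_le_nhds

variable [CompleteSpace E] {Ω V : Set E} {g : E → ℝ} {x d z : E}

/-- `g` is a regular `C¹` function on the open set `V` which describes the part of `Ω` lying in `V`
as the sublevel set `g < 0`. -/
structure IsDefiningFunctionOn (g : E → ℝ) (Ω V : Set E) : Prop where
  isOpen : IsOpen V
  contDiffOn : ContDiffOn ℝ 1 g V
  gradient_ne_zero : ∀ x ∈ V, gradient g x ≠ 0
  inter_eq : Ω ∩ V = {x ∈ V | g x < 0}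

namespace IsDefiningFunctionOn

lemma mem_iff (h : IsDefiningFunctionOn g Ω V) (hx : x ∈ V) : x ∈ Ω ↔ g x < 0 :=
  ⟨fun hΩ => (h.inter_eq.subset ⟨hΩ, hx⟩).2, fun hg => (h.inter_eq.superset ⟨hx, hg⟩).1⟩

lemma hasGradientAt (h : IsDefiningFunctionOn g Ω V) (hx : x ∈ V) :
    HasGradientAt g (gradient g x) x :=
  (h.contDiffOn.differentiableOn one_ne_zero).hasGradientAt (h.isOpen.mem_nhds hx)

lemma continuousOn_gradient (h : IsDefiningFunctionOn g Ω V) : ContinuousOn (gradient g) V :=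
  (InnerProductSpace.toDual ℝ E).symm.continuous.comp_continuousOn
    (h.contDiffOn.continuousOn_fderiv_of_isOpen h.isOpen le_rfl)

lemma eq_zero_of_mem_frontier (h : IsDefiningFunctionOn g Ω V) (hΩ : IsOpen Ω)
    (hz : z ∈ frontier Ω) (hzV : z ∈ V) : g z = 0 := by
  rw [hΩ.frontier_eq] at hz
  have hV := h.isOpen.mem_nhds hzV
  refine le_antisymm (not_lt.1 fun hpos => ?_) (not_lt.1 fun hneg => hz.2 ((h.mem_iff hzV).2 hneg))
  obtain ⟨y, ⟨hyV, hy⟩, hyΩ⟩ := mem_closure_iff_nhds.1 hz.1 _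
    (inter_mem hV ((h.contDiffOn.continuousOn.continuousAt hV).eventually_const_lt hpos))
  exact ((h.mem_iff hyV).1 hyΩ).not_gt hy

lemma eventually_sign_eq (h : IsDefiningFunctionOn g Ω V) (hΩ : IsOpen Ω)
    (hz : z ∈ frontier Ω) (hzV : z ∈ V) (hd : inner ℝ (gradient g z) d ≠ 0) :
    ∀ᶠ s : ℝ in 𝓝[>] 0,
      SignType.sign (g (z + s • d)) = SignType.sign (inner ℝ (gradient g z) d) := by
  have hline : HasDerivAt (fun s : ℝ => z + s • d) d 0 := by
    simpa using ((hasDerivAt_id (0 : ℝ)).smul_const d).const_add z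
  have hg : HasDerivAt (fun s : ℝ => g (z + s • d)) (inner ℝ (gradient g z) d) 0 :=
    (h.hasGradientAt hzV).hasFDerivAt.comp_hasDerivAt_of_eq 0 hline (by simp)
  have h0 : g (z + (0 : ℝ) • d) = 0 := by
    rw [zero_smul, add_zero, h.eq_zero_of_mem_frontier hΩ hz hzV]
  rcases hd.lt_or_gt with hd | hd
  · filter_upwards [nhdsWithin_le_nhds (eventually_nhdsWithin_sign_eq_of_deriv_neg
      (by rwa [hg.deriv]) h0), self_mem_nhdsWithin] with s hs hpos
    rw [hs, zero_sub, sign_neg hd, sign_neg (neg_neg_of_pos hpos)]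
  · filter_upwards [nhdsWithin_le_nhds (eventually_nhdsWithin_sign_eq_of_deriv_pos
      (by rwa [hg.deriv]) h0), self_mem_nhdsWithin] with s hs hpos
    rw [hs, sub_zero, sign_pos hd, sign_pos hpos]

lemma eventually_add_smul_mem (h : IsDefiningFunctionOn g Ω V) (hΩ : IsOpen Ω)
    (hz : z ∈ frontier Ω) (hzV : z ∈ V) (hd : inner ℝ (gradient g z) d < 0) :
    ∀ᶠ s : ℝ in 𝓝[>] 0, z + s • d ∈ Ω := by
  filter_upwards [h.eventually_sign_eq hΩ hz hzV hd.ne,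
    (tendsto_add_smul_nhdsGT z d).eventually (h.isOpen.mem_nhds hzV)] with s hs hV
  rwa [h.mem_iff hV, ← sign_eq_neg_one_iff, hs, sign_eq_neg_one_iff]

lemma eventually_add_smul_notMem (h : IsDefiningFunctionOn g Ω V) (hΩ : IsOpen Ω)
    (hz : z ∈ frontier Ω) (hzV : z ∈ V) (hd : 0 < inner ℝ (gradient g z) d) :
    ∀ᶠ s : ℝ in 𝓝[>] 0, z + s • d ∉ Ω := by
  filter_upwards [h.eventually_sign_eq hΩ hz hzV hd.ne',
    (tendsto_add_smul_nhdsGT z d).eventually (h.isOpen.mem_nhds hzV)] with s hs hV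
  rw [h.mem_iff hV, not_lt]
  exact (sign_eq_one_iff.1 (hs.trans (sign_pos hd))).le

end IsDefiningFunctionOn

end DefiningFunction

section InnerNormal

variable {E : Type*} [NormedAddCommGroup E] [InnerProductSpace ℝ E] {Ω K : Set E} {η : E → E}
  {x z v w d : E}

/-- `η` is an inner unit normal along the boundary of the open set `Ω`, expressed through its
behaviour along rays issuing from boundary points; `η` need not be continuous, only its direction
may not jump by a right angle. -/
structure IsInnerNormal (Ω : Set E) (η : E → E) : Prop where
  isOpen : IsOpen Ω
  norm_eq_one : ∀ z ∈ frontier Ω, ‖η z‖ = 1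
  eventually_mem : ∀ z ∈ frontier Ω, ∀ d, 0 < ⟪η z, d⟫ → ∀ᶠ s : ℝ in 𝓝[>] 0, z + s • d ∈ Ω
  eventually_notMem : ∀ z ∈ frontier Ω, ∀ d, ⟪η z, d⟫ < 0 → ∀ᶠ s : ℝ in 𝓝[>] 0, z + s • d ∉ Ω
  eventually_inner_pos : ∀ z ∈ frontier Ω, ∀ᶠ y in 𝓝[frontier Ω] z, 0 < ⟪η y, η z⟫

lemma inner_pos_of_forall_inner_nonneg {a b : E} (h : ∀ d, 0 < ⟪a, d⟫ → 0 ≤ ⟪b, d⟫)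
    (hb : b ≠ 0) (hd : 0 < ⟪a, d⟫) : 0 < ⟪b, d⟫ := by
  have hcont : Continuous fun ε : ℝ => ⟪a, d - ε • b⟫ := by fun_prop
  have hev : ∀ᶠ ε : ℝ in 𝓝[>] 0, 0 < ⟪a, d - ε • b⟫ :=
    nhdsWithin_le_nhds (hcont.continuousAt.eventually_const_lt (by simpa using hd))
  obtain ⟨ε, hε, hpos⟩ := (hev.and self_mem_nhdsWithin).exists
  have hnonneg := h _ hε
  rw [inner_sub_right, real_inner_smul_right] at hnonneg
  linarith [mul_pos (mem_Ioi.1 hpos) (real_inner_self_pos.2 hb)]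

theorem isInnerNormal_of_isDefiningFunctionOn [CompleteSpace E] (hΩ : IsOpen Ω)
    (h : ∀ z ∈ frontier Ω, ∃ (V : Set E) (g : E → ℝ), z ∈ V ∧ IsDefiningFunctionOn g Ω V ∧
      η z = -(‖gradient g z‖⁻¹ • gradient g z)) : IsInnerNormal Ω η := by
  have hinner {g : E → ℝ} {z : E} (hηz : η z = -(‖gradient g z‖⁻¹ • gradient g z)) (d : E) :
      ⟪η z, d⟫ = -(‖gradient g z‖⁻¹ * ⟪gradient g z, d⟫) := by
    rw [hηz, inner_neg_left, real_inner_smul_left]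
  have hnorm {z : E} (hz : z ∈ frontier Ω) : ‖η z‖ = 1 := by
    obtain ⟨V, g, hzV, hg, hηz⟩ := h z hz
    rw [hηz, norm_neg, norm_smul, norm_inv, norm_norm,
      inv_mul_cancel₀ (norm_ne_zero_iff.2 (hg.gradient_ne_zero z hzV))]
  have hmem {z d : E} (hz : z ∈ frontier Ω) (hd : 0 < ⟪η z, d⟫) :
      ∀ᶠ s : ℝ in 𝓝[>] 0, z + s • d ∈ Ω := by
    obtain ⟨V, g, hzV, hg, hηz⟩ := h z hz
    rw [hinner hηz, Left.neg_pos_iff] at hd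
    exact hg.eventually_add_smul_mem hΩ hz hzV (neg_of_mul_neg_right hd (by positivity))
  have hnotMem {z d : E} (hz : z ∈ frontier Ω) (hd : ⟪η z, d⟫ < 0) :
      ∀ᶠ s : ℝ in 𝓝[>] 0, z + s • d ∉ Ω := by
    obtain ⟨V, g, hzV, hg, hηz⟩ := h z hz
    rw [hinner hηz, Left.neg_neg_iff] at hd
    exact hg.eventually_add_smul_notMem hΩ hz hzV (pos_of_mul_pos_right hd (by positivity))
  refine ⟨hΩ, fun z hz => hnorm hz, fun z hz d => hmem hz, fun z hz d => hnotMem hz, fun z hz => ?_⟩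
  obtain ⟨V, g, hzV, hg, hηz⟩ := h z hz
  have hV := hg.isOpen.mem_nhds hzV
  have hgz : ⟪gradient g z, η z⟫ < 0 := by
    rw [hηz, inner_neg_right, real_inner_smul_right, real_inner_self_eq_norm_sq, neg_lt_zero]
    have := norm_pos_iff.2 (hg.gradient_ne_zero z hzV)
    positivity
  filter_upwards [nhdsWithin_le_nhds hV, nhdsWithin_le_nhds
    ((ContinuousAt.inner (𝕜 := ℝ) (hg.continuousOn_gradient.continuousAt hV)
      continuousAt_const).eventually_lt_const hgz), self_mem_nhdsWithin] with y hyV hgy hy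
  refine inner_pos_of_forall_inner_nonneg (a := -gradient g y) (fun d hd => not_lt.1 fun hηy => ?_)
    (norm_ne_zero_iff.1 (by simp [hnorm hy])) (by rwa [inner_neg_left, neg_pos])
  rw [inner_neg_left, neg_pos] at hd
  obtain ⟨s, hs, hs'⟩ := ((hg.eventually_add_smul_mem hΩ hy hyV hd).and (hnotMem hy hηy)).exists
  exact hs' hs

lemma exists_first_mem_frontier (hΩ : IsOpen Ω) (hx : x ∈ Ω) (hxd : x + d ∉ Ω) :
    ∃ b ∈ Ioc (0 : ℝ) 1, x + b • d ∈ frontier Ω ∧ ∀ s ∈ Ico 0 b, x + s • d ∈ Ω := by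
  have hcont : Continuous fun s : ℝ => x + s • d := by fun_prop
  set S := Ici (0 : ℝ) ∩ (fun s : ℝ => x + s • d) ⁻¹' Ωᶜ
  have hS : IsClosed S := isClosed_Ici.inter (hΩ.isClosed_compl.preimage hcont)
  have hbdd : BddBelow S := ⟨0, fun t ht => ht.1⟩
  have hone : (1 : ℝ) ∈ S := ⟨mem_Ici.2 zero_le_one, by simpa using hxd⟩
  obtain ⟨hb0, hbΩ⟩ := hS.csInf_mem ⟨1, hone⟩ hbdd
  have hpos : 0 < sInf S := (mem_Ici.1 hb0).lt_of_ne fun h0 => hbΩ (by simpa [← h0] using hx)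
  have hin : MapsTo (fun s : ℝ => x + s • d) (Ico 0 (sInf S)) Ω := fun s hs =>
    not_not.1 fun hsΩ => hs.2.not_ge (csInf_le hbdd ⟨hs.1, hsΩ⟩)
  refine ⟨sInf S, ⟨hpos, csInf_le hbdd hone⟩, hΩ.frontier_eq ▸ ⟨?_, hbΩ⟩, hin⟩
  exact hin.closure hcont (by rw [closure_Ico hpos.ne]; exact right_mem_Icc.2 hpos.le)

namespace IsInnerNormal

lemma add_mem_of_forall_inner_pos (N : IsInnerNormal Ω η) (hK : Convex ℝ K)
    (hw : ∀ z ∈ frontier Ω ∩ K, 0 < ⟪η z, w⟫) (hx : x ∈ Ω ∩ K) (hxw : x + w ∈ K) :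
    x + w ∈ Ω := by
  by_contra hout
  obtain ⟨b, hb, hbf, hin⟩ := exists_first_mem_frontier N.isOpen hx.1 hout
  have hback : ⟪η (x + b • w), -w⟫ < 0 := by
    rw [inner_neg_right, neg_lt_zero]
    exact hw _ ⟨hbf, hK.add_smul_mem hx.2 hxw (Ioc_subset_Icc_self hb)⟩
  obtain ⟨s, hs, hs0, hsb⟩ :=
    ((N.eventually_notMem _ hbf _ hback).and (Ioo_mem_nhdsGT hb.1)).exists
  have heq : x + b • w + s • -w = x + (b - s) • w := by module
  exact hs (heq ▸ hin (b - s) ⟨sub_nonneg.2 hsb.le, sub_lt_self b hs0⟩)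

/-- Near a first boundary point `y` on the segment the normal has positive product with
`v + l • η y` for every `l > 0`, so this perturbed direction cannot lead out of `Ω` at `y`. -/
lemma add_mem_of_forall_inner_nonneg (N : IsInnerNormal Ω η)
    (hv : ∀ z ∈ frontier Ω, 0 ≤ ⟪η z, v⟫) (hx : x ∈ Ω) : x + v ∈ Ω := by
  by_contra hout
  obtain ⟨b, hb, hy, hin⟩ := exists_first_mem_frontier N.isOpen hx hout
  set y := x + b • v with hy_def
  obtain ⟨r, hr, hball⟩ := Metric.mem_nhdsWithin_iff.1 (N.eventually_inner_pos y hy)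
  have hback : ∀ᶠ s : ℝ in 𝓝[>] 0, y + s • -v ∈ Ω := by
    filter_upwards [Ioo_mem_nhdsGT hb.1] with s hs
    have heq : y + s • -v = x + (b - s) • v := by rw [hy_def]; module
    exact heq ▸ hin (b - s) ⟨sub_nonneg.2 hs.2.le, sub_lt_self b hs.1⟩
  obtain ⟨s, ⟨hsΩ, hsr⟩, hs⟩ := ((hback.and ((tendsto_add_smul_nhdsGT y (-v)).eventually
    (ball_mem_nhds y hr))).and self_mem_nhdsWithin).exists
  have hstart : ∀ᶠ l : ℝ in 𝓝[>] 0, y + s • -v + l • -(s • η y) ∈ Ω ∩ ball y r :=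
    (tendsto_add_smul_nhdsGT _ _).eventually ((N.isOpen.inter isOpen_ball).mem_nhds ⟨hsΩ, hsr⟩)
  obtain ⟨l, hl, hlpos⟩ := (hstart.and self_mem_nhdsWithin).exists
  have heq : y + s • -v + l • -(s • η y) + s • (v + l • η y) = y := by module
  rw [N.isOpen.frontier_eq] at hy
  refine hy.2 (heq ▸ N.add_mem_of_forall_inner_pos (convex_ball y r) ?_ hl
    (heq.symm ▸ mem_ball_self hr))
  rintro z ⟨hz, hzr⟩
  rw [real_inner_smul_right, inner_add_right, real_inner_smul_right]
  exact mul_pos hs (add_pos_of_nonneg_of_pos (hv z hz) (mul_pos hlpos (hball ⟨hzr, hz⟩)))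

theorem eq_halfSpace (N : IsInnerNormal Ω η) (hz : z ∈ frontier Ω)
    (hf : ∀ x ∈ frontier Ω, ⟪x, η z⟫ = ⟪z, η z⟫) : Ω = {x | ⟪z, η z⟫ < ⟪x, η z⟫} := by
  have hself : ⟪η z, η z⟫ = 1 := by rw [real_inner_self_eq_norm_sq, N.norm_eq_one z hz, one_pow]
  have hlin : IsLinearMap ℝ fun x : E => ⟪x, η z⟫ :=
    ⟨fun x y => inner_add_left x y _, fun a x => real_inner_smul_left x _ a⟩
  have hlow (x : E) (hx : x ∈ Ω) : ⟪z, η z⟫ ≤ ⟪x, η z⟫ := by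
    by_contra! hlt
    obtain ⟨s, hs, hpos⟩ := ((N.eventually_notMem z hz (-η z) (by simp [N.norm_eq_one z hz])).and
      self_mem_nhdsWithin).exists
    obtain ⟨y, hy, hyf⟩ := inter_frontier_nonempty_of_isPreconnected
      (convex_halfSpace_lt hlin ⟪z, η z⟫).isPreconnected N.isOpen ⟨x, hlt, hx⟩
      ⟨z + s • -η z,
        by simpa [inner_add_left, real_inner_smul_left, N.norm_eq_one z hz] using hpos, hs⟩
    exact hy.ne (hf y hyf)
  refine Subset.antisymm (fun x hx => (hlow x hx).lt_of_ne fun heq => ?_) fun x hx => ?_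
  · obtain ⟨s, hs, hpos⟩ := (((tendsto_add_smul_nhdsGT x (-η z)).eventually
      (N.isOpen.mem_nhds hx)).and self_mem_nhdsWithin).exists
    have hle := hlow _ hs
    rw [inner_add_left, real_inner_smul_left, inner_neg_left, hself, heq] at hle
    linarith
  · by_contra hxΩ
    obtain ⟨s, hs, hpos⟩ := ((N.eventually_mem z hz (η z) (by simp [N.norm_eq_one z hz])).and
      self_mem_nhdsWithin).exists
    obtain ⟨y, hy, hyf⟩ := inter_frontier_nonempty_of_isPreconnected
      (convex_halfSpace_gt hlin ⟪z, η z⟫).isPreconnected N.isOpen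
      ⟨z + s • η z,
        by simpa [inner_add_left, real_inner_smul_left, N.norm_eq_one z hz] using hpos, hs⟩
      ⟨x, hx, hxΩ⟩
    exact hy.ne' (hf y hyf)

end IsInnerNormal

variable [CompleteSpace E] {u : E → ℝ} {G : E → E}

lemma lt_add_of_forall_inner_gradient_pos (hu : ContinuousOn u (closure Ω))
    (hG : ∀ y ∈ Ω, HasGradientAt u (G y) y) (hK : Convex ℝ K) (hx : x ∈ K) (hxd : x + d ∈ K)
    (hin : ∀ s ∈ Ioo (0 : ℝ) 1, x + s • d ∈ Ω) (hpos : ∀ y ∈ Ω ∩ K, 0 < ⟪G y, d⟫) :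
    u x < u (x + d) := by
  have hcont : Continuous fun s : ℝ => x + s • d := by fun_prop
  have hclosure : MapsTo (fun s : ℝ => x + s • d) (Icc 0 1) (closure Ω) := by
    simpa only [closure_Ioo zero_ne_one] using MapsTo.closure (s := Ioo (0 : ℝ) 1) hin hcont
  have hmono : StrictMonoOn (fun s : ℝ => u (x + s • d)) (Icc 0 1) := by
    refine strictMonoOn_of_deriv_pos (convex_Icc 0 1) (hu.comp hcont.continuousOn hclosure)
      fun s hs => ?_
    rw [interior_Icc] at hs
    have hline : HasDerivAt (fun t : ℝ => x + t • d) d s := by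
      simpa using ((hasDerivAt_id s).smul_const d).const_add x
    have hderiv : HasDerivAt (fun t : ℝ => u (x + t • d)) ⟪G (x + s • d), d⟫ s :=
      (hG _ (hin s hs)).hasFDerivAt.comp_hasDerivAt_of_eq s hline rfl
    rw [hderiv.deriv]
    exact hpos _ ⟨hin s hs, hK.add_smul_mem hx hxd (Ioo_subset_Icc_self hs)⟩
  simpa using hmono (left_mem_Icc.2 zero_le_one) (right_mem_Icc.2 zero_le_one) zero_lt_one

namespace IsInnerNormal

lemma exists_mem_frontier_lt {d₁ d₂ : E} (N : IsInnerNormal Ω η) (hu : ContinuousOn u (closure Ω))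
    (hGc : ContinuousOn G (closure Ω)) (hG : ∀ y ∈ Ω, HasGradientAt u (G y) y)
    (hz : z ∈ frontier Ω) (hin : 0 < ⟪η z, d₁⟫) (hout : ⟪η z, d₁ + d₂⟫ < 0)
    (h₁ : 0 < ⟪G z, d₁⟫) (h₂ : 0 < ⟪G z, d₂⟫) : ∃ y ∈ frontier Ω, u z < u y := by
  have hGz (d : E) : Tendsto (fun y => ⟪G y, d⟫) (𝓝[closure Ω] z) (𝓝 ⟪G z, d⟫) :=
    (hGc z (frontier_subset_closure hz)).inner continuousWithinAt_const
  obtain ⟨r, hr, hball⟩ := Metric.mem_nhdsWithin_iff.1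
    (((hGz d₁).eventually_const_lt h₁).and ((hGz d₂).eventually_const_lt h₂))
  have hK := convex_ball z r
  obtain ⟨a₀, ha₀, hin₁⟩ := mem_nhdsGT_iff_exists_Ioo_subset.1 (N.eventually_mem z hz d₁ hin)
  have hsmall (d : E) : ∀ᶠ a : ℝ in 𝓝[>] 0, z + a • d ∈ ball z r :=
    (tendsto_add_smul_nhdsGT z d).eventually (ball_mem_nhds z hr)
  have hIoo : ∀ᶠ a : ℝ in 𝓝[>] 0, a ∈ Ioo 0 a₀ := Ioo_mem_nhdsGT ha₀
  obtain ⟨a, ⟨ha, haout⟩, hy, hw⟩ := ((hIoo.and (N.eventually_notMem z hz _ hout)).and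
    ((hsmall d₁).and (hsmall (d₁ + d₂)))).exists
  rw [smul_add, ← add_assoc] at haout hw
  obtain ⟨b, hb, hbf, hin₂⟩ := exists_first_mem_frontier N.isOpen (hin₁ ha) haout
  refine ⟨_, hbf, lt_trans (b := u (z + a • d₁)) ?_ ?_⟩
  · refine lt_add_of_forall_inner_gradient_pos hu hG hK (mem_ball_self hr) hy (fun s hs => ?_)
      fun x hx => ?_
    · rw [smul_smul]
      exact hin₁ ⟨mul_pos hs.1 ha.1, (mul_lt_of_lt_one_left ha.1 hs.2).trans ha.2⟩
    · rw [real_inner_smul_right]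
      exact mul_pos ha.1 (hball ⟨hx.2, subset_closure hx.1⟩).1
  · refine lt_add_of_forall_inner_gradient_pos hu hG hK hy
      (hK.add_smul_mem hy hw (Ioc_subset_Icc_self hb)) (fun s hs => ?_) fun x hx => ?_
    · rw [smul_smul s]
      exact hin₂ _ ⟨(mul_pos hs.1 hb.1).le, mul_lt_of_lt_one_left hb.1 hs.2⟩
    · rw [real_inner_smul_right, real_inner_smul_right]
      exact mul_pos hb.1 (mul_pos ha.1 (hball ⟨hx.2, subset_closure hx.1⟩).2)

/-- Otherwise `u` would increase along a broken path which leaves `z` in the direction `τ + μ • η z`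
and returns to the boundary in the direction `τ - 2 • μ • η z`. -/
lemma inner_gradient_nonpos (N : IsInnerNormal Ω η) (hu : ContinuousOn u (closure Ω))
    (hGc : ContinuousOn G (closure Ω)) (hG : ∀ y ∈ Ω, HasGradientAt u (G y) y)
    (hz : z ∈ frontier Ω) (hc : ∀ x ∈ frontier Ω, u x = u z) {τ : E} (hτ : ⟪η z, τ⟫ = 0) :
    ⟪G z, τ⟫ ≤ 0 := by
  by_contra! hpos
  have hself : ⟪η z, η z⟫ = 1 := by rw [real_inner_self_eq_norm_sq, N.norm_eq_one z hz, one_pow]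
  have hsmall (d : E) : ∀ᶠ μ : ℝ in 𝓝[>] 0, 0 < ⟪G z, τ + μ • d⟫ :=
    (tendsto_const_nhds.inner (tendsto_add_smul_nhdsGT τ d)).eventually_const_lt hpos
  obtain ⟨μ, ⟨hμ₁, hμ₂⟩, hμ⟩ :=
    (((hsmall (η z)).and (hsmall (-(2 : ℝ) • η z))).and self_mem_nhdsWithin).exists
  obtain ⟨y, hy, hlt⟩ := N.exists_mem_frontier_lt hu hGc hG hz
    (by simpa only [inner_add_right, real_inner_smul_right, hτ, hself, zero_add, mul_one] using hμ)
    (by simp only [inner_add_right, real_inner_smul_right, hτ, hself]; linarith) hμ₁ hμ₂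
  exact hlt.ne' (hc y hy)

theorem gradient_eq_inner_smul (N : IsInnerNormal Ω η) (hu : ContinuousOn u (closure Ω))
    (hGc : ContinuousOn G (closure Ω)) (hG : ∀ y ∈ Ω, HasGradientAt u (G y) y)
    (hz : z ∈ frontier Ω) (hc : ∀ x ∈ frontier Ω, u x = u z) : G z = ⟪G z, η z⟫ • η z := by
  have hself : ⟪η z, η z⟫ = 1 := by rw [real_inner_self_eq_norm_sq, N.norm_eq_one z hz, one_pow]
  have htangent : ⟪η z, G z - ⟪G z, η z⟫ • η z⟫ = 0 := by
    rw [inner_sub_right, real_inner_smul_right, hself, mul_one, real_inner_comm, sub_self]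
  have hle := N.inner_gradient_nonpos hu hGc hG hz hc htangent
  have hself_le : ⟪G z - ⟪G z, η z⟫ • η z, G z - ⟪G z, η z⟫ • η z⟫ ≤ 0 := by
    rwa [inner_sub_left, real_inner_smul_left, htangent, mul_zero, sub_zero]
  exact sub_eq_zero.1 (inner_self_eq_zero.1 (hself_le.antisymm real_inner_self_nonneg))

end IsInnerNormal

end InnerNormal

/-! ### Cartesian coordinates -/

section PlaneCoordinates

variable {E : Type*} [NormedAddCommGroup E] [InnerProductSpace ℝ E]

/-- The field `G/√(1+|G|²)`; for `G = ∇u` its divergence is the mean curvature of the graph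
of `u`. -/
def areaFlux (G : E → E) (y : E) : E := (√(1 + ‖G y‖ ^ 2))⁻¹ • G y

lemma differentiableAt_areaFlux {G : E → E} {y : E} (hG : DifferentiableAt ℝ G y) :
    DifferentiableAt ℝ (areaFlux G) y := by
  have hpos : 1 + ‖G y‖ ^ 2 ≠ 0 := by positivity
  exact ((((hG.norm_sq ℝ).const_add 1).sqrt hpos).fun_inv (by positivity)).fun_smul hG

lemma meanCurv_eq_trace (u : EuclideanSpace ℝ (Fin n) → ℝ) (x : EuclideanSpace ℝ (Fin n)) :
    meanCurv u x = LinearMap.trace ℝ _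
      (fderiv ℝ (areaFlux (gradient u)) x : EuclideanSpace ℝ (Fin n) →ₗ[ℝ] _) := by
  rw [LinearMap.trace_eq_sum_inner _ (EuclideanSpace.basisFun (Fin n) ℝ)]
  refine Finset.sum_congr rfl fun i _ => ?_
  rw [real_inner_comm, EuclideanSpace.basisFun_apply]
  rfl

lemma contDiffOn_gradient [CompleteSpace E] {Ω : Set E} {u : E → ℝ} (hΩ : IsOpen Ω)
    (hu : ContDiffOn ℝ 2 u Ω) : ContDiffOn ℝ 1 (gradient u) Ω :=
  (InnerProductSpace.toDual ℝ E).symm.contDiff.comp_contDiffOn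
    (hu.fderiv_of_isOpen hΩ one_add_one_eq_two.le)

/-- Cartesian coordinates with respect to an orthonormal basis of a Euclidean plane. The source
`ℝ × ℝ` carries the sup norm, so this is not an isometry. -/
def planeCoord (b : OrthonormalBasis (Fin 2) ℝ E) : (ℝ × ℝ) ≃L[ℝ] E :=
  (b.toBasis.equivFunL.trans (ContinuousLinearEquiv.finTwoArrow ℝ ℝ)).symm

variable (b : OrthonormalBasis (Fin 2) ℝ E)

lemma planeCoord_apply (x : ℝ × ℝ) : planeCoord b x = x.1 • b 0 + x.2 • b 1 := by
  rw [planeCoord, ContinuousLinearEquiv.symm_apply_eq]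
  ext <;> simp

lemma closure_preimage_planeCoord (S : Set E) :
    closure (planeCoord b ⁻¹' S) = planeCoord b ⁻¹' closure S :=
  ((planeCoord b).toHomeomorph.preimage_closure S).symm

lemma frontier_preimage_planeCoord (S : Set E) :
    frontier (planeCoord b ⁻¹' S) = planeCoord b ⁻¹' frontier S :=
  ((planeCoord b).toHomeomorph.preimage_frontier S).symm

lemma isConnected_preimage_planeCoord {S : Set E} (hS : IsConnected S) :
    IsConnected (planeCoord b ⁻¹' S) :=
  (planeCoord b).toHomeomorph.isConnected_preimage.2 hS

lemma norm_sq_eq_inner_sq_add_inner_sq (w : E) : ‖w‖ ^ 2 = ⟪b 0, w⟫ ^ 2 + ⟪b 1, w⟫ ^ 2 := by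
  rw [← b.sum_sq_inner_right, Fin.sum_univ_two]

lemma inner_div_areaDensity (G : E → E) (y a : E) :
    ⟪a, G y⟫ / areaDensity (⟪b 0, G y⟫, ⟪b 1, G y⟫) = ⟪a, areaFlux G y⟫ := by
  rw [areaFlux, areaDensity, dot, ← sq, ← sq, ← norm_sq_eq_inner_sq_add_inner_sq,
    real_inner_smul_right, div_eq_inv_mul]

lemma fderiv_inner_comp_planeCoord {F : E → E} {x : ℝ × ℝ}
    (hF : DifferentiableAt ℝ F (planeCoord b x)) (a : E) (e : ℝ × ℝ) :
    fderiv ℝ (fun y => ⟪a, F (planeCoord b y)⟫) x e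
      = ⟪a, fderiv ℝ F (planeCoord b x) (planeCoord b e)⟫ := by
  have h := (innerSL ℝ a).hasFDerivAt.comp x (hF.hasFDerivAt.comp x (planeCoord b).hasFDerivAt)
  exact congrArg (· e) h.fderiv

lemma exists_orthonormalBasis_one_eq {v : E} (hE : Module.finrank ℝ E = 2) (hv : ‖v‖ = 1) :
    ∃ b : OrthonormalBasis (Fin 2) ℝ E, b 1 = v := by
  have : FiniteDimensional ℝ E := Module.finite_of_finrank_eq_succ hE
  have hunit : Orthonormal ℝ (({1} : Set (Fin 2)).domRestrict fun _ => v) :=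
    ⟨fun _ => hv, fun i j hij => absurd (Subsingleton.elim i j) hij⟩
  obtain ⟨b, hb⟩ := hunit.exists_orthonormalBasis_extension_of_card_eq (by simpa using hE)
  exact ⟨b, hb 1 rfl⟩

end PlaneCoordinates

section CapillarySolution

variable {E : Type*} [NormedAddCommGroup E] [InnerProductSpace ℝ E] [CompleteSpace E]
  {Ω : Set E} {η : E → E} {u : E → ℝ} {G : E → E} {H c κ : ℝ} {v : E}

lemma exists_eq_inner_add_of_hasGradientAt (hΩ : IsOpen Ω) (hΩc : IsPreconnected Ω) {A : E}
    (hu : ∀ y ∈ Ω, HasGradientAt u A y) : ∃ β, ∀ x ∈ Ω, u x = ⟪A, x⟫ + β := by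
  have hderiv (y : E) (hy : y ∈ Ω) : HasFDerivAt (fun x => u x - ⟪A, x⟫) (0 : E →L[ℝ] ℝ) y :=
    ((hu y hy).hasFDerivAt.sub (innerSL ℝ A).hasFDerivAt).congr_fderiv (sub_self _)
  obtain ⟨β, hβ⟩ := hΩ.exists_is_const_of_fderiv_eq_zero hΩc
    (fun y hy => (hderiv y hy).differentiableAt.differentiableWithinAt)
    (fun y hy => (hderiv y hy).fderiv)
  exact ⟨β, fun x hx => by rw [← hβ x hx, add_sub_cancel]⟩

/-- The overdetermined problem `M[u] + H = 0` in `Ω`, `u = c` and `⟨∇u, η⟩ = κ` on `∂Ω`, over a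
domain with connected boundary and inner unit normal `η`; `G` is the gradient of `u`, extended
continuously to the closure of `Ω`. -/
structure IsCapillarySolution (Ω : Set E) (η : E → E) (u : E → ℝ) (G : E → E) (H c κ : ℝ) :
    Prop where
  isInnerNormal : IsInnerNormal Ω η
  isConnected : IsConnected Ω
  isConnected_frontier : IsConnected (frontier Ω)
  continuousOn : ContinuousOn u (closure Ω)
  continuousOn_gradient : ContinuousOn G (closure Ω)
  hasGradientAt : ∀ y ∈ Ω, HasGradientAt u (G y) y
  contDiffOn_gradient : ContDiffOn ℝ 1 G Ω
  trace_eq : ∀ y ∈ Ω, LinearMap.trace ℝ E (fderiv ℝ (areaFlux G) y) = -H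
  eq_of_mem_frontier : ∀ y ∈ frontier Ω, u y = c
  inner_eq_of_mem_frontier : ∀ y ∈ frontier Ω, ⟪G y, η y⟫ = κ

namespace IsCapillarySolution

lemma gradient_eq_smul (S : IsCapillarySolution Ω η u G H c κ) {y : E} (hy : y ∈ frontier Ω) :
    G y = κ • η y := by
  rw [← S.inner_eq_of_mem_frontier y hy]
  exact S.isInnerNormal.gradient_eq_inner_smul S.continuousOn S.continuousOn_gradient
    S.hasGradientAt hy
    fun x hx => (S.eq_of_mem_frontier x hx).trans (S.eq_of_mem_frontier y hy).symm

lemma isCMCGraph (S : IsCapillarySolution Ω η u G H c κ) (b : OrthonormalBasis (Fin 2) ℝ E) :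
    IsCMCGraph (planeCoord b ⁻¹' Ω) (fun x => u (planeCoord b x) - c)
      (fun x => ⟪b 0, G (planeCoord b x)⟫) (fun x => ⟪b 1, G (planeCoord b x)⟫) H := by
  have hΩ := S.isInnerNormal.isOpen
  have hcoord (a : E) : ContDiffOn ℝ 1 (fun x => ⟪a, G (planeCoord b x)⟫) (planeCoord b ⁻¹' Ω) :=
    contDiffOn_const.inner ℝ
      (S.contDiffOn_gradient.comp (planeCoord b).contDiff.contDiffOn (mapsTo_preimage _ _))
  refine ⟨hΩ.preimage (planeCoord b).continuous, fun x hx => ?_, hcoord _, hcoord _, fun x hx => ?_⟩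
  · refine (hasPlaneGradAt_of_hasFDerivAt (((S.hasGradientAt _ hx).hasFDerivAt.comp x
      (planeCoord b).hasFDerivAt).sub_const c)).congr_grad ?_
    simp [planeCoord_apply, real_inner_comm]
  · have hflux := differentiableAt_areaFlux
      ((S.contDiffOn_gradient.differentiableOn one_ne_zero).differentiableAt (hΩ.mem_nhds hx))
    simp only [inner_div_areaDensity]
    rw [fderiv_inner_comp_planeCoord b hflux, fderiv_inner_comp_planeCoord b hflux,
      ← S.trace_eq _ hx, LinearMap.trace_eq_sum_inner _ b, Fin.sum_univ_two]
    simp [planeCoord_apply]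

lemma isCapillaryGraph (S : IsCapillarySolution Ω η u G H c κ) (b : OrthonormalBasis (Fin 2) ℝ E)
    (hb : ∀ y ∈ frontier Ω, 0 ≤ ⟪η y, b 1⟫) :
    IsCapillaryGraph (planeCoord b ⁻¹' Ω) (fun x => u (planeCoord b x) - c)
      (fun x => ⟪b 0, G (planeCoord b x)⟫) (fun x => ⟪b 1, G (planeCoord b x)⟫) H := by
  have hmaps : MapsTo (planeCoord b) (closure (planeCoord b ⁻¹' Ω)) (closure Ω) :=
    closure_preimage_planeCoord b Ω ▸ mapsTo_preimage _ _
  have hcont := (planeCoord b).continuous.continuousOn (s := closure (planeCoord b ⁻¹' Ω))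
  have hG := S.continuousOn_gradient.comp hcont hmaps
  refine ⟨S.isCMCGraph b, isConnected_preimage_planeCoord b S.isConnected,
    (S.continuousOn.comp hcont hmaps).sub continuousOn_const, continuousOn_const.inner hG,
    continuousOn_const.inner hG, ?_, ?_, ⟨κ ^ 2, ?_⟩, fun x hx t ht => ?_⟩
  · rw [frontier_preimage_planeCoord]
    exact isConnected_preimage_planeCoord b S.isConnected_frontier
  · rw [frontier_preimage_planeCoord]
    exact fun x hx => sub_eq_zero.2 (S.eq_of_mem_frontier _ hx)
  · rw [frontier_preimage_planeCoord]
    intro x hx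
    rw [← norm_sq_eq_inner_sq_add_inner_sq, S.gradient_eq_smul hx, norm_smul,
      S.isInnerNormal.norm_eq_one _ hx, mul_one, Real.norm_eq_abs, sq_abs]
  · have hnonneg (y : E) (hy : y ∈ frontier Ω) : 0 ≤ ⟪η y, t • b 1⟫ := by
      rw [real_inner_smul_right]
      exact mul_nonneg ht (hb y hy)
    simpa [planeCoord_apply, add_smul, add_assoc]
      using S.isInnerNormal.add_mem_of_forall_inner_nonneg hnonneg hx

theorem eq_zero_and_exists_gradient_eq_of_nonneg (S : IsCapillarySolution Ω η u G H c κ)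
    (hE : Module.finrank ℝ E = 2) (hv : ‖v‖ = 1) (hηv : ∀ y ∈ frontier Ω, 0 ≤ ⟪η y, v⟫) :
    H = 0 ∧ ∃ A, ∀ y ∈ Ω, G y = A := by
  obtain ⟨b, rfl⟩ := exists_orthonormalBasis_one_eq hE hv
  have hq : ∀ x ∈ frontier (planeCoord b ⁻¹' Ω),
      ∃ s, 0 ≤ s ∧ ⟪b 1, G (planeCoord b x)⟫ = κ * s := by
    rw [frontier_preimage_planeCoord]
    exact fun x hx => ⟨_, hηv _ hx, by
      rw [S.gradient_eq_smul hx, real_inner_smul_right, real_inner_comm]⟩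
  obtain ⟨hH, a, ha⟩ := (S.isCapillaryGraph b hηv).eq_zero_and_exists_grad_eq <|
    (le_total 0 κ).imp
      (fun hκ x hx => let ⟨_, hs, h⟩ := hq x hx; h ▸ mul_nonneg hκ hs)
      (fun hκ x hx => let ⟨_, hs, h⟩ := hq x hx; h ▸ mul_nonpos_of_nonpos_of_nonneg hκ hs)
  refine ⟨hH, planeCoord b a, fun y hy => ?_⟩
  obtain ⟨x, rfl⟩ := (planeCoord b).surjective y
  simpa [← ha x hy, planeCoord_apply, Fin.sum_univ_two] using
    (b.sum_repr' (G (planeCoord b x))).symm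

theorem eq_zero_and_exists_gradient_eq (S : IsCapillarySolution Ω η u G H c κ)
    (hE : Module.finrank ℝ E = 2) (hv : ‖v‖ = 1)
    (hηv : (∀ y ∈ frontier Ω, 0 ≤ ⟪η y, v⟫) ∨ ∀ y ∈ frontier Ω, ⟪η y, v⟫ ≤ 0) :
    H = 0 ∧ ∃ A, ∀ y ∈ Ω, G y = A := by
  rcases hηv with hηv | hηv
  · exact S.eq_zero_and_exists_gradient_eq_of_nonneg hE hv hηv
  · refine S.eq_zero_and_exists_gradient_eq_of_nonneg hE ((norm_neg v).trans hv) fun y hy => ?_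
    rw [inner_neg_right, neg_nonneg]
    exact hηv y hy

theorem exists_halfSpace_of_gradient_eq {A : E} (S : IsCapillarySolution Ω η u G H c κ)
    (hA : ∀ y ∈ Ω, G y = A) (hnc : ¬ ∃ d : ℝ, ∀ x ∈ Ω, u x = d) :
    ∃ e : E, ‖e‖ = 1 ∧ ∃ d α β : ℝ, α ≠ 0 ∧ Ω = {x | d < ⟪x, e⟫} ∧
      ∀ x ∈ Ω, u x = α * ⟪x, e⟫ + β := by
  obtain ⟨z, hz⟩ := S.isConnected_frontier.nonempty
  have hAη : A = κ • η z := by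
    rw [← S.gradient_eq_smul hz]
    exact (EqOn.of_subset_closure hA S.continuousOn_gradient continuousOn_const subset_closure
      subset_rfl (frontier_subset_closure hz)).symm
  obtain ⟨β, hβ⟩ := exists_eq_inner_add_of_hasGradientAt S.isInnerNormal.isOpen
    S.isConnected.isPreconnected fun y hy => hA y hy ▸ S.hasGradientAt y hy
  have haffine (x : E) (hx : x ∈ Ω) : u x = κ * ⟪x, η z⟫ + β := by
    rw [hβ x hx, hAη, real_inner_smul_left, real_inner_comm]
  have hκ : κ ≠ 0 := by
    rintro rfl
    exact hnc ⟨β, fun x hx => by rw [haffine x hx, zero_mul, zero_add]⟩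
  have hboundary {x : E} (hx : x ∈ frontier Ω) : c = κ * ⟪x, η z⟫ + β :=
    (S.eq_of_mem_frontier x hx).symm.trans (EqOn.of_subset_closure haffine S.continuousOn
      (by fun_prop) subset_closure subset_rfl (frontier_subset_closure hx))
  refine ⟨η z, S.isInnerNormal.norm_eq_one z hz, ⟪z, η z⟫, κ, β, hκ,
    S.isInnerNormal.eq_halfSpace hz fun x hx => mul_left_cancel₀ hκ (add_right_cancel (b := β) ?_),
    haffine⟩
  exact (hboundary hx).symm.trans (hboundary hz)

end IsCapillarySolution

end CapillarySolution

section Charts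

variable {Ω : Set (EuclideanSpace ℝ (Fin n))}
  {η : EuclideanSpace ℝ (Fin n) → EuclideanSpace ℝ (Fin n)}

namespace IsCkDomainWithNormal

lemma of_le {k l : ℕ∞} (h : IsCkDomainWithNormal k Ω η) (hlk : l ≤ k) :
    IsCkDomainWithNormal l Ω η := by
  obtain ⟨hne, hopen, hconn, hchart⟩ := h
  refine ⟨hne, hopen, hconn, fun p hp => ?_⟩
  obtain ⟨V, g, hV, hpV, hg, hrest⟩ := hchart p hp
  exact ⟨V, g, hV, hpV, hg.of_le (by exact_mod_cast hlk), hrest⟩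

lemma isInnerNormal (h : IsCkDomainWithNormal 1 Ω η) : IsInnerNormal Ω η := by
  obtain ⟨-, hopen, -, hchart⟩ := h
  refine isInnerNormal_of_isDefiningFunctionOn hopen fun p hp => ?_
  obtain ⟨V, g, hV, hpV, hg, hg', hVΩ, hη⟩ := hchart p hp
  exact ⟨V, g, hpV, ⟨hV, hg, hg', hVΩ⟩, hη⟩

lemma isCapillarySolution {u : EuclideanSpace ℝ (Fin n) → ℝ} (hΩ : IsCkDomainWithNormal 1 Ω η)
    (hu2 : ContDiffOn ℝ 2 u Ω) (hucl : ContinuousOn u (closure Ω))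
    {Du : EuclideanSpace ℝ (Fin n) → EuclideanSpace ℝ (Fin n)}
    (hDu : ∀ x ∈ Ω, Du x = gradient u x) (hDuc : ContinuousOn Du (closure Ω)) {H₀ : ℝ}
    (heq : ∀ x ∈ Ω, meanCurv u x + H₀ = 0) (hfc : IsConnected (frontier Ω))
    (hbc : ∀ p ∈ frontier Ω, ∀ q ∈ connectedComponentIn (frontier Ω) p,
      u q = u p ∧ ⟪Du q, η q⟫ = ⟪Du p, η p⟫) :
    ∃ c κ, IsCapillarySolution Ω η u Du H₀ c κ := by
  obtain ⟨z, hz⟩ := hfc.nonempty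
  have hconst (y) (hy : y ∈ frontier Ω) : u y = u z ∧ ⟪Du y, η y⟫ = ⟪Du z, η z⟫ :=
    hbc z hz y (hfc.isPreconnected.subset_connectedComponentIn hz subset_rfl hy)
  have hopen := hΩ.2.1
  refine ⟨u z, ⟪Du z, η z⟫, hΩ.isInnerNormal, hΩ.2.2.1, hfc, hucl, hDuc, fun y hy => ?_,
    (contDiffOn_gradient hopen hu2).congr hDu, fun y hy => ?_, fun y hy => (hconst y hy).1,
    fun y hy => (hconst y hy).2⟩
  · rw [hDu y hy]
    exact (hu2.differentiableOn two_ne_zero).hasGradientAt (hopen.mem_nhds hy)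
  · have hflux : areaFlux Du =ᶠ[𝓝 y] areaFlux (gradient u) := by
      filter_upwards [hopen.mem_nhds hy] with x hx
      rw [areaFlux, areaFlux, hDu x hx]
    rw [hflux.fderiv_eq, ← meanCurv_eq_trace]
    linarith [heq y hy]

end IsCkDomainWithNormal

end Charts

theorem capillary_cmc_halfplane_general
    (Ω : Set (EuclideanSpace ℝ (Fin 2)))
    (η : EuclideanSpace ℝ (Fin 2) → EuclideanSpace ℝ (Fin 2))
    (hΩ : IsCkDomainWithNormal 1 Ω η)
    (u : EuclideanSpace ℝ (Fin 2) → ℝ)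
    (hu2 : ContDiffOn ℝ 2 u Ω) (hucl : ContinuousOn u (closure Ω))
    (Du : EuclideanSpace ℝ (Fin 2) → EuclideanSpace ℝ (Fin 2))
    (hDu : ∀ x ∈ Ω, Du x = gradient u x) (hDuc : ContinuousOn Du (closure Ω))
    (hnc : ¬ ∃ c : ℝ, ∀ x ∈ Ω, u x = c)
    (H₀ : ℝ) (heq : ∀ x ∈ Ω, meanCurv u x + H₀ = 0)
    (hbc : ∀ p ∈ frontier Ω, ∀ q ∈ connectedComponentIn (frontier Ω) p,
      u q = u p ∧ ⟪Du q, η q⟫ = ⟪Du p, η p⟫)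
    (hfc : IsConnected (frontier Ω))
    (v : EuclideanSpace ℝ (Fin 2)) (hv : ‖v‖ = 1)
    (hsign : (∀ p ∈ frontier Ω, 0 ≤ ⟪η p, v⟫) ∨ (∀ p ∈ frontier Ω, ⟪η p, v⟫ ≤ 0)) :
    H₀ = 0 ∧ ∃ e : EuclideanSpace ℝ (Fin 2), ‖e‖ = 1 ∧ ∃ c α β : ℝ, α ≠ 0 ∧
      Ω = {x | c < ⟪x, e⟫} ∧ ∀ x ∈ Ω, u x = α * ⟪x, e⟫ + β := by
  obtain ⟨c, κ, S⟩ := hΩ.isCapillarySolution hu2 hucl hDu hDuc heq hfc hbc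
  obtain ⟨hH, A, hA⟩ := S.eq_zero_and_exists_gradient_eq finrank_euclideanSpace_fin hv hsign
  exact ⟨hH, S.exists_halfSpace_of_gradient_eq hA hnc⟩

/-- Theorem 1.2(i) of the paper: a capillary CMC graph over a planar `C²` domain with
connected, mildly `v`-transverse boundary is a half-plane over a half-plane. -/
theorem capillary_cmc_halfplane
    (Ω : Set (EuclideanSpace ℝ (Fin 2)))
    (η : EuclideanSpace ℝ (Fin 2) → EuclideanSpace ℝ (Fin 2))
    (hΩ : IsCkDomainWithNormal 2 Ω η)
    (u : EuclideanSpace ℝ (Fin 2) → ℝ)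
    (hu2 : ContDiffOn ℝ 2 u Ω) (hucl : ContinuousOn u (closure Ω))
    (Du : EuclideanSpace ℝ (Fin 2) → EuclideanSpace ℝ (Fin 2))
    (hDu : ∀ x ∈ Ω, Du x = gradient u x) (hDuc : ContinuousOn Du (closure Ω))
    (hD2u : ∃ H : EuclideanSpace ℝ (Fin 2) →
        EuclideanSpace ℝ (Fin 2) →L[ℝ] EuclideanSpace ℝ (Fin 2),
      ContinuousOn H (closure Ω) ∧ ∀ x ∈ Ω, H x = fderiv ℝ (gradient u) x)
    (hnc : ¬ ∃ c : ℝ, ∀ x ∈ Ω, u x = c)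
    (H₀ : ℝ) (heq : ∀ x ∈ Ω, meanCurv u x + H₀ = 0)
    (hbc : ∀ p ∈ frontier Ω, ∀ q ∈ connectedComponentIn (frontier Ω) p,
      u q = u p ∧ ⟪Du q, η q⟫ = ⟪Du p, η p⟫)
    (hbdd : BddBelow (u '' Ω))
    (hfc : IsConnected (frontier Ω))
    (v : EuclideanSpace ℝ (Fin 2)) (hv : ‖v‖ = 1)
    (hsign : (∀ p ∈ frontier Ω, 0 ≤ ⟪η p, v⟫) ∨ (∀ p ∈ frontier Ω, ⟪η p, v⟫ ≤ 0)) :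
    H₀ = 0 ∧ ∃ e : EuclideanSpace ℝ (Fin 2), ‖e‖ = 1 ∧ ∃ c α β : ℝ, α ≠ 0 ∧
      Ω = {x | c < ⟪x, e⟫} ∧ ∀ x ∈ Ω, u x = α * ⟪x, e⟫ + β :=
  capillary_cmc_halfplane_general Ω η (hΩ.of_le one_le_two) u hu2 hucl Du hDu hDuc hnc H₀ heq hbc
    hfc v hv hsign
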